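/- arXiv:1511.00136 — 2 statements merged into one kernel-verified Lean document; each statement's English description precedes it below -/
import Mathlib

section
/- There exists a map ϱ* as in the main construction (i.e., sending each α ∈ UVB_n to a pure braid ϱ*(α) ∈ UVP_m fused Markov equivalent to α, where m is the number of orbits of ι(α), and with ϱ*(α) = α whenever α is pure) which additionally satisfies: whenever α = βγ with β ∈ UVB_n and γ ∈ [UVP_n, UVP_n], then ϱ*(α) = ϱ*(β)δ for some δ ∈ [UVP_m, UVP_m]. -/
/-!  Common setup: the unrestricted virtual braid group `UVB n`, its generators
σ_k, ρ_k (1-based indices), the elements λ_{i,j} and B_{i,j}, the permutation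
homomorphism ι (characterized by `IsIota`), the section s : S_n → UVB n
(characterized by `IsPermSection`), and fused Markov equivalence. -/

/-- Generators of the unrestricted virtual braid group `UVB n`:
`Sum.inl i` is the classical generator σ_{i+1} and `Sum.inr i` is the virtual
generator ρ_{i+1}, for `i : Fin (n-1)` (so the 1-based indices are `1, …, n-1`). -/
abbrev UVBGen (n : ℕ) := Sum (Fin (n - 1)) (Fin (n - 1))

namespace UVBGen
def sg {n : ℕ} (i : Fin (n - 1)) : FreeGroup (UVBGen n) := FreeGroup.of (Sum.inl i)
def rg {n : ℕ} (i : Fin (n - 1)) : FreeGroup (UVBGen n) := FreeGroup.of (Sum.inr i)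
end UVBGen

open UVBGen in
/-- The defining relations of the unrestricted virtual braid group. -/
def uvbRels (n : ℕ) : Set (FreeGroup (UVBGen n)) :=
  {r | (∃ i j : Fin (n - 1), (j : ℕ) = (i : ℕ) + 1 ∧
          (r = sg i * sg j * sg i * (sg j * sg i * sg j)⁻¹ ∨
           r = rg i * rg j * rg i * (rg j * rg i * rg j)⁻¹ ∨
           r = rg i * rg j * sg i * (sg j * rg i * rg j)⁻¹ ∨
           r = rg i * sg j * sg i * (sg j * sg i * rg j)⁻¹ ∨
           r = rg j * sg i * sg j * (sg i * sg j * rg i)⁻¹)) ∨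
       (∃ i j : Fin (n - 1), ((i : ℕ) + 2 ≤ (j : ℕ) ∨ (j : ℕ) + 2 ≤ (i : ℕ)) ∧
          (r = sg i * sg j * (sg j * sg i)⁻¹ ∨
           r = rg i * rg j * (rg j * rg i)⁻¹ ∨
           r = sg i * rg j * (rg j * sg i)⁻¹)) ∨
       (∃ i : Fin (n - 1), r = rg i * rg i)}

/-- The unrestricted virtual braid group on `n` strands. -/
abbrev UVB (n : ℕ) := PresentedGroup (uvbRels n)

namespace UVB

/-- The generator σ_k (1-based index; meaningful for `1 ≤ k ≤ n-1`, junk value `1` otherwise). -/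
def sigma (n k : ℕ) : UVB n :=
  if h : 1 ≤ k ∧ k ≤ n - 1 then PresentedGroup.of (Sum.inl ⟨k - 1, by omega⟩) else 1

/-- The generator ρ_k (1-based index; meaningful for `1 ≤ k ≤ n-1`, junk value `1` otherwise). -/
def rho (n k : ℕ) : UVB n :=
  if h : 1 ≤ k ∧ k ≤ n - 1 then PresentedGroup.of (Sum.inr ⟨k - 1, by omega⟩) else 1

/-- The element λ_{i,j} of `UVB n` (1-based indices `1 ≤ i ≠ j ≤ n`; junk value `1` if `i = j`).
For `i < j`:  `λ_{i,j} = ρ_{j-1}⋯ρ_{i+1} · ρ_i σ_i⁻¹ · ρ_{i+1}⋯ρ_{j-1}` and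
`λ_{j,i} = ρ_{j-1}⋯ρ_{i+1} · σ_i⁻¹ ρ_i · ρ_{i+1}⋯ρ_{j-1}`. -/
def lam (n i j : ℕ) : UVB n :=
  if i < j then
    (((List.range' (i + 1) (j - 1 - i)).reverse.map (rho n)).prod) *
      (rho n i * (sigma n i)⁻¹) *
      (((List.range' (i + 1) (j - 1 - i)).map (rho n)).prod)
  else if j < i then
    (((List.range' (j + 1) (i - 1 - j)).reverse.map (rho n)).prod) *
      ((sigma n j)⁻¹ * rho n j) *
      (((List.range' (j + 1) (i - 1 - j)).map (rho n)).prod)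
  else 1

/-- The element `B_{i,j} = ρ_{j-1}ρ_{j-2}⋯ρ_{i+1}ρ_i` for `i < j`, and `1` otherwise. -/
def B (n i j : ℕ) : UVB n :=
  if i < j then ((List.range' i (j - i)).reverse.map (rho n)).prod else 1

/-- The subgroup `U_j` of `UVB n` generated by `{λ_{i,j}, λ_{j,i} : 1 ≤ i < j}`. -/
def U (n j : ℕ) : Subgroup (UVB n) :=
  Subgroup.closure {x | ∃ i, 1 ≤ i ∧ i < j ∧ (x = lam n i j ∨ x = lam n j i)}

end UVB

/-- `ι : UVB n →* S_n` is the homomorphism sending σ_k and ρ_k to the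
transposition (k, k+1) (written 0-based on `Fin n`). -/
def IsIota (n : ℕ) (ι : UVB n →* Equiv.Perm (Fin n)) : Prop :=
  ∀ (k : ℕ) (h1 : 1 ≤ k) (h2 : k ≤ n - 1),
    ι (UVB.sigma n k) = Equiv.swap ⟨k - 1, by omega⟩ ⟨k, by omega⟩ ∧
    ι (UVB.rho n k) = Equiv.swap ⟨k - 1, by omega⟩ ⟨k, by omega⟩

/-- `s : S_n →* UVB n` is the homomorphism sending the transposition (k, k+1) to ρ_k. -/
def IsPermSection (n : ℕ) (s : Equiv.Perm (Fin n) →* UVB n) : Prop :=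
  ∀ (k : ℕ) (h1 : 1 ≤ k) (h2 : k ≤ n - 1),
    s (Equiv.swap ⟨k - 1, by omega⟩ ⟨k, by omega⟩) = UVB.rho n k

/-- The number of orbits of a permutation of `Fin n`
(= number of fixed points + number of nontrivial cycles). -/
def numOrbits {n : ℕ} (π : Equiv.Perm (Fin n)) : ℕ :=
  (Finset.univ.filter fun x => π x = x).card + π.cycleType.card

namespace UVB

private def embedGen (n : ℕ) : UVBGen n → UVBGen (n + 1)
  | Sum.inl i => Sum.inl ⟨i.val, by have := i.isLt; omega⟩
  | Sum.inr i => Sum.inr ⟨i.val, by have := i.isLt; omega⟩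

open UVBGen in
/-- The natural inclusion `UVB n →* UVB (n+1)` (σ_k ↦ σ_k, ρ_k ↦ ρ_k). -/
def incl (n : ℕ) : UVB n →* UVB (n + 1) :=
  PresentedGroup.toGroup (f := fun x => PresentedGroup.of (embedGen n x)) (by
    have key : (FreeGroup.lift fun x => (PresentedGroup.of (embedGen n x) : UVB (n + 1)))
        = (PresentedGroup.mk (uvbRels (n + 1))).comp (FreeGroup.map (embedGen n)) := by
      ext x
      simp [PresentedGroup.of]
    intro r hr
    rw [key]
    simp only [MonoidHom.comp_apply]
    have hmem : FreeGroup.map (embedGen n) r ∈ uvbRels (n + 1) := by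
      have hsg : ∀ i : Fin (n - 1), FreeGroup.map (embedGen n) (sg i)
          = sg (⟨i.val, by have := i.isLt; omega⟩ : Fin (n + 1 - 1)) := by
        intro i; simp [sg, embedGen]
      have hrg : ∀ i : Fin (n - 1), FreeGroup.map (embedGen n) (rg i)
          = rg (⟨i.val, by have := i.isLt; omega⟩ : Fin (n + 1 - 1)) := by
        intro i; simp [rg, embedGen]
      rcases hr with ⟨i, j, hij, hc⟩ | ⟨i, j, hij, hc⟩ | ⟨i, hc⟩
      · refine Or.inl ⟨⟨i.val, by have := i.isLt; omega⟩, ⟨j.val, by have := j.isLt; omega⟩,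
          by simpa using hij, ?_⟩
        rcases hc with h | h | h | h | h <;> subst h <;>
          simp only [map_mul, map_inv, hsg, hrg] <;> tauto
      · refine Or.inr (Or.inl ⟨⟨i.val, by have := i.isLt; omega⟩, ⟨j.val, by have := j.isLt; omega⟩,
          by simpa using hij, ?_⟩)
        rcases hc with h | h | h <;> subst h <;>
          simp only [map_mul, map_inv, hsg, hrg] <;> tauto
      · refine Or.inr (Or.inr ⟨⟨i.val, by have := i.isLt; omega⟩, ?_⟩)
        subst hc
        simp only [map_mul, hsg, hrg]
    exact (QuotientGroup.eq_one_iff _).mpr (Subgroup.subset_normalClosure hmem))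

end UVB

/-- The elementary fused Markov moves on the disjoint union of the groups `UVB n`:
conjugation, and the three right stabilizations (positive, negative, virtual). -/
inductive MarkovBase : (Σ n, UVB n) → (Σ n, UVB n) → Prop
  | conj (n : ℕ) (α γ : UVB n) : MarkovBase ⟨n, α⟩ ⟨n, γ * α * γ⁻¹⟩
  | stabPos (n : ℕ) (α : UVB n) :
      MarkovBase ⟨n, α⟩ ⟨n + 1, UVB.incl n α * UVB.sigma (n + 1) n⟩
  | stabNeg (n : ℕ) (α : UVB n) :
      MarkovBase ⟨n, α⟩ ⟨n + 1, UVB.incl n α * (UVB.sigma (n + 1) n)⁻¹⟩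
  | stabVirt (n : ℕ) (α : UVB n) :
      MarkovBase ⟨n, α⟩ ⟨n + 1, UVB.incl n α * UVB.rho (n + 1) n⟩

/-- Fused Markov equivalence: the smallest equivalence relation generated by the
elementary Markov moves.  By Kamada's theorem, two unrestricted virtual braids are
fused Markov equivalent iff their closures are equivalent fused links. -/
def Markov : (Σ n, UVB n) → (Σ n, UVB n) → Prop := Relation.EqvGen MarkovBase

/-! ## Relations in terms of `sigma` and `rho` -/
namespace UVBAux

open UVB

theorem rho_mul_self (n k : ℕ) : rho n k * rho n k = 1 := by
  unfold rho
  split_ifs with h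
  · exact PresentedGroup.one_of_mem (rels := uvbRels n) (Or.inr (Or.inr ⟨_, rfl⟩))
  · simp

theorem rho_inv (n k : ℕ) : (rho n k)⁻¹ = rho n k :=
  inv_eq_of_mul_eq_one_right (rho_mul_self n k)

theorem rels_succ (n k : ℕ) (h1 : 1 ≤ k) (h2 : k + 1 ≤ n - 1) :
    sigma n k * sigma n (k+1) * sigma n k = sigma n (k+1) * sigma n k * sigma n (k+1) ∧
    rho n k * rho n (k+1) * rho n k = rho n (k+1) * rho n k * rho n (k+1) ∧
    rho n k * rho n (k+1) * sigma n k = sigma n (k+1) * rho n k * rho n (k+1) ∧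
    rho n k * sigma n (k+1) * sigma n k = sigma n (k+1) * sigma n k * rho n (k+1) ∧
    rho n (k+1) * sigma n k * sigma n (k+1) = sigma n k * sigma n (k+1) * rho n k := by
  have a1 : 1 ≤ k ∧ k ≤ n - 1 := ⟨h1, by omega⟩
  have a2 : 1 ≤ k + 1 ∧ k + 1 ≤ n - 1 := ⟨by omega, h2⟩
  have b1 : k - 1 < n - 1 := by omega
  have b2 : k + 1 - 1 < n - 1 := by omega
  have b3 : k + 1 - 1 = k - 1 + 1 := by omega
  simp only [sigma, rho, dif_pos a1, dif_pos a2]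
  refine ⟨?_, ?_, ?_, ?_, ?_⟩
  · exact PresentedGroup.mk_eq_mk_of_mul_inv_mem (Or.inl ⟨⟨_, b1⟩, ⟨_, b2⟩, b3, (Or.inl rfl)⟩)
  · exact PresentedGroup.mk_eq_mk_of_mul_inv_mem (Or.inl ⟨⟨_, b1⟩, ⟨_, b2⟩, b3, (Or.inr (Or.inl rfl))⟩)
  · exact PresentedGroup.mk_eq_mk_of_mul_inv_mem (Or.inl ⟨⟨_, b1⟩, ⟨_, b2⟩, b3, (Or.inr (Or.inr (Or.inl rfl)))⟩)
  · exact PresentedGroup.mk_eq_mk_of_mul_inv_mem (Or.inl ⟨⟨_, b1⟩, ⟨_, b2⟩, b3, (Or.inr (Or.inr (Or.inr (Or.inl rfl))))⟩)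
  · exact PresentedGroup.mk_eq_mk_of_mul_inv_mem (Or.inl ⟨⟨_, b1⟩, ⟨_, b2⟩, b3, (Or.inr (Or.inr (Or.inr (Or.inr rfl))))⟩)

theorem rels_far (n j k : ℕ) (h : j + 2 ≤ k ∨ k + 2 ≤ j) :
    Commute (sigma n j) (sigma n k) ∧ Commute (rho n j) (rho n k) ∧
      Commute (sigma n j) (rho n k) := by
  by_cases a1 : 1 ≤ j ∧ j ≤ n - 1
  · by_cases a2 : 1 ≤ k ∧ k ≤ n - 1
    · have b1 : j - 1 < n - 1 := by omega
      have b2 : k - 1 < n - 1 := by omega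
      have b3 : j - 1 + 2 ≤ k - 1 ∨ k - 1 + 2 ≤ j - 1 := by omega
      simp only [sigma, rho, dif_pos a1, dif_pos a2]
      refine ⟨?_, ?_, ?_⟩
      · exact PresentedGroup.mk_eq_mk_of_mul_inv_mem (Or.inr (Or.inl ⟨⟨_, b1⟩, ⟨_, b2⟩, b3, (Or.inl rfl)⟩))
      · exact PresentedGroup.mk_eq_mk_of_mul_inv_mem (Or.inr (Or.inl ⟨⟨_, b1⟩, ⟨_, b2⟩, b3, (Or.inr (Or.inl rfl))⟩))
      · exact PresentedGroup.mk_eq_mk_of_mul_inv_mem (Or.inr (Or.inl ⟨⟨_, b1⟩, ⟨_, b2⟩, b3, (Or.inr (Or.inr rfl))⟩))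
    · simp [sigma, rho, dif_neg a2]
  · simp [sigma, rho, dif_neg a1]

theorem incl_sigma (n k : ℕ) (h : k ≤ n - 1) : incl n (sigma n k) = sigma (n+1) k := by
  unfold sigma
  by_cases h1 : 1 ≤ k
  · rw [dif_pos ⟨h1, h⟩, dif_pos ⟨h1, by omega⟩]
    exact PresentedGroup.toGroup.of _
  · rw [dif_neg (by omega), dif_neg (by omega), map_one]

theorem incl_rho (n k : ℕ) (h : k ≤ n - 1) : incl n (rho n k) = rho (n+1) k := by
  unfold rho
  by_cases h1 : 1 ≤ k
  · rw [dif_pos ⟨h1, h⟩, dif_pos ⟨h1, by omega⟩]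
    exact PresentedGroup.toGroup.of _
  · rw [dif_neg (by omega), dif_neg (by omega), map_one]

/-- Induction principle on subgroups of `UVB n`. -/
theorem mem_of_gens {n : ℕ} (H : Subgroup (UVB n))
    (h : ∀ k, 1 ≤ k → k ≤ n - 1 → sigma n k ∈ H ∧ rho n k ∈ H) (x : UVB n) : x ∈ H := by
  refine PresentedGroup.generated_by _ H ?_ x
  rintro (i | i)
  · have := (h (i + 1) (by omega) (by have := i.isLt; omega)).1
    unfold sigma at this
    rwa [dif_pos ⟨by omega, by have := i.isLt; omega⟩] at this
  · have := (h (i + 1) (by omega) (by have := i.isLt; omega)).2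
    unfold rho at this
    rwa [dif_pos ⟨by omega, by have := i.isLt; omega⟩] at this

/-! ## The subgroup generated by the virtual generators -/

/-- subgroup generated by the `rho`s -/
def R (n : ℕ) : Subgroup (UVB n) := Subgroup.closure (Set.range (rho n))

theorem rho_mem_R (n k : ℕ) : rho n k ∈ R n := Subgroup.subset_closure ⟨k, rfl⟩

theorem incl_mem_R {n : ℕ} {x : UVB n} (hx : x ∈ R n) : incl n x ∈ R (n+1) := by
  have : R n ≤ (R (n+1)).comap (incl n) := by
    unfold R
    rw [Subgroup.closure_le]
    rintro _ ⟨k, rfl⟩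
    by_cases h : k ≤ n - 1
    · show incl n (rho n k) ∈ R (n+1)
      rw [incl_rho n k h]; exact rho_mem_R _ _
    · have : rho n k = 1 := by unfold rho; rw [dif_neg (by omega)]
      rw [this]; exact one_mem _
  exact this hx

/-- `T n j = ρ_n ρ_{n-1} ⋯ ρ_{n-j+1}` in `UVB (n+1)` -/
def T (n : ℕ) : ℕ → UVB (n+1)
  | 0 => 1
  | j + 1 => T n j * rho (n+1) (n - j)

theorem T_comm (n j : ℕ) (hj : j ≤ n) (x : UVB (n+1))
    (h : ∀ k, n - j < k → k ≤ n → Commute x (rho (n+1) k)) : Commute x (T n j) := by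
  induction j with
  | zero => exact Commute.one_right _
  | succ j ih =>
    exact (ih (by omega) fun k h1 h2 => h k (by omega) h2).mul_right
      (h _ (by omega) (by omega))

theorem T_rho (n j i : ℕ) (hj : j ≤ n) (hi : n - j + 1 < i) (hin : i ≤ n) :
    T n j * rho (n+1) i = rho (n+1) (i-1) * T n j := by
  induction j with
  | zero => omega
  | succ j ih =>
    by_cases h : n - j + 1 < i
    · show T n j * rho (n+1) (n-j) * rho (n+1) i = rho (n+1) (i-1) * (T n j * rho (n+1) (n-j))
      have hc := (rels_far (n+1) (n-j) i (by omega)).2.1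
      rw [mul_assoc, hc.eq, ← mul_assoc, ih (by omega) h, mul_assoc]
    · have hi' : i = n - j + 1 := by omega
      obtain ⟨j, rfl⟩ : ∃ j', j = j' + 1 := ⟨j - 1, by omega⟩
      have e1 : n - j = n - (j+1) + 1 := by omega
      show T n j * rho (n+1) (n-j) * rho (n+1) (n-(j+1)) * rho (n+1) i
        = rho (n+1) (i-1) * (T n j * rho (n+1) (n-j) * rho (n+1) (n-(j+1)))
      rw [hi', Nat.add_sub_cancel, e1]
      generalize hk : n - (j+1) = k
      have hb := (rels_succ (n+1) k (by omega) (by omega)).2.1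
      have hc : Commute (rho (n+1) k) (T n j) := T_comm n j (by omega) _ fun l h1 h2 =>
        (rels_far (n+1) k l (by omega)).2.1
      calc _ = T n j * (rho (n+1) (k+1) * rho (n+1) k * rho (n+1) (k+1)) := by group
        _ = T n j * rho (n+1) k * rho (n+1) (k+1) * rho (n+1) k := by rw [← hb]; group
        _ = _ := by rw [← hc.eq]; group

theorem R_form (n : ℕ) (x : UVB (n+1)) (hx : x ∈ R (n+1)) :
    ∃ w ∈ R n, ∃ j ≤ n, x = incl n w * T n j := by
  have step : ∀ x : UVB (n+1), (∃ w ∈ R n, ∃ j ≤ n, x = incl n w * T n j) → ∀ i,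
      ∃ w ∈ R n, ∃ j ≤ n, x * rho (n+1) i = incl n w * T n j := by
    rintro _ ⟨w, hw, j, hj, rfl⟩ i
    by_cases hi : 1 ≤ i ∧ i ≤ n
    swap
    · have : rho (n+1) i = 1 := by unfold rho; rw [dif_neg (by omega)]
      exact ⟨w, hw, j, hj, by rw [this, mul_one]⟩
    rcases lt_trichotomy i (n - j) with h | h | h
    · have hc : Commute (rho (n+1) i) (T n j) := T_comm n j hj _ fun k h1 h2 =>
        (rels_far (n+1) i k (by omega)).2.1
      refine ⟨w * rho n i, mul_mem hw (rho_mem_R _ _), j, hj, ?_⟩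
      rw [map_mul, incl_rho n i (by omega), mul_assoc, ← hc.eq, mul_assoc]
    · refine ⟨w, hw, j+1, by omega, ?_⟩
      rw [h, mul_assoc]; rfl
    · by_cases h' : i = n - j + 1
      · obtain ⟨j, rfl⟩ : ∃ j', j = j' + 1 := ⟨j - 1, by omega⟩
        refine ⟨w, hw, j, by omega, ?_⟩
        have : i = n - j := by omega
        rw [this]
        show incl n w * (T n j * rho (n+1) (n-j)) * rho (n+1) (n-j) = _
        rw [mul_assoc, mul_assoc, rho_mul_self, mul_one]
      · refine ⟨w * rho n (i-1), mul_mem hw (rho_mem_R _ _), j, hj, ?_⟩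
        rw [map_mul, incl_rho n (i-1) (by omega), mul_assoc, T_rho n j i hj (by omega) hi.2,
          mul_assoc]
  unfold R at hx
  induction hx using Subgroup.closure_induction_right with
  | one => exact ⟨1, one_mem _, 0, by omega, by simp [T]⟩
  | mul_right x _ y hy ih =>
    obtain ⟨i, rfl⟩ := hy
    exact step x ih i
  | mul_inv_cancel x _ y hy ih =>
    obtain ⟨i, rfl⟩ := hy
    rw [rho_inv]
    exact step x ih i

end UVBAux

/-! ## The permutation homomorphism -/
namespace UVBAux

open UVB

theorem R_one (x : UVB 1) : x = 1 := by
  have : x ∈ (⊥ : Subgroup (UVB 1)) := mem_of_gens _ (fun k h1 h2 => by omega) x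
  simpa using this

theorem R_zero (x : UVB 0) : x = 1 := by
  have : x ∈ (⊥ : Subgroup (UVB 0)) := mem_of_gens _ (fun k h1 h2 => by omega) x
  simpa using this

theorem iota_rho {ι : ∀ n, UVB n →* Equiv.Perm (Fin n)} (hι : ∀ n, IsIota n (ι n))
    (n k : ℕ) (h : k + 1 < n) :
    ι n (rho n (k+1)) = Equiv.swap ⟨k, by omega⟩ ⟨k+1, h⟩ :=
  (hι n (k+1) (by omega) (by omega)).2

theorem iota_sigma {ι : ∀ n, UVB n →* Equiv.Perm (Fin n)} (hι : ∀ n, IsIota n (ι n))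
    (n k : ℕ) (h : k + 1 < n) :
    ι n (sigma n (k+1)) = Equiv.swap ⟨k, by omega⟩ ⟨k+1, h⟩ :=
  (hι n (k+1) (by omega) (by omega)).1

theorem iota_incl {ι : ∀ n, UVB n →* Equiv.Perm (Fin n)} (hι : ∀ n, IsIota n (ι n))
    (n : ℕ) (x : UVB n) (i : Fin n) :
    ι (n+1) (incl n x) i.castSucc = (ι n x i).castSucc := by
  let H : Subgroup (UVB n) :=
    { carrier := {x | ∀ i : Fin n, ι (n+1) (incl n x) i.castSucc = (ι n x i).castSucc}
      one_mem' := by intro i; simp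
      mul_mem' := by
        intro a b ha hb i
        simp only [map_mul, Equiv.Perm.mul_apply]
        rw [hb, ha]
      inv_mem' := by
        intro a ha i
        simp only [map_inv]
        rw [Equiv.Perm.inv_eq_iff_eq, ha]
        simp }
  have : x ∈ H := by
    refine mem_of_gens H ?_ x
    intro k h1 h2
    obtain ⟨k, rfl⟩ : ∃ k', k = k' + 1 := ⟨k - 1, by omega⟩
    constructor
    · intro i
      rw [incl_sigma n _ h2, iota_sigma hι (n+1) k (by omega), iota_sigma hι n k (by omega)]
      simp only [Equiv.swap_apply_def, Fin.ext_iff, Fin.val_castSucc]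
      split_ifs <;> simp
    · intro i
      rw [incl_rho n _ h2, iota_rho hι (n+1) k (by omega), iota_rho hι n k (by omega)]
      simp only [Equiv.swap_apply_def, Fin.ext_iff, Fin.val_castSucc]
      split_ifs <;> simp
  exact this i

theorem iota_incl_last {ι : ∀ n, UVB n →* Equiv.Perm (Fin n)} (hι : ∀ n, IsIota n (ι n))
    (n : ℕ) (x : UVB n) :
    ι (n+1) (incl n x) (Fin.last n) = Fin.last n := by
  rcases Fin.eq_castSucc_or_eq_last (ι (n+1) (incl n x) (Fin.last n)) with ⟨j, hj⟩ | h
  · exfalso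
    have := iota_incl hι n x ((ι n x)⁻¹ j)
    rw [← Equiv.Perm.mul_apply, mul_inv_cancel, Equiv.Perm.one_apply, ← hj] at this
    have := (ι (n+1) (incl n x)).injective this
    exact absurd this (Fin.castSucc_lt_last _).ne
  · exact h

theorem iota_surj {ι : ∀ n, UVB n →* Equiv.Perm (Fin n)} (hι : ∀ n, IsIota n (ι n))
    (n : ℕ) (π : Equiv.Perm (Fin n)) : ∃ r ∈ R n, ι n r = π := by
  rcases n with _ | n
  · exact ⟨1, one_mem _, Subsingleton.elim _ _⟩
  · have : π ∈ (⊤ : Submonoid (Equiv.Perm (Fin (n+1)))) := trivial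
    rw [← Equiv.Perm.mclosure_swap_castSucc_succ] at this
    have h2 : Submonoid.closure (Set.range fun i : Fin n ↦ Equiv.swap i.castSucc i.succ) ≤
        ((R (n+1)).map (ι (n+1))).toSubmonoid := by
      rw [Submonoid.closure_le]
      rintro _ ⟨i, rfl⟩
      refine ⟨rho (n+1) (i+1), rho_mem_R _ _, ?_⟩
      rw [iota_rho hι (n+1) i (by omega)]
      rfl
    exact h2 this

theorem iota_T {ι : ∀ n, UVB n →* Equiv.Perm (Fin n)} (hι : ∀ n, IsIota n (ι n))
    (n j : ℕ) (hj : j ≤ n) :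
    ι (n+1) (T n j) ⟨n - j, by omega⟩ = Fin.last n := by
  induction j with
  | zero => simp [T]; rfl
  | succ j ih =>
    show ι (n+1) (T n j * rho (n+1) (n-j)) _ = _
    obtain ⟨k, hk⟩ : ∃ k, n - j = k + 1 := ⟨n - j - 1, by omega⟩
    rw [← ih (by omega), map_mul, Equiv.Perm.mul_apply]
    congr 1
    have e : (⟨n - (j+1), by omega⟩ : Fin (n+1)) = ⟨k, by omega⟩ := by
      ext; simp; omega
    have e2 : (⟨n - j, by omega⟩ : Fin (n+1)) = ⟨k+1, by omega⟩ := by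
      ext; simp; omega
    have e3 : rho (n+1) (n-j) = rho (n+1) (k+1) := by rw [hk]
    rw [e, e2, e3, iota_rho hι (n+1) k (by omega), Equiv.swap_apply_left]

theorem iota_form {ι : ∀ n, UVB n →* Equiv.Perm (Fin n)} (hι : ∀ n, IsIota n (ι n))
    (n j : ℕ) (hj : j ≤ n) (w : UVB n) :
    ι (n+1) (incl n w * T n j) ⟨n - j, by omega⟩ = Fin.last n := by
  rw [map_mul, Equiv.Perm.mul_apply, iota_T hι n j hj, iota_incl_last hι]

theorem R_inj {ι : ∀ n, UVB n →* Equiv.Perm (Fin n)} (hι : ∀ n, IsIota n (ι n))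
    (n : ℕ) : ∀ x ∈ R n, ι n x = 1 → x = 1 := by
  induction n with
  | zero => intro x _ _; exact R_zero x
  | succ n ih =>
    intro x hx h
    obtain ⟨w, hw, j, hj, rfl⟩ := R_form n x hx
    have h1 := iota_form hι n j hj w
    rw [h] at h1
    have hj0 : j = 0 := by
      have := congrArg Fin.val h1
      simp at this; omega
    subst hj0
    have hT : T n 0 = 1 := rfl
    rw [hT, mul_one] at h ⊢
    rw [ih w hw, map_one]
    ext i
    have := iota_incl hι n w i
    rw [h] at this
    have := congrArg Fin.val this
    simpa using this.symm

theorem R_comm {ι : ∀ n, UVB n →* Equiv.Perm (Fin n)} (hι : ∀ n, IsIota n (ι n))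
    (n : ℕ) : ∀ x ∈ R n, (∀ i : Fin n, i.val < 2 → ι n x i = i) →
    Commute (rho n 1) x ∧ Commute (sigma n 1) x := by
  induction n with
  | zero => intro x _ _; rw [R_zero x]; simp
  | succ n ih =>
    intro x hx h
    obtain ⟨w, hw, j, hj, rfl⟩ := R_form n x hx
    have h1 := iota_form hι n j hj w
    rcases Nat.lt_or_ge n 2 with hn | hn
    · have : w = 1 := by
        rcases n with _ | n
        · exact R_zero w
        · obtain rfl : n = 0 := by omega
          exact R_one w
      subst this
      rw [h _ (by simp; omega)] at h1
      have hj0 : j = 0 := by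
        have := congrArg Fin.val h1
        simp at this; omega
      subst hj0
      simp [T]
    have h2 : 2 ≤ n - j := by
      by_contra hc
      rw [h _ (by simp; omega)] at h1
      have := congrArg Fin.val h1
      simp at this; omega
    have hTf : ∀ i : Fin (n+1), i.val < 2 → ι (n+1) (T n j) i = i := by
      clear h h1 hx
      intro i hi
      induction j with
      | zero => simp [T]
      | succ j ihj =>
        show ι (n+1) (T n j * rho (n+1) (n-j)) i = i
        obtain ⟨k, hk⟩ : ∃ k, n - j = k + 1 := ⟨n - j - 1, by omega⟩
        rw [hk, map_mul, Equiv.Perm.mul_apply, iota_rho hι (n+1) k (by omega),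
          Equiv.swap_apply_of_ne_of_ne, ihj (by omega) (by omega)]
        · intro h; have := congrArg Fin.val h; simp at this; omega
        · intro h; have := congrArg Fin.val h; simp at this; omega
    have hw2 := ih w hw (by
      intro i hi
      have := h i.castSucc hi
      rw [map_mul, Equiv.Perm.mul_apply, hTf _ hi, iota_incl hι] at this
      exact Fin.castSucc_injective _ this)
    have e1 := hw2.1.map (incl n)
    have e2 := hw2.2.map (incl n)
    rw [incl_rho n 1 (by omega)] at e1
    rw [incl_sigma n 1 (by omega)] at e2
    exact ⟨e1.mul_right (T_comm n j hj _ fun k a b => (rels_far (n+1) 1 k (by omega)).2.1),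
      e2.mul_right (T_comm n j hj _ fun k a b => (rels_far (n+1) 1 k (by omega)).2.2)⟩

end UVBAux

/-! ## The pure generators -/
namespace UVBAux

open UVB

open Classical in
/-- the pure generator `λ_{i,j}` (0-based), as a conjugate of `λ_{1,2}` -/
noncomputable def Lm (ι : ∀ n, UVB n →* Equiv.Perm (Fin n)) (n : ℕ) (i j : Fin n) : UVB n :=
  if h : ∃ r ∈ R n, ∀ x : Fin n, (x.val = 0 → ι n r x = i) ∧ (x.val = 1 → ι n r x = j) then
    h.choose * (rho n 1 * (sigma n 1)⁻¹) * h.choose⁻¹ else 1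

theorem Lm_eq {ι : ∀ n, UVB n →* Equiv.Perm (Fin n)} (hι : ∀ n, IsIota n (ι n))
    {n : ℕ} {i j : Fin n} {r : UVB n} (hr : r ∈ R n)
    (h : ∀ x : Fin n, (x.val = 0 → ι n r x = i) ∧ (x.val = 1 → ι n r x = j)) :
    Lm ι n i j = r * (rho n 1 * (sigma n 1)⁻¹) * r⁻¹ := by
  have hex : ∃ r ∈ R n, ∀ x : Fin n, (x.val = 0 → ι n r x = i) ∧ (x.val = 1 → ι n r x = j) :=
    ⟨r, hr, h⟩
  unfold Lm
  rw [dif_pos hex]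
  obtain ⟨hq, h'⟩ := hex.choose_spec
  generalize hex.choose = q at hq h' ⊢
  obtain ⟨c1, c2⟩ := R_comm hι n (r⁻¹ * q) (mul_mem (inv_mem hr) hq) (by
    intro x hx
    rw [map_mul, map_inv, Equiv.Perm.mul_apply, Equiv.Perm.inv_eq_iff_eq]
    rcases Nat.lt_or_ge x.val 1 with h0 | h0
    · rw [(h' x).1 (by omega), (h x).1 (by omega)]
    · rw [(h' x).2 (by omega), (h x).2 (by omega)])
  have c := (c1.mul_left c2.inv_left).eq
  calc _ = r * (r⁻¹ * q * (rho n 1 * (sigma n 1)⁻¹)) * q⁻¹ := by group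
    _ = _ := by rw [← c]; group

theorem exists_R {ι : ∀ n, UVB n →* Equiv.Perm (Fin n)} (hι : ∀ n, IsIota n (ι n))
    {n k : ℕ} (f g : Fin k → Fin n) (hf : Function.Injective f) (hg : Function.Injective g) :
    ∃ r ∈ R n, ∀ x, ι n r (f x) = g x := by
  obtain ⟨π, hπ⟩ := Equiv.Perm.exists_extending_pair f g hf hg
  obtain ⟨r, hr, rfl⟩ := iota_surj hι n π
  exact ⟨r, hr, fun x => hπ x⟩

theorem exists_R2 {ι : ∀ n, UVB n →* Equiv.Perm (Fin n)} (hι : ∀ n, IsIota n (ι n))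
    {n : ℕ} {a b i j : Fin n} (hab : a ≠ b) (h : i ≠ j) :
    ∃ r ∈ R n, ι n r a = i ∧ ι n r b = j := by
  obtain ⟨r, hr, h'⟩ := exists_R hι ![a, b] ![i, j]
    (by simp [Function.Injective, Fin.forall_fin_succ, hab, hab.symm])
    (by simp [Function.Injective, Fin.forall_fin_succ, h, h.symm])
  exact ⟨r, hr, h' 0, h' 1⟩

theorem exists_base {ι : ∀ n, UVB n →* Equiv.Perm (Fin n)} (hι : ∀ n, IsIota n (ι n))
    {n : ℕ} {i j : Fin n} (h : i ≠ j) :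
    ∃ r ∈ R n, ∀ x : Fin n, (x.val = 0 → ι n r x = i) ∧ (x.val = 1 → ι n r x = j) := by
  have hn : 1 < n := by
    have := i.isLt; have := j.isLt
    by_contra hc
    exact h (Fin.ext (by omega))
  obtain ⟨r, hr, h0, h1⟩ := exists_R2 hι (a := (⟨0, by omega⟩ : Fin n)) (b := ⟨1, hn⟩)
    (by simp) h
  refine ⟨r, hr, fun x => ⟨fun hx => ?_, fun hx => ?_⟩⟩
  · rw [← h0]; congr 1; exact Fin.ext hx
  · rw [← h1]; congr 1; exact Fin.ext hx

theorem Lm_conj {ι : ∀ n, UVB n →* Equiv.Perm (Fin n)} (hι : ∀ n, IsIota n (ι n))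
    {n : ℕ} {i j : Fin n} (h : i ≠ j) {r : UVB n} (hr : r ∈ R n) :
    r * Lm ι n i j * r⁻¹ = Lm ι n (ι n r i) (ι n r j) := by
  obtain ⟨q, hq, h'⟩ := exists_base hι h
  rw [Lm_eq hι hq h', Lm_eq hι (mul_mem hr hq)]
  · group
  · intro x
    rw [map_mul, Equiv.Perm.mul_apply]
    exact ⟨fun hx => by rw [(h' x).1 hx], fun hx => by rw [(h' x).2 hx]⟩

theorem Lm_incl {ι : ∀ n, UVB n →* Equiv.Perm (Fin n)} (hι : ∀ n, IsIota n (ι n))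
    {n : ℕ} {i j : Fin n} (h : i ≠ j) :
    incl n (Lm ι n i j) = Lm ι (n+1) i.castSucc j.castSucc := by
  have hn : 1 < n := by
    have := i.isLt; have := j.isLt
    by_contra hc
    exact h (Fin.ext (by omega))
  obtain ⟨q, hq, h'⟩ := exists_base hι h
  rw [Lm_eq hι hq h', Lm_eq hι (incl_mem_R hq)]
  · simp only [map_mul, map_inv, incl_rho n 1 (by omega), incl_sigma n 1 (by omega)]
  · intro x
    rcases Fin.eq_castSucc_or_eq_last x with ⟨y, rfl⟩ | rfl
    · rw [iota_incl hι]
      exact ⟨fun hx => by rw [(h' y).1 hx], fun hx => by rw [(h' y).2 hx]⟩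
    · constructor <;> intro hx <;> simp at hx <;> omega

theorem Lm_adj {ι : ∀ n, UVB n →* Equiv.Perm (Fin n)} (hι : ∀ n, IsIota n (ι n))
    (n k : ℕ) (hk : k + 1 < n) :
    Lm ι n ⟨k, by omega⟩ ⟨k+1, hk⟩ = rho n (k+1) * (sigma n (k+1))⁻¹ := by
  induction k with
  | zero =>
    rw [Lm_eq hι (one_mem (R n))]
    · simp
    · intro x
      simp only [map_one, Equiv.Perm.one_apply]
      exact ⟨fun h => Fin.ext h, fun h => Fin.ext h⟩
  | succ k ih =>
    have hr : rho n (k+1) * rho n (k+2) ∈ R n := mul_mem (rho_mem_R _ _) (rho_mem_R _ _)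
    have e1 : ι n (rho n (k+1) * rho n (k+2)) ⟨k, by omega⟩ = ⟨k+1, by omega⟩ := by
      have e0 : Equiv.swap (⟨k+1, by omega⟩ : Fin n) ⟨k+1+1, hk⟩ ⟨k, by omega⟩ = ⟨k, by omega⟩ :=
        Equiv.swap_apply_of_ne_of_ne (Fin.ne_of_val_ne (by simp)) (Fin.ne_of_val_ne (by simp; omega))
      rw [map_mul, iota_rho hι n k (by omega), iota_rho hι n (k+1) (by omega),
        Equiv.Perm.mul_apply, e0, Equiv.swap_apply_left]
    have e2 : ι n (rho n (k+1) * rho n (k+2)) ⟨k+1, by omega⟩ = ⟨k+2, by omega⟩ := by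
      rw [map_mul, iota_rho hι n k (by omega), iota_rho hι n (k+1) (by omega),
        Equiv.Perm.mul_apply, Equiv.swap_apply_left, Equiv.swap_apply_of_ne_of_ne] <;>
      simp <;> omega
    have c := Lm_conj hι (i := ⟨k, by omega⟩) (j := ⟨k+1, by omega⟩) (by simp) hr
    rw [e1, e2, ih (by omega)] at c
    rw [← c]
    obtain ⟨-, b1, b2, -, -⟩ := rels_succ n (k+1) (by omega) (by omega)
    have b1' : rho n (k+1) * rho n (k+2) * rho n (k+1) = rho n (k+2) * (rho n (k+1) * rho n (k+2)) := by
      rw [b1, mul_assoc]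
    have b2' : rho n (k+1) * rho n (k+2) * sigma n (k+1) = sigma n (k+2) * (rho n (k+1) * rho n (k+2)) := by
      rw [b2, mul_assoc]
    generalize rho n (k+1) * rho n (k+2) = r at *
    calc r * (rho n (k+1) * (sigma n (k+1))⁻¹) * r⁻¹ = (r * rho n (k+1)) * (r * sigma n (k+1))⁻¹ := by group
      _ = _ := by rw [b1', b2']; group

theorem Lm_adj' {ι : ∀ n, UVB n →* Equiv.Perm (Fin n)} (hι : ∀ n, IsIota n (ι n))
    (n k : ℕ) (hk : k + 1 < n) :
    Lm ι n ⟨k+1, hk⟩ ⟨k, by omega⟩ = (sigma n (k+1))⁻¹ * rho n (k+1) := by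
  have c := Lm_conj hι (i := ⟨k, by omega⟩) (j := ⟨k+1, hk⟩) (by simp) (rho_mem_R n (k+1))
  rw [iota_rho hι n k hk, Equiv.swap_apply_left, Equiv.swap_apply_right, Lm_adj hι] at c
  rw [← c, rho_inv, ← mul_assoc, rho_mul_self, one_mul]

theorem comm3_abs {G : Type*} [Group G] (r s x y z : G) (h1 : r * y = z * r)
    (h2 : r * s * x = y * (r * s)) (h3 : s * x = z * s) (h4 : s * r * y = x * (s * r))
    (hb : r * s * r = s * r * s)
    (f1 : r * (y * s) * (x * r) = (y * s) * (x * r) * s)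
    (f2 : s * (x * r) * (y * s) = (x * r) * (y * s) * r)
    (b : (x * r) * (y * s) * (x * r) = (y * s) * (x * r) * (y * s)) :
    x * z = z * x ∧ x * y = y * x ∧ z * y = y * z := by
  have a1 : z * y = y * z := by
    apply mul_right_cancel (b := r * s * r)
    calc z * y * (r * s * r) = z * (y * (r * s)) * r := by group
      _ = (z * r) * s * x * r := by rw [← h2]; group
      _ = r * (y * s) * (x * r) := by rw [← h1]; group
      _ = y * (s * x) * r * s := by rw [f1]; group
      _ = y * z * (r * s * r) := by rw [h3, hb]; group
  have a2 : z * x = x * z := by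
    apply mul_right_cancel (b := r * s * r)
    calc z * x * (r * s * r) = z * (x * (s * r)) * s := by rw [hb]; group
      _ = (z * s) * r * y * s := by rw [← h4]; group
      _ = s * (x * r) * (y * s) := by rw [← h3]; group
      _ = x * (r * y) * s * r := by rw [f2]; group
      _ = x * z * (r * s * r) := by rw [h1]; group
  have a3 : x * z * y = y * z * x := by
    apply mul_right_cancel (b := r * s * r)
    calc x * z * y * (r * s * r) = x * z * (y * (r * s)) * r := by group
      _ = x * (z * r) * s * x * r := by rw [← h2]; group
      _ = (x * r) * (y * s) * (x * r) := by rw [← h1]; group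
      _ = y * (s * x) * r * y * s := by rw [b]; group
      _ = y * z * (s * r * y) * s := by rw [h3]; group
      _ = y * z * x * (r * s * r) := by rw [h4, hb]; group
  refine ⟨a2.symm, ?_, a1⟩
  apply mul_left_cancel (a := z)
  calc z * (x * y) = x * z * y := by rw [← a2]; group
    _ = z * (y * x) := by rw [a3, ← a1]; group

theorem Lm_comm3_base {ι : ∀ n, UVB n →* Equiv.Perm (Fin n)} (hι : ∀ n, IsIota n (ι n))
    {n : ℕ} (hn : 2 < n) :
    Commute (Lm ι n ⟨0, by omega⟩ ⟨1, by omega⟩) (Lm ι n ⟨0, by omega⟩ ⟨2, hn⟩) ∧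
    Commute (Lm ι n ⟨0, by omega⟩ ⟨1, by omega⟩) (Lm ι n ⟨1, by omega⟩ ⟨2, hn⟩) ∧
    Commute (Lm ι n ⟨0, by omega⟩ ⟨2, by omega⟩) (Lm ι n ⟨1, by omega⟩ ⟨2, hn⟩) := by
  obtain ⟨b, hb, -, f1, f2⟩ := rels_succ n 1 (by omega) (by omega)
  have hx := Lm_adj hι n 0 (by omega)
  have hy := Lm_adj hι n 1 (by omega)
  have c1 := Lm_conj hι (i := ⟨1, by omega⟩) (j := ⟨2, hn⟩) (by simp) (rho_mem_R n 1)
  have c3 := Lm_conj hι (i := ⟨0, by omega⟩) (j := ⟨1, by omega⟩) (by simp) (rho_mem_R n 2)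
  have i1 := iota_rho hι n 0 (by omega)
  have i2 := iota_rho hι n 1 (by omega)
  simp only [zero_add, Nat.reduceAdd] at *
  rw [i1, Equiv.swap_apply_right, Equiv.swap_apply_of_ne_of_ne (by simp) (by simp)] at c1
  rw [i2, Equiv.swap_apply_left, Equiv.swap_apply_of_ne_of_ne (by simp) (by simp)] at c3
  generalize Lm ι n ⟨0, _⟩ ⟨1, _⟩ = x at *
  generalize Lm ι n ⟨1, _⟩ ⟨2, _⟩ = y at *
  generalize Lm ι n ⟨0, _⟩ ⟨2, _⟩ = z at *
  have s1 : sigma n 1 = x⁻¹ * rho n 1 := by rw [hx]; simp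
  have s2 : sigma n 2 = y⁻¹ * rho n 2 := by rw [hy]; simp
  rw [s1, s2] at b f1 f2
  have r1 := rho_inv n 1
  have r2 := rho_inv n 2
  generalize rho n 1 = r at *
  generalize rho n 2 = s at *
  have k1 : r * y⁻¹ = z⁻¹ * r := by rw [← c1]; group
  have k3 : s * x⁻¹ = z⁻¹ * s := by rw [← c3]; group
  have k1' : r * z⁻¹ = y⁻¹ * r := by
    nth_rw 2 [← r1]
    rw [eq_mul_inv_iff_mul_eq, mul_assoc, ← k1, ← mul_assoc]
    nth_rw 1 [← r1]
    simp
  have k3' : s * z⁻¹ = x⁻¹ * s := by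
    nth_rw 2 [← r2]
    rw [eq_mul_inv_iff_mul_eq, mul_assoc, ← k3, ← mul_assoc]
    nth_rw 1 [← r2]
    simp
  obtain ⟨p1, p2, p3⟩ := comm3_abs r s x⁻¹ y⁻¹ z⁻¹ k1
    (by rw [mul_assoc, k3, ← mul_assoc, k1', mul_assoc]) k3
    (by rw [mul_assoc, k1, ← mul_assoc, k3', mul_assoc]) hb f1 f2 b
  exact ⟨Commute.inv_inv_iff.1 p1, Commute.inv_inv_iff.1 p2, Commute.inv_inv_iff.1 p3⟩

theorem Lm_comm3 {ι : ∀ n, UVB n →* Equiv.Perm (Fin n)} (hι : ∀ n, IsIota n (ι n))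
    {n : ℕ} {i j k : Fin n} (hij : i ≠ j) (hik : i ≠ k) (hjk : j ≠ k) :
    Commute (Lm ι n i j) (Lm ι n i k) ∧ Commute (Lm ι n i j) (Lm ι n j k) ∧
    Commute (Lm ι n i k) (Lm ι n j k) := by
  have hn : 2 < n := by
    have := i.isLt; have := j.isLt; have := k.isLt
    simp only [ne_eq, Fin.ext_iff] at *
    omega
  obtain ⟨r, hr, h'⟩ := exists_R hι ![(⟨0, by omega⟩ : Fin n), ⟨1, by omega⟩, ⟨2, hn⟩] ![i, j, k]
    (by simp [Function.Injective, Fin.forall_fin_succ])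
    (by simp [Function.Injective, Fin.forall_fin_succ, hij, hij.symm, hik, hik.symm, hjk, hjk.symm])
  have h0 : ι n r ⟨0, by omega⟩ = i := h' 0
  have h1 : ι n r ⟨1, by omega⟩ = j := h' 1
  have h2 : ι n r ⟨2, by omega⟩ = k := h' 2
  obtain ⟨a, b, c⟩ := Lm_comm3_base hι hn
  rw [← h0, ← h1, ← h2, ← Lm_conj hι (by simp) hr, ← Lm_conj hι (by simp) hr,
    ← Lm_conj hι (by simp) hr]
  exact ⟨(Commute.conj_iff r).2 a, (Commute.conj_iff r).2 b, (Commute.conj_iff r).2 c⟩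

theorem Lm_comm4 {ι : ∀ n, UVB n →* Equiv.Perm (Fin n)} (hι : ∀ n, IsIota n (ι n))
    {n : ℕ} {i j k l : Fin n} (hij : i ≠ j) (hik : i ≠ k) (hil : i ≠ l) (hjk : j ≠ k)
    (hjl : j ≠ l) (hkl : k ≠ l) :
    Commute (Lm ι n i j) (Lm ι n k l) := by
  have hn : 3 < n := by
    have := i.isLt; have := j.isLt; have := k.isLt; have := l.isLt
    simp only [ne_eq, Fin.ext_iff] at *
    omega
  obtain ⟨r, hr, h'⟩ := exists_R hι
    ![(⟨0, by omega⟩ : Fin n), ⟨1, by omega⟩, ⟨2, by omega⟩, ⟨3, hn⟩] ![i, j, k, l]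
    (by simp [Function.Injective, Fin.forall_fin_succ])
    (by simp [Function.Injective, Fin.forall_fin_succ, hij, hij.symm, hik, hik.symm, hjk, hjk.symm,
      hil, hil.symm, hjl, hjl.symm, hkl, hkl.symm])
  have h0 : ι n r ⟨0, by omega⟩ = i := h' 0
  have h1 : ι n r ⟨1, by omega⟩ = j := h' 1
  have h2 : ι n r ⟨2, by omega⟩ = k := h' 2
  have h3 : ι n r ⟨3, by omega⟩ = l := h' 3
  rw [← h0, ← h1, ← h2, ← h3, ← Lm_conj hι (by simp) hr, ← Lm_conj hι (by simp) hr]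
  refine (Commute.conj_iff r).2 ?_
  rw [Lm_adj hι n 0 (by omega), Lm_adj hι n 2 (by omega)]
  obtain ⟨a, b, c⟩ := rels_far n 1 3 (by omega)
  obtain ⟨-, -, d⟩ := rels_far n 3 1 (by omega)
  exact (b.mul_right d.symm.inv_right).mul_left (c.inv_left.mul_right a.inv_inv)

theorem Lm_comm {ι : ∀ n, UVB n →* Equiv.Perm (Fin n)} (hι : ∀ n, IsIota n (ι n))
    {n : ℕ} {i j k l : Fin n} (hij : i ≠ j) (hkl : k ≠ l) (h1 : ¬ (i = k ∧ j = l))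
    (h2 : ¬ (i = l ∧ j = k)) : Commute (Lm ι n i j) (Lm ι n k l) := by
  by_cases hik : i = k
  · subst hik
    exact (Lm_comm3 hι hij hkl (fun h => h1 ⟨rfl, h⟩)).1
  by_cases hil : i = l
  · subst hil
    exact (Lm_comm3 hι hkl (fun h => h2 ⟨rfl, h.symm⟩) hij).2.1.symm
  by_cases hjk : j = k
  · subst hjk
    exact (Lm_comm3 hι hij hil hkl).2.1
  by_cases hjl : j = l
  · subst hjl
    exact (Lm_comm3 hι hik hij hkl).2.2
  exact Lm_comm4 hι hij hik hil hjk hjl hkl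

end UVBAux

/-! ## Generation of the pure group -/
namespace UVBAux

open UVB
open scoped commutatorElement

/-- the pure subgroup -/
abbrev P (ι : ∀ n, UVB n →* Equiv.Perm (Fin n)) (n : ℕ) : Subgroup (UVB n) := (ι n).ker

theorem Lm_mem_P {ι : ∀ n, UVB n →* Equiv.Perm (Fin n)} (hι : ∀ n, IsIota n (ι n))
    {n : ℕ} {i j : Fin n} (h : i ≠ j) : Lm ι n i j ∈ P ι n := by
  have hn : 1 < n := by
    have := i.isLt; have := j.isLt
    by_contra hc
    exact h (Fin.ext (by omega))
  obtain ⟨q, hq, h'⟩ := exists_base hι h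
  rw [Lm_eq hι hq h', MonoidHom.mem_ker]
  have h1 : ι n (rho n 1) = Equiv.swap ⟨0, by omega⟩ ⟨1, hn⟩ := iota_rho hι n 0 (by omega)
  have h2 : ι n (sigma n 1) = Equiv.swap ⟨0, by omega⟩ ⟨1, hn⟩ := iota_sigma hι n 0 (by omega)
  simp [h1, h2]

theorem P_gen {ι : ∀ n, UVB n →* Equiv.Perm (Fin n)} (hι : ∀ n, IsIota n (ι n)) (n : ℕ) :
    P ι n = Subgroup.closure {x | ∃ i j : Fin n, i ≠ j ∧ x = Lm ι n i j} := by
  set K : Subgroup (UVB n) := Subgroup.closure {x | ∃ i j : Fin n, i ≠ j ∧ x = Lm ι n i j} with hK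
  have hKP : K ≤ P ι n := by
    rw [hK, Subgroup.closure_le]
    rintro _ ⟨i, j, h, rfl⟩
    exact Lm_mem_P hι h
  have hR : ∀ r ∈ R n, ∀ k ∈ K, r * k * r⁻¹ ∈ K := by
    intro r hr k hk
    have : K ≤ K.comap (MulAut.conj r).toMonoidHom := by
      conv_lhs => rw [hK]
      rw [Subgroup.closure_le]
      rintro _ ⟨i, j, h, rfl⟩
      show r * Lm ι n i j * r⁻¹ ∈ K
      rw [Lm_conj hι h hr]
      exact Subgroup.subset_closure ⟨_, _, fun hc => h ((ι n r).injective hc), rfl⟩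
    exact this hk
  have hs : ∀ k, 1 ≤ k → k ≤ n - 1 → ∃ l ∈ K, sigma n k = l * rho n k := by
    intro k h1 h2
    obtain ⟨k, rfl⟩ : ∃ k', k = k' + 1 := ⟨k - 1, by omega⟩
    refine ⟨(Lm ι n ⟨k, by omega⟩ ⟨k+1, by omega⟩)⁻¹,
      inv_mem (Subgroup.subset_closure ⟨_, _, by simp, rfl⟩), ?_⟩
    rw [Lm_adj hι n k (by omega)]
    simp
  let H : Subgroup (UVB n) :=
    { carrier := {x | ∃ k ∈ K, ∃ r ∈ R n, x = k * r}
      one_mem' := ⟨1, one_mem _, 1, one_mem _, by simp⟩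
      mul_mem' := by
        rintro _ _ ⟨k, hk, r, hr, rfl⟩ ⟨k', hk', r', hr', rfl⟩
        exact ⟨k * (r * k' * r⁻¹), mul_mem hk (hR r hr k' hk'), r * r', mul_mem hr hr', by group⟩
      inv_mem' := by
        rintro _ ⟨k, hk, r, hr, rfl⟩
        exact ⟨r⁻¹ * k⁻¹ * r⁻¹⁻¹, hR _ (inv_mem hr) _ (inv_mem hk), r⁻¹, inv_mem hr, by group⟩ }
  refine le_antisymm ?_ hKP
  intro x hx
  have : x ∈ H := mem_of_gens H (fun k h1 h2 => by
    obtain ⟨l, hl, e⟩ := hs k h1 h2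
    exact ⟨⟨l, hl, _, rho_mem_R n k, e⟩, ⟨1, one_mem _, _, rho_mem_R n k, by simp⟩⟩) x
  obtain ⟨k, hk, r, hr, rfl⟩ := this
  have hr1 : ι n r = 1 := by
    have h1 : ι n k = 1 := hKP hk
    have h2 : ι n (k * r) = 1 := hx
    rwa [map_mul, h1, one_mul] at h2
  rw [R_inj hι n r hr hr1, mul_one]
  exact hk

/-! ## Commuting subgroups -/

theorem comm_closure {G : Type*} [Group G] {S T : Set G} (h : ∀ s ∈ S, ∀ t ∈ T, Commute s t) :
    ∀ x ∈ Subgroup.closure S, ∀ y ∈ Subgroup.closure T, Commute x y := by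
  have h1 : ∀ s ∈ S, ∀ y ∈ Subgroup.closure T, Commute s y := by
    intro s hs y hy
    induction hy using Subgroup.closure_induction with
    | mem y hy => exact h s hs y hy
    | one => exact Commute.one_right _
    | mul a b _ _ ha hb => exact ha.mul_right hb
    | inv a _ ha => exact ha.inv_right
  intro x hx y hy
  induction hx using Subgroup.closure_induction with
  | mem x hx => exact h1 x hx y hy
  | one => exact Commute.one_left _
  | mul a b _ _ ha hb => exact ha.mul_left hb
  | inv a _ ha => exact ha.inv_left

theorem sup_form {G : Type*} [Group G] {A B : Subgroup G}
    (h : ∀ a ∈ A, ∀ b ∈ B, Commute a b) {x : G} (hx : x ∈ A ⊔ B) :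
    ∃ a ∈ A, ∃ b ∈ B, x = a * b := by
  let H : Subgroup G :=
    { carrier := {x | ∃ a ∈ A, ∃ b ∈ B, x = a * b}
      one_mem' := ⟨1, one_mem _, 1, one_mem _, by simp⟩
      mul_mem' := by
        rintro _ _ ⟨k, hk, r, hr, rfl⟩ ⟨k', hk', r', hr', rfl⟩
        refine ⟨k * k', mul_mem hk hk', r * r', mul_mem hr hr', ?_⟩
        rw [mul_assoc, ← mul_assoc r, ← (h k' hk' r hr).eq]; group
      inv_mem' := by
        rintro _ ⟨k, hk, r, hr, rfl⟩
        refine ⟨k⁻¹, inv_mem hk, r⁻¹, inv_mem hr, ?_⟩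
        rw [mul_inv_rev, (h _ (inv_mem hk) _ (inv_mem hr)).eq] }
  have hA : A ⊔ B ≤ H := sup_le (fun a ha => ⟨a, ha, 1, one_mem _, by simp⟩)
    (fun b hb => ⟨1, one_mem _, b, hb, by simp⟩)
  exact hA hx

theorem comm_sup {G : Type*} [Group G] {A B : Subgroup G}
    (h : ∀ a ∈ A, ∀ b ∈ B, Commute a b) : ⁅A ⊔ B, A ⊔ B⁆ ≤ ⁅A, A⁆ ⊔ ⁅B, B⁆ := by
  rw [Subgroup.commutator_le]
  intro x hx y hy
  obtain ⟨a, ha, b, hb, rfl⟩ := sup_form h hx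
  obtain ⟨a', ha', b', hb', rfl⟩ := sup_form h hy
  have e : ⁅a * b, a' * b'⁆ = ⁅a, a'⁆ * ⁅b, b'⁆ := by
    have h1 := (h a' ha' b hb).eq
    have h2 := (h _ (inv_mem ha) _ (mul_mem (mul_mem hb hb') (inv_mem hb))).eq
    have h3 := (h _ (inv_mem ha') b hb).eq
    have h4 := (h _ (mul_mem (inv_mem ha) (inv_mem ha')) _
      (mul_mem (mul_mem hb hb') (inv_mem hb))).eq
    simp only [commutatorElement_def]
    calc a * b * (a' * b') * (a * b)⁻¹ * (a' * b')⁻¹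
        = a * (b * a') * b' * b⁻¹ * a⁻¹ * b'⁻¹ * a'⁻¹ := by group
      _ = a * a' * (b * b' * b⁻¹ * a⁻¹) * (b'⁻¹ * a'⁻¹) := by rw [← h1]; group
      _ = a * a' * (a⁻¹ * (b * b' * b⁻¹)) * (a'⁻¹ * b'⁻¹) := by
          rw [h2, (h _ (inv_mem ha') _ (inv_mem hb')).eq]
      _ = a * a' * (a⁻¹ * ((b * b' * b⁻¹) * a'⁻¹)) * b'⁻¹ := by group
      _ = a * a' * (a⁻¹ * (a'⁻¹ * (b * b' * b⁻¹))) * b'⁻¹ := by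
          rw [(h _ (inv_mem ha') _ (mul_mem (mul_mem hb hb') (inv_mem hb))).eq]
      _ = _ := by group
  rw [e]
  exact mul_mem (Subgroup.mem_sup_left (Subgroup.commutator_mem_commutator ha ha'))
    (Subgroup.mem_sup_right (Subgroup.commutator_mem_commutator hb hb'))

/-! ## Decomposition of the pure group on `n+2` strands -/

/-- the last pair subgroup -/
noncomputable def Q (ι : ∀ n, UVB n →* Equiv.Perm (Fin n)) (n : ℕ) : Subgroup (UVB (n+2)) :=
  Subgroup.closure {x | x = Lm ι (n+2) (Fin.last n).castSucc (Fin.last (n+1)) ∨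
    x = Lm ι (n+2) (Fin.last (n+1)) (Fin.last n).castSucc}

/-- the remaining pairs which involve the last strand -/
noncomputable def W (ι : ∀ n, UVB n →* Equiv.Perm (Fin n)) (n : ℕ) : Subgroup (UVB (n+2)) :=
  Subgroup.closure {x | ∃ i : Fin (n+1), i ≠ Fin.last n ∧
    (x = Lm ι (n+2) i.castSucc (Fin.last (n+1)) ∨ x = Lm ι (n+2) (Fin.last (n+1)) i.castSucc)}

/-- pairs not involving the last strand -/
noncomputable def V (ι : ∀ n, UVB n →* Equiv.Perm (Fin n)) (n : ℕ) : Subgroup (UVB (n+2)) :=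
  (P ι (n+1)).map (incl (n+1))

theorem V_eq {ι : ∀ n, UVB n →* Equiv.Perm (Fin n)} (hι : ∀ n, IsIota n (ι n)) (n : ℕ) :
    V ι n = Subgroup.closure
      {x | ∃ i j : Fin (n+1), i ≠ j ∧ x = Lm ι (n+2) i.castSucc j.castSucc} := by
  unfold V
  rw [P_gen hι, MonoidHom.map_closure]
  congr 1
  ext x
  constructor
  · rintro ⟨_, ⟨i, j, h, rfl⟩, rfl⟩
    exact ⟨i, j, h, Lm_incl hι h⟩
  · rintro ⟨i, j, h, rfl⟩
    exact ⟨_, ⟨i, j, h, rfl⟩, Lm_incl hι h⟩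

theorem comm_VW {ι : ∀ n, UVB n →* Equiv.Perm (Fin n)} (hι : ∀ n, IsIota n (ι n)) (n : ℕ) :
    ∀ v ∈ V ι n, ∀ w ∈ W ι n, Commute v w := by
  rw [V_eq hι]
  unfold W
  apply comm_closure
  rintro _ ⟨i, j, h, rfl⟩ _ ⟨k, hk, rfl | rfl⟩ <;> apply Lm_comm hι <;>
    simp [Fin.castSucc_ne_last, h, (Fin.castSucc_ne_last _).symm]

theorem comm_VQ {ι : ∀ n, UVB n →* Equiv.Perm (Fin n)} (hι : ∀ n, IsIota n (ι n)) (n : ℕ) :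
    ∀ v ∈ V ι n, ∀ w ∈ Q ι n, Commute v w := by
  rw [V_eq hι]
  unfold Q
  apply comm_closure
  rintro _ ⟨i, j, h, rfl⟩ _ (rfl | rfl) <;> apply Lm_comm hι <;>
    simp [Fin.castSucc_ne_last, h, (Fin.castSucc_ne_last _).symm]

theorem comm_WQ {ι : ∀ n, UVB n →* Equiv.Perm (Fin n)} (hι : ∀ n, IsIota n (ι n)) (n : ℕ) :
    ∀ v ∈ W ι n, ∀ w ∈ Q ι n, Commute v w := by
  unfold Q W
  apply comm_closure
  rintro _ ⟨k, hk, rfl | rfl⟩ _ (rfl | rfl) <;> apply Lm_comm hι <;>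
    simp [Fin.castSucc_ne_last, hk, (Fin.castSucc_ne_last _).symm]

theorem P_le_sup {ι : ∀ n, UVB n →* Equiv.Perm (Fin n)} (hι : ∀ n, IsIota n (ι n)) (n : ℕ) :
    P ι (n+2) ≤ (V ι n ⊔ W ι n) ⊔ Q ι n := by
  rw [P_gen hι, Subgroup.closure_le]
  rintro _ ⟨i, j, h, rfl⟩
  rcases Fin.eq_castSucc_or_eq_last i with ⟨i, rfl⟩ | rfl <;>
  rcases Fin.eq_castSucc_or_eq_last j with ⟨j, rfl⟩ | rfl
  · refine Subgroup.mem_sup_left (Subgroup.mem_sup_left ?_)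
    rw [V_eq hι]
    exact Subgroup.subset_closure ⟨i, j, fun hc => h (by rw [hc]), rfl⟩
  · by_cases hi : i = Fin.last n
    · subst hi
      exact Subgroup.mem_sup_right (Subgroup.subset_closure (Or.inl rfl))
    · exact Subgroup.mem_sup_left (Subgroup.mem_sup_right
        (Subgroup.subset_closure ⟨i, hi, Or.inl rfl⟩))
  · by_cases hi : j = Fin.last n
    · subst hi
      exact Subgroup.mem_sup_right (Subgroup.subset_closure (Or.inr rfl))
    · exact Subgroup.mem_sup_left (Subgroup.mem_sup_right
        (Subgroup.subset_closure ⟨j, hi, Or.inr rfl⟩))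
  · exact absurd rfl h

theorem iota_rho_last {ι : ∀ n, UVB n →* Equiv.Perm (Fin n)} (hι : ∀ n, IsIota n (ι n)) (n : ℕ) :
    ι (n+2) (rho (n+2) (n+1)) = Equiv.swap (Fin.last n).castSucc (Fin.last (n+1)) :=
  iota_rho hι (n+2) n (by omega)

theorem W_conj {ι : ∀ n, UVB n →* Equiv.Perm (Fin n)} (hι : ∀ n, IsIota n (ι n)) (n : ℕ) :
    (W ι n).map (MulAut.conj (rho (n+2) (n+1))).toMonoidHom ≤ V ι n := by
  rw [V_eq hι]
  unfold W
  rw [MonoidHom.map_closure, Subgroup.closure_le]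
  rintro _ ⟨_, ⟨i, hi, rfl | rfl⟩, rfl⟩
  · apply Subgroup.subset_closure
    refine ⟨i, Fin.last n, hi, ?_⟩
    show rho (n+2) (n+1) * _ * (rho (n+2) (n+1))⁻¹ = _
    rw [Lm_conj hι (Fin.castSucc_ne_last _) (rho_mem_R _ _), iota_rho_last hι,
      Equiv.swap_apply_right, Equiv.swap_apply_of_ne_of_ne _ (Fin.castSucc_ne_last _)]
    exact fun hc => hi (Fin.castSucc_injective _ hc)
  · apply Subgroup.subset_closure
    refine ⟨Fin.last n, i, hi.symm, ?_⟩
    show rho (n+2) (n+1) * _ * (rho (n+2) (n+1))⁻¹ = _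
    rw [Lm_conj hι (Fin.castSucc_ne_last _).symm (rho_mem_R _ _), iota_rho_last hι,
      Equiv.swap_apply_right, Equiv.swap_apply_of_ne_of_ne _ (Fin.castSucc_ne_last _)]
    exact fun hc => hi (Fin.castSucc_injective _ hc)

theorem P_form {ι : ∀ n, UVB n →* Equiv.Perm (Fin n)} (hι : ∀ n, IsIota n (ι n)) (n : ℕ)
    (p : UVB (n+2)) (hp : p ∈ P ι (n+2)) :
    ∃ v ∈ P ι (n+1), ∃ v' ∈ P ι (n+1), ∃ w ∈ W ι n, ∃ q ∈ Q ι n,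
      p = incl (n+1) v * w * q ∧
      rho (n+2) (n+1) * w * (rho (n+2) (n+1))⁻¹ = incl (n+1) v' := by
  obtain ⟨x, hx, q, hq, rfl⟩ := sup_form (fun a ha b hb => by
    obtain ⟨v, hv, w, hw, rfl⟩ := sup_form (comm_VW hι n) ha
    exact (comm_VQ hι n v hv b hb).mul_left (comm_WQ hι n w hw b hb)) (P_le_sup hι n hp)
  obtain ⟨_, ⟨v, hv, rfl⟩, w, hw, rfl⟩ := sup_form (comm_VW hι n) hx
  obtain ⟨v', hv', e⟩ := W_conj hι n ⟨w, hw, rfl⟩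
  exact ⟨v, hv, v', hv', w, hw, q, hq, rfl, e.symm⟩

theorem P_comm_form {ι : ∀ n, UVB n →* Equiv.Perm (Fin n)} (hι : ∀ n, IsIota n (ι n)) (n : ℕ)
    (p : UVB (n+2)) (hp : p ∈ ⁅P ι (n+2), P ι (n+2)⁆) :
    ∃ v ∈ ⁅P ι (n+1), P ι (n+1)⁆, ∃ v' ∈ ⁅P ι (n+1), P ι (n+1)⁆, ∃ w ∈ W ι n, ∃ q ∈ Q ι n,
      p = incl (n+1) v * w * q ∧
      rho (n+2) (n+1) * w * (rho (n+2) (n+1))⁻¹ = incl (n+1) v' := by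
  have c1 : ∀ a ∈ V ι n ⊔ W ι n, ∀ b ∈ Q ι n, Commute a b := fun a ha b hb => by
    obtain ⟨v, hv, w, hw, rfl⟩ := sup_form (comm_VW hι n) ha
    exact (comm_VQ hι n v hv b hb).mul_left (comm_WQ hι n w hw b hb)
  have self_le : ∀ A : Subgroup (UVB (n+2)), ⁅A, A⁆ ≤ A := fun A =>
    Subgroup.commutator_le.2 fun a ha b hb => by
      rw [commutatorElement_def]
      exact mul_mem (mul_mem (mul_mem ha hb) (inv_mem ha)) (inv_mem hb)
  have h1 := comm_sup c1 (Subgroup.commutator_mono (P_le_sup hι n) (P_le_sup hι n) hp)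
  have h2 := sup_le_sup_right (comm_sup (comm_VW hι n)) ⁅Q ι n, Q ι n⁆ h1
  have c2 : ∀ a ∈ ⁅V ι n, V ι n⁆, ∀ b ∈ ⁅W ι n, W ι n⁆, Commute a b := fun a ha b hb =>
    comm_VW hι n a (self_le _ ha) b (self_le _ hb)
  obtain ⟨x, hx, q, hq, rfl⟩ := sup_form (fun a ha b hb => by
    obtain ⟨v, hv, w, hw, rfl⟩ := sup_form c2 ha
    exact (comm_VQ hι n v (self_le _ hv) b (self_le _ hb)).mul_left
      (comm_WQ hι n w (self_le _ hw) b (self_le _ hb))) h2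
  obtain ⟨v0, hv0, w, hw, rfl⟩ := sup_form c2 hx
  have hV : ⁅V ι n, V ι n⁆ = Subgroup.map (incl (n+1)) ⁅P ι (n+1), P ι (n+1)⁆ := by
    rw [Subgroup.map_commutator]; rfl
  rw [hV] at hv0
  obtain ⟨v, hv, rfl⟩ := hv0
  have hw' : (MulAut.conj (rho (n+2) (n+1))).toMonoidHom w ∈ ⁅V ι n, V ι n⁆ := by
    refine Subgroup.commutator_mono (W_conj hι n) (W_conj hι n) ?_
    rw [← Subgroup.map_commutator]
    exact ⟨w, hw, rfl⟩
  rw [hV] at hw'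
  obtain ⟨v', hv', e⟩ := hw'
  exact ⟨v, hv, v', hv', w, self_le _ hw, q, self_le _ hq, rfl, e.symm⟩

end UVBAux

/-! ## Markov moves -/
namespace UVBAux

open UVB
open scoped commutatorElement

theorem M_refl (x : Σ n, UVB n) : Markov x x := Relation.EqvGen.refl x

theorem M_symm {x y : Σ n, UVB n} (h : Markov x y) : Markov y x := Relation.EqvGen.symm _ _ h

theorem M_trans {x y z : Σ n, UVB n} (h : Markov x y) (h' : Markov y z) : Markov x z :=
  Relation.EqvGen.trans _ _ _ h h'

theorem M_comm {n : ℕ} (a b : UVB n) : Markov ⟨n, a * b⟩ ⟨n, b * a⟩ := by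
  have := Relation.EqvGen.rel _ _ (MarkovBase.conj n (a * b) b)
  rwa [show b * (a * b) * b⁻¹ = b * a by group] at this

theorem incl2_comm (n : ℕ) (x : UVB (n+1)) :
    Commute (incl (n+2) (incl (n+1) x)) (sigma (n+3) (n+2)) ∧
    Commute (incl (n+2) (incl (n+1) x)) (rho (n+3) (n+2)) := by
  have h : x ∈ ((Subgroup.centralizer {sigma (n+3) (n+2), rho (n+3) (n+2)}).comap
      (incl (n+2))).comap (incl (n+1)) := by
    apply mem_of_gens
    intro k h1 h2
    have c1 := rels_far (n+3) k (n+2) (by omega)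
    have c2 := rels_far (n+3) (n+2) k (by omega)
    simp only [Subgroup.mem_comap, incl_sigma (n+1) k h2, incl_rho (n+1) k h2,
      incl_sigma (n+1+1) k (by omega), incl_rho (n+1+1) k (by omega),
      Subgroup.mem_centralizer_iff, Set.mem_insert_iff, Set.mem_singleton_iff]
    constructor
    · rintro _ (rfl | rfl)
      · exact c1.1.eq.symm
      · exact c1.2.2.eq.symm
    · rintro _ (rfl | rfl)
      · exact c2.2.2.eq
      · exact c1.2.1.eq.symm
  simp only [Subgroup.mem_comap, Subgroup.mem_centralizer_iff, Set.mem_insert_iff,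
    Set.mem_singleton_iff] at h
  exact ⟨(h _ (Or.inl rfl)).symm, (h _ (Or.inr rfl)).symm⟩

/-- the abstract form of the exchange argument -/
theorem R1_abs {n : ℕ} (α : UVB (n+1)) (q : UVB (n+2)) (y yt : UVB (n+3)) (z : UVB (n+2))
    (h0 : ∀ β : UVB (n+2), Markov ⟨n+2, β⟩ ⟨n+3, incl (n+2) β * (rho (n+3) (n+2) * y)⟩)
    (h1 : Commute (incl (n+2) (incl (n+1) α)) y)
    (h2 : y * rho (n+3) (n+1) = rho (n+3) (n+1) * yt)
    (h3 : Commute (incl (n+2) q) yt)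
    (h4 : yt * rho (n+3) (n+2) = rho (n+3) (n+2) * incl (n+2) z) :
    Markov ⟨n+2, incl (n+1) α * rho (n+2) (n+1) * q⟩
      ⟨n+2, incl (n+1) α * rho (n+2) (n+1) * q * z⟩ := by
  set β : UVB (n+2) := incl (n+1) α * rho (n+2) (n+1) * q with hβ
  refine M_trans (h0 β) ?_
  rw [← mul_assoc]
  refine M_trans (M_comm _ _) ?_
  have e : y * (incl (n+2) β * rho (n+3) (n+2))
      = incl (n+2) β * rho (n+3) (n+2) * incl (n+2) z := by
    rw [hβ, map_mul, map_mul, incl_rho (n+2) (n+1) (by omega)]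
    calc y * (incl (n+2) (incl (n+1) α) * rho (n+3) (n+1) * incl (n+2) q * rho (n+3) (n+2))
        = (y * incl (n+2) (incl (n+1) α)) * rho (n+3) (n+1) * incl (n+2) q * rho (n+3) (n+2) := by
          group
      _ = incl (n+2) (incl (n+1) α) * (y * rho (n+3) (n+1)) * incl (n+2) q * rho (n+3) (n+2) := by
          rw [← h1.eq]; group
      _ = incl (n+2) (incl (n+1) α) * rho (n+3) (n+1) * (yt * incl (n+2) q) * rho (n+3) (n+2) := by
          rw [h2]; group
      _ = incl (n+2) (incl (n+1) α) * rho (n+3) (n+1) * incl (n+2) q *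
          (yt * rho (n+3) (n+2)) := by
          rw [← h3.eq]; group
      _ = _ := by rw [h4]; group
  rw [e]
  refine M_trans (M_comm _ _) ?_
  rw [← mul_assoc, ← map_mul]
  refine M_trans (M_symm (Relation.EqvGen.rel _ _ (MarkovBase.stabVirt (n+2) (z * β)))) ?_
  exact M_comm _ _

theorem Q_comm {ι : ∀ n, UVB n →* Equiv.Perm (Fin n)} (hι : ∀ n, IsIota n (ι n))
    {n : ℕ} {q : UVB (n+2)} (hq : q ∈ Q ι n) :
    Commute (incl (n+2) q) (Lm ι (n+3) ⟨n, by omega⟩ ⟨n+2, by omega⟩) ∧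
    Commute (incl (n+2) q) (Lm ι (n+3) ⟨n+2, by omega⟩ ⟨n, by omega⟩) := by
  have h : Q ι n ≤ (Subgroup.centralizer {Lm ι (n+3) ⟨n, by omega⟩ ⟨n+2, by omega⟩,
      Lm ι (n+3) ⟨n+2, by omega⟩ ⟨n, by omega⟩}).comap (incl (n+2)) := by
    unfold Q
    rw [Subgroup.closure_le]
    intro x hx
    simp only [SetLike.mem_coe, Subgroup.mem_comap, Subgroup.mem_centralizer_iff,
      Set.mem_insert_iff, Set.mem_singleton_iff]
    rcases hx with rfl | rfl <;> rintro _ (rfl | rfl) <;> rw [Lm_incl hι (by simp [Fin.ext_iff])] <;>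
      refine (Lm_comm hι ?_ ?_ ?_ ?_).eq <;> simp [Fin.ext_iff]
  have h' := h hq
  simp only [Subgroup.mem_comap, Subgroup.mem_centralizer_iff, Set.mem_insert_iff,
    Set.mem_singleton_iff] at h'
  exact ⟨(h' _ (Or.inl rfl)).symm, (h' _ (Or.inr rfl)).symm⟩

theorem Lm_move {ι : ∀ n, UVB n →* Equiv.Perm (Fin n)} (hι : ∀ n, IsIota n (ι n)) (n : ℕ)
    (k : ℕ) {i j i' j' : Fin n} (h : i ≠ j) (hi : ι n (rho n k) i = i')
    (hj : ι n (rho n k) j = j') : Lm ι n i' j' * rho n k = rho n k * Lm ι n i j := by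
  have c := Lm_conj hι h (rho_mem_R n k)
  rw [hi, hj] at c
  rw [← c]; group

theorem R1_step {ι : ∀ n, UVB n →* Equiv.Perm (Fin n)} (hι : ∀ n, IsIota n (ι n))
    {n : ℕ} (α : UVB (n+1)) {q : UVB (n+2)} (hq : q ∈ Q ι n) :
    Markov ⟨n+2, incl (n+1) α * rho (n+2) (n+1) * q⟩
      ⟨n+2, incl (n+1) α * rho (n+2) (n+1) * q *
        Lm ι (n+2) (Fin.last n).castSucc (Fin.last (n+1))⟩ ∧
    Markov ⟨n+2, incl (n+1) α * rho (n+2) (n+1) * q⟩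
      ⟨n+2, incl (n+1) α * rho (n+2) (n+1) * q *
        (Lm ι (n+2) (Fin.last (n+1)) (Fin.last n).castSucc)⁻¹⟩ := by
  obtain ⟨a1, a2⟩ := incl2_comm n α
  obtain ⟨b1, b2⟩ := Q_comm hι hq
  have l1 : Lm ι (n+3) ⟨n+1, by omega⟩ ⟨n+2, by omega⟩ = _ := Lm_adj hι (n+3) (n+1) (by omega)
  have l2 : Lm ι (n+3) ⟨n+2, by omega⟩ ⟨n+1, by omega⟩ = _ := Lm_adj' hι (n+3) (n+1) (by omega)
  have i1 : ι (n+3) (rho (n+3) (n+1)) = Equiv.swap ⟨n, by omega⟩ ⟨n+1, by omega⟩ :=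
    iota_rho hι (n+3) n (by omega)
  have i2 : ι (n+3) (rho (n+3) (n+2)) = Equiv.swap ⟨n+1, by omega⟩ ⟨n+2, by omega⟩ :=
    iota_rho hι (n+3) (n+1) (by omega)
  have p1 : ι (n+3) (rho (n+3) (n+1)) ⟨n, by omega⟩ = ⟨n+1, by omega⟩ := by
    rw [i1, Equiv.swap_apply_left]
  have p2 : ι (n+3) (rho (n+3) (n+1)) ⟨n+2, by omega⟩ = ⟨n+2, by omega⟩ := by
    rw [i1]
    exact Equiv.swap_apply_of_ne_of_ne (Fin.ne_of_val_ne (by simp)) (Fin.ne_of_val_ne (by simp))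
  have p3 : ι (n+3) (rho (n+3) (n+2)) ⟨n, by omega⟩ = ⟨n, by omega⟩ := by
    rw [i2]
    exact Equiv.swap_apply_of_ne_of_ne (Fin.ne_of_val_ne (by simp)) (Fin.ne_of_val_ne (by simp))
  have p4 : ι (n+3) (rho (n+3) (n+2)) ⟨n+1, by omega⟩ = ⟨n+2, by omega⟩ := by
    rw [i2, Equiv.swap_apply_left]
  have hne : (Fin.last n).castSucc ≠ Fin.last (n+1) := Fin.castSucc_ne_last _
  have g1 : incl (n+2) (Lm ι (n+2) (Fin.last n).castSucc (Fin.last (n+1))) =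
      Lm ι (n+3) ⟨n, by omega⟩ ⟨n+1, by omega⟩ := Lm_incl hι hne
  have g2 : incl (n+2) (Lm ι (n+2) (Fin.last (n+1)) (Fin.last n).castSucc) =
      Lm ι (n+3) ⟨n+1, by omega⟩ ⟨n, by omega⟩ := Lm_incl hι hne.symm
  have m1 := Lm_move hι (n+3) (n+1) (Fin.ne_of_val_ne (by simp)) p1 p2
  have m2 := Lm_move hι (n+3) (n+1) (Fin.ne_of_val_ne (by simp)) p2 p1
  have m3 := Lm_move hι (n+3) (n+2) (Fin.ne_of_val_ne (by simp)) p3 p4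
  have m4 := Lm_move hι (n+3) (n+2) (Fin.ne_of_val_ne (by simp)) p4 p3
  constructor
  · refine R1_abs α q (Lm ι (n+3) ⟨n+1, by omega⟩ ⟨n+2, by omega⟩)
      (Lm ι (n+3) ⟨n, by omega⟩ ⟨n+2, by omega⟩) _ ?_ ?_ m1 b1 ?_
    · intro β
      rw [l1, ← mul_assoc (rho _ _), rho_mul_self, one_mul]
      exact Relation.EqvGen.rel _ _ (MarkovBase.stabNeg (n+2) β)
    · rw [l1]
      exact a2.mul_right a1.inv_right
    · rw [g1]; exact m3
  · have inv_move : ∀ a b r : UVB (n+3), a * r = r * b → a⁻¹ * r = r * b⁻¹ := by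
      intro a b r h
      rw [inv_mul_eq_iff_eq_mul, ← mul_assoc, h]; group
    refine R1_abs α q (Lm ι (n+3) ⟨n+2, by omega⟩ ⟨n+1, by omega⟩)⁻¹
      (Lm ι (n+3) ⟨n+2, by omega⟩ ⟨n, by omega⟩)⁻¹ _ ?_ ?_ (inv_move _ _ _ m2) b2.inv_right ?_
    · intro β
      rw [l2, mul_inv_rev, inv_inv, rho_inv, ← mul_assoc (rho _ _), rho_mul_self, one_mul]
      exact Relation.EqvGen.rel _ _ (MarkovBase.stabPos (n+2) β)
    · rw [l2]
      exact (a1.inv_right.mul_right a2).inv_right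
    · rw [map_inv, g2]; exact inv_move _ _ _ m4

theorem R1 {ι : ∀ n, UVB n →* Equiv.Perm (Fin n)} (hι : ∀ n, IsIota n (ι n))
    {n : ℕ} (α : UVB (n+1)) {q : UVB (n+2)} (hq : q ∈ Q ι n) :
    Markov ⟨n+1, α⟩ ⟨n+2, incl (n+1) α * rho (n+2) (n+1) * q⟩ := by
  have hq' := hq
  unfold Q at hq'
  induction hq' using Subgroup.closure_induction_right with
  | one => rw [mul_one]; exact Relation.EqvGen.rel _ _ (MarkovBase.stabVirt (n+1) α)
  | mul_right x hx y hy ih =>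
    refine M_trans (ih hx) ?_
    rw [← mul_assoc]
    rcases hy with rfl | rfl
    · exact (R1_step hι α hx).1
    · have := (R1_step hι α hq).2
      simp only [mul_assoc, mul_inv_cancel, mul_one] at this ⊢
      exact M_symm this
  | mul_inv_cancel x hx y hy ih =>
    refine M_trans (ih hx) ?_
    rw [← mul_assoc]
    rcases hy with rfl | rfl
    · have := (R1_step hι α hq).1
      simp only [mul_assoc, inv_mul_cancel, mul_one] at this ⊢
      exact M_symm this
    · exact (R1_step hι α hx).2

/-! ## Reductions compatible with commutators -/

/-- `Red n α m β`: the braid `α` reduces to `β` compatibly with commutators -/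
def Red (ι : ∀ n, UVB n →* Equiv.Perm (Fin n)) (n : ℕ) (α : UVB n) (m : ℕ) (β : UVB m) : Prop :=
  ∀ γ ∈ ⁅P ι n, P ι n⁆, ∃ δ ∈ ⁅P ι m, P ι m⁆, Markov ⟨n, α * γ⟩ ⟨m, β * δ⟩

theorem red_trans {ι : ∀ n, UVB n →* Equiv.Perm (Fin n)} {n m k : ℕ} {α : UVB n} {β : UVB m}
    {κ : UVB k} (h : Red ι n α m β) (h' : Red ι m β k κ) : Red ι n α k κ := by
  intro γ hγ
  obtain ⟨δ, hδ, e⟩ := h γ hγ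
  obtain ⟨ε, hε, e'⟩ := h' δ hδ
  exact ⟨ε, hε, M_trans e e'⟩

theorem red_conj {ι : ∀ n, UVB n →* Equiv.Perm (Fin n)} {n : ℕ} (α g : UVB n) :
    Red ι n α n (g * α * g⁻¹) := by
  intro γ hγ
  refine ⟨g * γ * g⁻¹, Subgroup.Normal.conj_mem inferInstance _ hγ g, ?_⟩
  have := Relation.EqvGen.rel _ _ (MarkovBase.conj n (α * γ) g)
  rwa [show g * (α * γ) * g⁻¹ = g * α * g⁻¹ * (g * γ * g⁻¹) by group] at this

theorem destab {ι : ∀ n, UVB n →* Equiv.Perm (Fin n)} (hι : ∀ n, IsIota n (ι n))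
    {n : ℕ} (a v v' : UVB (n+1)) (w q : UVB (n+2)) (hv : v ∈ P ι (n+1)) (hw : w ∈ W ι n)
    (hq : q ∈ Q ι n)
    (e : rho (n+2) (n+1) * w * (rho (n+2) (n+1))⁻¹ = incl (n+1) v') :
    Markov ⟨n+2, incl (n+1) a * rho (n+2) (n+1) * (incl (n+1) v * w * q)⟩
      ⟨n+1, v * a * v'⟩ := by
  have hV : incl (n+1) v ∈ V ι n := ⟨v, hv, rfl⟩
  have c : incl (n+1) v * w * q = w * q * incl (n+1) v := by
    rw [(comm_VW hι n _ hV _ hw).eq, mul_assoc, (comm_VQ hι n _ hV _ hq).eq, mul_assoc]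
  rw [c, ← mul_assoc]
  refine M_trans (M_comm _ _) ?_
  have e' : incl (n+1) v * (incl (n+1) a * rho (n+2) (n+1) * (w * q)) =
      incl (n+1) (v * a * v') * rho (n+2) (n+1) * q := by
    rw [map_mul, map_mul, ← e]; group
  rw [e']
  exact M_symm (R1 hι _ hq)

theorem red_destab {ι : ∀ n, UVB n →* Equiv.Perm (Fin n)} (hι : ∀ n, IsIota n (ι n))
    {n : ℕ} (a v v' : UVB (n+1)) (w q : UVB (n+2)) (hv : v ∈ P ι (n+1)) (hw : w ∈ W ι n)
    (hq : q ∈ Q ι n)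
    (e : rho (n+2) (n+1) * w * (rho (n+2) (n+1))⁻¹ = incl (n+1) v') :
    Red ι (n+2) (incl (n+1) a * rho (n+2) (n+1) * (incl (n+1) v * w * q)) (n+1) (v * a * v') := by
  intro γ hγ
  obtain ⟨g, hg, g', hg', w2, hw2, q2, hq2, rfl, e2⟩ := P_comm_form hι n γ hγ
  have hgP : g ∈ P ι (n+1) := (Subgroup.commutator_le_right _ _) hg
  have hV : incl (n+1) g ∈ V ι n := ⟨g, hgP, rfl⟩
  have c : incl (n+1) v * w * q * (incl (n+1) g * w2 * q2) =
      incl (n+1) (v * g) * (w * w2) * (q * q2) := by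
    have c1 := (comm_VW hι n _ hV _ hw).eq
    have c2 := (comm_VQ hι n _ hV _ hq).eq
    have c3 := (comm_WQ hι n _ hw2 _ hq).eq
    calc _ = incl (n+1) v * w * (q * incl (n+1) g) * w2 * q2 := by group
      _ = incl (n+1) v * (w * incl (n+1) g) * (q * w2) * q2 := by rw [← c2]; group
      _ = _ := by rw [← c1, ← c3, map_mul]; group
  have h := destab hι a (v * g) (v' * g') (w * w2) (q * q2) (mul_mem hv hgP) (mul_mem hw hw2)
    (mul_mem hq hq2) (by rw [map_mul, ← e, ← e2]; group)
  refine ⟨((a * v')⁻¹ * g * (a * v')⁻¹⁻¹) * g',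
    mul_mem (Subgroup.Normal.conj_mem inferInstance _ hg _) hg', ?_⟩
  rw [mul_assoc _ _ (incl (n+1) g * w2 * q2), c]
  rwa [show v * g * a * (v' * g') = v * a * v' * ((a * v')⁻¹ * g * (a * v')⁻¹⁻¹ * g') by group] at h

end UVBAux

/-! ## Counting orbits -/
namespace UVBAux

open UVB
open scoped commutatorElement

theorem numOrbits_add {n : ℕ} (π : Equiv.Perm (Fin n)) :
    numOrbits π + π.support.card = n + π.cycleType.card := by
  unfold numOrbits
  have h : (Finset.univ.filter fun x => π x = x).card + π.support.card = n := by
    have := Finset.card_filter_add_card_filter_not (s := (Finset.univ : Finset (Fin n)))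
      (fun x => π x = x)
    rw [Finset.card_univ, Fintype.card_fin] at this
    exact this
  omega

theorem numOrbits_one (n : ℕ) : numOrbits (1 : Equiv.Perm (Fin n)) = n := by
  have := numOrbits_add (1 : Equiv.Perm (Fin n))
  simpa using this

theorem numOrbits_conj {n : ℕ} (π τ : Equiv.Perm (Fin n)) :
    numOrbits (τ * π * τ⁻¹) = numOrbits π := by
  have h1 := numOrbits_add π
  have h2 := numOrbits_add (τ * π * τ⁻¹)
  rw [Equiv.Perm.cycleType_conj, Equiv.Perm.card_support_conj] at h2
  omega

theorem numOrbits_swap {n : ℕ} (π : Equiv.Perm (Fin n)) (x : Fin n) (hx : π x ≠ x) :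
    numOrbits (Equiv.swap x (π x) * π) = numOrbits π + 1 := by
  have hc := Equiv.Perm.isCycle_cycleOf π hx
  have hmem : π.cycleOf x ∈ π.cycleFactorsFinset :=
    Equiv.Perm.cycleOf_mem_cycleFactorsFinset_iff.2 (Equiv.Perm.mem_support.2 hx)
  have hd := (Equiv.Perm.disjoint_mul_inv_of_mem_cycleFactorsFinset hmem).symm
  have hcx : π.cycleOf x x = π x := Equiv.Perm.cycleOf_apply_self π x
  have hπ : π = π.cycleOf x * (π * (π.cycleOf x)⁻¹) := by
    rw [hd.commute.eq]; group
  generalize π.cycleOf x = c at *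
  generalize π * c⁻¹ = g at *
  have hx' : c x ≠ x := by rwa [hcx]
  rw [← hcx]
  have hd' : Equiv.Perm.Disjoint (Equiv.swap x (c x) * c) g := by
    refine hd.mono ?_ le_rfl
    intro y hy
    exact (Equiv.Perm.mem_support_swap_mul_imp_mem_support_ne hy).1
  have h1 := numOrbits_add π
  have h2 := numOrbits_add (Equiv.swap x (c x) * π)
  rw [hπ, ← mul_assoc] at h2
  rw [hπ] at h1
  rw [hd.cycleType_mul, hd.card_support_mul, Multiset.card_add, hc.cycleType] at h1
  rw [hd'.cycleType_mul, hd'.card_support_mul, Multiset.card_add] at h2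
  rw [hπ, ← mul_assoc]
  by_cases hcc : c (c x) = x
  · have e : c = Equiv.swap x (c x) := hc.eq_swap_of_apply_apply_eq_self hx' hcc
    have e1 : Equiv.swap x (c x) * c = 1 := by
      conv_lhs => rw [e]
      simp
    have e2 : c.support.card = 2 := by
      rw [e]
      exact Equiv.Perm.card_support_swap hx'.symm
    rw [e1] at h2 ⊢
    simp only [Equiv.Perm.cycleType_one, Equiv.Perm.support_one, Finset.card_empty,
      Multiset.card_zero, Multiset.card_singleton] at h1 h2
    omega
  · have hc' := hc.swap_mul hx' hcc
    have e2 : (Equiv.swap x (c x) * c).support.card + 1 = c.support.card := by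
      rw [Equiv.Perm.support_swap_mul_eq _ _ hcc, Finset.sdiff_singleton_eq_erase]
      exact Finset.card_erase_add_one (Equiv.Perm.mem_support.2 hx')
    rw [hc'.cycleType] at h2
    simp only [Multiset.card_singleton] at h1 h2
    omega

theorem numOrbits_ext {n : ℕ} (τ : Equiv.Perm (Fin n)) (π : Equiv.Perm (Fin (n+1)))
    (h : ∀ i : Fin n, π i.castSucc = (τ i).castSucc) (hl : π (Fin.last n) = Fin.last n) :
    numOrbits π = numOrbits τ + 1 := by
  let f := finSuccAboveEquiv (Fin.last n)
  have hf : ∀ i, (f i : Fin (n+1)) = i.castSucc := fun i => by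
    simp [f, finSuccAboveEquiv_apply]
  have e : π = τ.extendDomain f := by
    ext y
    congr 1
    rcases Fin.eq_castSucc_or_eq_last y with ⟨i, rfl⟩ | rfl
    · rw [h, ← hf, ← hf, Equiv.Perm.extendDomain_apply_image]
    · rw [hl, Equiv.Perm.extendDomain_apply_not_subtype]
      simp
  have h1 := numOrbits_add τ
  have h2 := numOrbits_add π
  rw [e, Equiv.Perm.cycleType_extendDomain, Equiv.Perm.card_support_extend_domain, ← e] at h2
  omega

theorem numOrbits_incl {ι : ∀ n, UVB n →* Equiv.Perm (Fin n)} (hι : ∀ n, IsIota n (ι n))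
    {n : ℕ} (a : UVB (n+1)) :
    numOrbits (ι (n+2) (incl (n+1) a) * Equiv.swap (Fin.last n).castSucc (Fin.last (n+1))) =
      numOrbits (ι (n+1) a) := by
  have h1 := numOrbits_ext (ι (n+1) a) (ι (n+2) (incl (n+1) a)) (iota_incl hι (n+1) a)
    (iota_incl_last hι (n+1) a)
  set τ := ι (n+2) (incl (n+1) a) with hτ
  have hl : τ (Fin.last (n+1)) = Fin.last (n+1) := iota_incl_last hι (n+1) a
  set π := τ * Equiv.swap (Fin.last n).castSucc (Fin.last (n+1)) with hπ
  have hx : π (Fin.last (n+1)) = τ (Fin.last n).castSucc := by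
    rw [hπ, Equiv.Perm.mul_apply, Equiv.swap_apply_right]
  have h2 := numOrbits_swap π (Fin.last (n+1)) (by
    rw [hx]
    intro hc
    exact Fin.castSucc_ne_last _ (τ.injective (hc.trans hl.symm)))
  have e : Equiv.swap (Fin.last (n+1)) (π (Fin.last (n+1))) * π = τ := by
    rw [hx]
    conv_lhs => enter [1, 1]; rw [← hl]
    rw [hπ, ← mul_assoc, Equiv.swap_mul_eq_mul_swap]
    simp [Equiv.swap_comm, mul_assoc]
  rw [e] at h2
  omega

/-! ## The main induction -/

theorem step {ι : ∀ n, UVB n →* Equiv.Perm (Fin n)} (hι : ∀ n, IsIota n (ι n))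
    {n : ℕ} (α : UVB (n+2)) (hα : ι (n+2) α ≠ 1) :
    ∃ β : UVB (n+1), numOrbits (ι (n+1) β) = numOrbits (ι (n+2) α) ∧
      Red ι (n+2) α (n+1) β := by
  obtain ⟨x, hx⟩ : ∃ x, ι (n+2) α x ≠ x := by
    by_contra! hc
    exact hα (Equiv.ext hc)
  obtain ⟨r, hr, r1, r2⟩ := exists_R2 hι hx.symm
    (i := (Fin.last n).castSucc) (j := Fin.last (n+1)) (Fin.castSucc_ne_last _)
  set α1 := r * α * r⁻¹ with hα1
  have hp : ι (n+2) α1 (Fin.last n).castSucc = Fin.last (n+1) := by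
    rw [hα1, map_mul, map_mul, map_inv, Equiv.Perm.mul_apply, Equiv.Perm.mul_apply,
      Equiv.Perm.inv_eq_iff_eq.2 r1.symm, r2]
  have hsw := iota_rho_last hι n
  obtain ⟨s, hs, hs1⟩ := iota_surj hι (n+2) (ι (n+2) (α1 * rho (n+2) (n+1)))
  have hsl : ι (n+2) s (Fin.last (n+1)) = Fin.last (n+1) := by
    rw [hs1, map_mul, hsw, Equiv.Perm.mul_apply, Equiv.swap_apply_right, hp]
  obtain ⟨a, -, j, hj, rfl⟩ := R_form (n+1) s hs
  have hj0 : j = 0 := by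
    have h1 := iota_form hι (n+1) j hj a
    have h2 := (ι (n+2) (incl (n+1) a * T (n+1) j)).injective (h1.trans hsl.symm)
    have h3 : n + 1 - j = n + 1 := congrArg Fin.val h2
    omega
  subst hj0
  have ht : T (n+1) 0 = 1 := rfl
  rw [ht, mul_one] at hs1
  have hp0 : rho (n+2) (n+1) * (incl (n+1) a)⁻¹ * α1 ∈ P ι (n+2) := by
    rw [MonoidHom.mem_ker, map_mul, map_mul, map_inv, hs1, map_mul]
    group
  obtain ⟨v, hv, v', hv', w, hw, q, hq, e1, e2⟩ := P_form hι n _ hp0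
  have e3 : α1 = incl (n+1) a * rho (n+2) (n+1) * (incl (n+1) v * w * q) := by
    rw [← e1]
    simp only [← mul_assoc]
    rw [mul_assoc (incl (n+1) a), rho_mul_self]
    group
  refine ⟨v * a * v', ?_, ?_⟩
  · have hv1 : ι (n+1) v = 1 := hv
    have hv2 : ι (n+1) v' = 1 := hv'
    rw [map_mul, map_mul, hv1, hv2, one_mul, mul_one, ← numOrbits_incl hι, hs1, map_mul, hsw,
      mul_assoc, Equiv.swap_mul_self, mul_one, hα1, map_mul, map_mul, map_inv, numOrbits_conj]
  · refine red_trans (red_conj α r) ?_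
    rw [← hα1, e3]
    exact red_destab hι a v v' w q hv hw hq e2

theorem main_induction {ι : ∀ n, UVB n →* Equiv.Perm (Fin n)} (hι : ∀ n, IsIota n (ι n)) (n : ℕ) :
    ∀ α : UVB n, ∃ (m : ℕ) (β : UVB m), m = numOrbits (ι n α) ∧ β ∈ P ι m ∧
      Red ι n α m β ∧ (α ∈ P ι n → (⟨m, β⟩ : Σ n, UVB n) = ⟨n, α⟩) := by
  have pure : ∀ (n : ℕ) (α : UVB n), ι n α = 1 →
      ∃ (m : ℕ) (β : UVB m), m = numOrbits (ι n α) ∧ β ∈ P ι m ∧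
      Red ι n α m β ∧ (α ∈ P ι n → (⟨m, β⟩ : Σ n, UVB n) = ⟨n, α⟩) := by
    intro n α h
    exact ⟨n, α, by rw [h, numOrbits_one], h, fun γ hγ => ⟨γ, hγ, M_refl _⟩, fun _ => rfl⟩
  induction n with
  | zero => exact fun α => pure 0 α (Subsingleton.elim _ _)
  | succ n ih =>
    intro α
    by_cases h : ι (n+1) α = 1
    · exact pure _ α h
    rcases n with _ | n
    · exact absurd (Equiv.ext fun x => Fin.ext (by
        have := (ι (0+1) α x).isLt
        have := ((1 : Equiv.Perm (Fin (0+1))) x).isLt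
        omega)) h
    obtain ⟨β, hβ, hr⟩ := step hι α h
    obtain ⟨m, κ, hm, hκ, hr', -⟩ := ih β
    exact ⟨m, κ, hm.trans hβ, hκ, red_trans hr hr', fun hc => absurd hc h⟩

theorem final (ι : ∀ n, UVB n →* Equiv.Perm (Fin n)) (hι : ∀ n, IsIota n (ι n)) :
    ∃ f : (Σ n, UVB n) → (Σ n, UVB n),
      (∀ n (α : UVB n),
        (f ⟨n, α⟩).1 = numOrbits (ι n α) ∧
        (f ⟨n, α⟩).2 ∈ (ι (f ⟨n, α⟩).1).ker ∧
        Markov ⟨n, α⟩ (f ⟨n, α⟩) ∧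
        (α ∈ (ι n).ker → f ⟨n, α⟩ = ⟨n, α⟩)) ∧
      (∀ n (β γ : UVB n), γ ∈ ⁅(ι n).ker, (ι n).ker⁆ →
        ∃ (h : (f ⟨n, β * γ⟩).1 = (f ⟨n, β⟩).1) (δ : UVB (f ⟨n, β⟩).1),
          δ ∈ ⁅(ι (f ⟨n, β⟩).1).ker, (ι (f ⟨n, β⟩).1).ker⁆ ∧
          cast (congrArg UVB h) (f ⟨n, β * γ⟩).2 = (f ⟨n, β⟩).2 * δ) := by
  have cle : ∀ m, ⁅P ι m, P ι m⁆ ≤ P ι m := fun m => Subgroup.commutator_le_right _ _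
  choose M B hM hB hR hK using main_induction hι
  let rep : ∀ n, UVB n → UVB n := fun n x =>
    Quotient.out (QuotientGroup.mk x : UVB n ⧸ ⁅P ι n, P ι n⁆)
  have hrep : ∀ n x, ∃ γ ∈ ⁅P ι n, P ι n⁆, x = rep n x * γ := by
    intro n x
    obtain ⟨h, hh⟩ := QuotientGroup.mk_out_eq_mul ⁅P ι n, P ι n⁆ x
    refine ⟨(h : UVB n)⁻¹, inv_mem h.2, ?_⟩
    show x = Quotient.out (QuotientGroup.mk x : UVB n ⧸ ⁅P ι n, P ι n⁆) * _
    rw [hh]; group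
  have hrep2 : ∀ n x, ∀ γ ∈ ⁅P ι n, P ι n⁆, rep n (x * γ) = rep n x := by
    intro n x γ hγ
    show Quotient.out (QuotientGroup.mk (x * γ) : UVB n ⧸ ⁅P ι n, P ι n⁆) = Quotient.out _
    rw [QuotientGroup.mk_mul_of_mem x hγ]
  have hι1 : ∀ n x, ι n (rep n x) = ι n x := by
    intro n x
    obtain ⟨γ, hγ, e⟩ := hrep n x
    have h1 : ι n γ = 1 := cle n hγ
    conv_rhs => rw [e, map_mul, h1, mul_one]
  have hδ : ∀ n x, ∃ δ ∈ ⁅P ι (M n (rep n x)), P ι (M n (rep n x))⁆,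
      Markov ⟨n, x⟩ ⟨M n (rep n x), B n (rep n x) * δ⟩ ∧
      (x ∈ P ι n → (⟨M n (rep n x), B n (rep n x) * δ⟩ : Σ n, UVB n) = ⟨n, x⟩) := by
    intro n x
    obtain ⟨γ, hγ, e⟩ := hrep n x
    by_cases hx : x ∈ P ι n
    · have hr : rep n x ∈ P ι n := by
        rw [MonoidHom.mem_ker, hι1]; exact hx
      have hk := hK n _ hr
      have key : ∀ (m : ℕ) (b : UVB m), (⟨m, b⟩ : Σ n, UVB n) = ⟨n, rep n x⟩ →
          ∃ δ ∈ ⁅P ι m, P ι m⁆, (⟨m, b * δ⟩ : Σ n, UVB n) = ⟨n, x⟩ := by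
        intro m b h
        obtain ⟨rfl, h⟩ := Sigma.mk.inj_iff.1 h
        rw [heq_iff_eq] at h
        subst h
        exact ⟨γ, hγ, by rw [← e]⟩
      obtain ⟨δ, h1, h2⟩ := key _ _ hk
      exact ⟨δ, h1, by rw [h2]; exact M_refl _, fun _ => h2⟩
    · obtain ⟨δ, h1, h2⟩ := hR n (rep n x) γ hγ
      rw [← e] at h2
      exact ⟨δ, h1, h2, fun h => absurd h hx⟩
  choose D hD hD1 hD2 using hδ
  refine ⟨fun x => ⟨M x.1 (rep x.1 x.2), B x.1 (rep x.1 x.2) * D x.1 x.2⟩, ?_, ?_⟩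
  · intro n α
    refine ⟨?_, ?_, hD1 n α, hD2 n α⟩
    · show M n (rep n α) = _
      rw [hM, hι1]
    · exact mul_mem (hB n _) (cle _ (hD n α))
  · intro n β γ hγ
    have key : ∀ r r' : UVB n, r = r' → ∀ d ∈ ⁅P ι (M n r), P ι (M n r)⁆,
        ∀ d' ∈ ⁅P ι (M n r'), P ι (M n r')⁆,
        ∃ (h : M n r = M n r') (δ : UVB (M n r')), δ ∈ ⁅P ι (M n r'), P ι (M n r')⁆ ∧
          cast (congrArg UVB h) (B n r * d) = B n r' * d' * δ := by
      rintro r _ rfl d hd d' hd'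
      exact ⟨rfl, d'⁻¹ * d, mul_mem (inv_mem hd') hd, by rw [cast_eq]; group⟩
    exact key _ _ (hrep2 n β γ hγ) _ (hD n (β * γ)) _ (hD n β)

end UVBAux

/-! ## Statement 12 -/

/-- Remark 2 of the paper.  There is a map ϱ* as in the main
construction (each `α ∈ UVB n` is sent to a pure braid `ϱ*(α) ∈ UVP m`, fused Markov
equivalent to α, with `m` the number of orbits of ι(α), and ϱ*(α) = α for pure α)
which moreover satisfies: if `α = βγ` with `γ ∈ [UVP n, UVP n]`, then
`ϱ*(α) = ϱ*(β)·δ` for some `δ ∈ [UVP m, UVP m]`. -/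
theorem statement12 (ι : ∀ n, UVB n →* Equiv.Perm (Fin n)) (hι : ∀ n, IsIota n (ι n)) :
    ∃ f : (Σ n, UVB n) → (Σ n, UVB n),
      (∀ n, 2 ≤ n → ∀ α : UVB n,
        (f ⟨n, α⟩).1 = numOrbits (ι n α) ∧
        (f ⟨n, α⟩).2 ∈ (ι (f ⟨n, α⟩).1).ker ∧
        Markov ⟨n, α⟩ (f ⟨n, α⟩) ∧
        (α ∈ (ι n).ker → f ⟨n, α⟩ = ⟨n, α⟩)) ∧
      (∀ n, 2 ≤ n → ∀ (β γ : UVB n), γ ∈ ⁅(ι n).ker, (ι n).ker⁆ →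
        ∃ (h : (f ⟨n, β * γ⟩).1 = (f ⟨n, β⟩).1) (δ : UVB (f ⟨n, β⟩).1),
          δ ∈ ⁅(ι (f ⟨n, β⟩).1).ker, (ι (f ⟨n, β⟩).1).ker⁆ ∧
          cast (congrArg UVB h) (f ⟨n, β * γ⟩).2 = (f ⟨n, β⟩).2 * δ) := by
  obtain ⟨f, h1, h2⟩ := UVBAux.final ι hι
  exact ⟨f, fun n _ => h1 n, fun n _ => h2 n⟩
end

section
/- Let n ≥ 2. The map sending a pure braid α ∈ UVP_n to its image in the abelianization UVP_n/[UVP_n, UVP_n] induces a well-defined bijection from the set of fused Markov equivalence classes of elements of UVP_n onto the set of orbits of the action of S_n on UVP_n/[UVP_n, UVP_n] induced by conjugation by s(π), π ∈ S_n. (This is the classification of n-component fused links: they are in one-to-one correspondence with elements of UVP_n/[UVP_n, UVP_n] up to conjugation by elements of S_n ≤ UVB_n.) -/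
namespace UVBProof
open UVB Equiv

/-! ### The Coxeter presentation of the symmetric group -/

section Coxeter
variable {G : Type*} [Group G]

/-- `desc x m k = x (m-1) * ⋯ * x k` (empty for `k ≥ m`). -/
def desc (x : ℕ → G) : ℕ → ℕ → G
  | 0, _ => 1
  | m + 1, k => if k ≤ m then x m * desc x m k else 1

lemma desc_of_le (x : ℕ → G) {m k : ℕ} (h : m ≤ k) : desc x m k = 1 := by
  cases m with
  | zero => rfl
  | succ m => rw [desc, if_neg (by omega)]

lemma desc_succ (x : ℕ → G) {m k : ℕ} (h : k ≤ m) : desc x (m + 1) k = x m * desc x m k := by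
  rw [desc, if_pos h]

lemma desc_low (x : ℕ → G) {m k : ℕ} (h : k < m) : desc x m k = desc x m (k + 1) * x k := by
  induction m with
  | zero => omega
  | succ m ih =>
    rcases Nat.lt_or_ge k m with h' | h'
    · rw [desc_succ x (by omega), ih h', desc_succ x (by omega), mul_assoc]
    · have : k = m := by omega
      subst this
      rw [desc_succ x le_rfl, desc_of_le x le_rfl, desc_of_le x le_rfl]; simp

lemma desc_comm (x : ℕ → G) {N : ℕ} (hc : ∀ i j, i + 2 ≤ j → j < N → x i * x j = x j * x i)
    {m k l : ℕ} (hm : m ≤ N) (hl : l + 2 ≤ k) : desc x m k * x l = x l * desc x m k := by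
  induction m with
  | zero => simp [desc]
  | succ m ih =>
    rcases Nat.lt_or_ge m k with h' | h'
    · rw [desc_of_le x (by omega)]; simp
    · rw [desc_succ x (by omega), mul_assoc, ih (by omega), ← mul_assoc,
        ← hc l m (by omega) (by omega), mul_assoc]

lemma desc_comm_high (x : ℕ → G) {N : ℕ}
    (hc : ∀ i j, i + 2 ≤ j → j < N → x i * x j = x j * x i)
    {m k l : ℕ} (hl : l < N) (hm : m + 1 ≤ l) : desc x m k * x l = x l * desc x m k := by
  induction m with
  | zero => simp [desc]
  | succ m ih =>
    rcases Nat.lt_or_ge m k with h' | h'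
    · rw [desc_of_le x (by omega)]; simp
    · rw [desc_succ x (by omega), mul_assoc, ih (by omega), ← mul_assoc,
        hc m l (by omega) (by omega), mul_assoc]

lemma desc_shift (x : ℕ → G) {N : ℕ}
    (hb : ∀ i, i + 1 < N → x i * x (i + 1) * x i = x (i + 1) * x i * x (i + 1))
    (hc : ∀ i j, i + 2 ≤ j → j < N → x i * x j = x j * x i)
    {m k l : ℕ} (hm : m ≤ N) (hkl : k ≤ l) (hl : l + 1 < m) :
    desc x m k * x (l + 1) = x l * desc x m k := by
  induction m with
  | zero => omega
  | succ m ih =>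
    rcases Nat.lt_or_ge (l + 1) m with h' | h'
    · rw [desc_succ x (by omega), mul_assoc, ih (by omega) h', ← mul_assoc,
        ← hc l m (by omega) (by omega), mul_assoc]
    · have : m = l + 1 := by omega
      subst this
      rw [desc_succ x (by omega), desc_succ x (by omega), mul_assoc, mul_assoc,
        desc_comm_high x hc (by omega) le_rfl, ← mul_assoc, ← mul_assoc, ← hb l (by omega)]
      simp only [mul_assoc]

lemma cox_cosets (x : ℕ → G) (m : ℕ) (h2 : ∀ i, i < m + 1 → x i * x i = 1)
    (hb : ∀ i, i + 1 < m + 1 → x i * x (i + 1) * x i = x (i + 1) * x i * x (i + 1))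
    (hc : ∀ i j, i + 2 ≤ j → j < m + 1 → x i * x j = x j * x i) (g : G)
    (hg : g ∈ Subgroup.closure {y | ∃ i, i < m + 1 ∧ y = x i}) :
    ∃ h ∈ Subgroup.closure {y | ∃ i, i < m ∧ y = x i}, ∃ k, k ≤ m + 1 ∧
      g = h * desc x (m + 1) k := by
  have step : ∀ a : G, (∃ h ∈ Subgroup.closure {y | ∃ i, i < m ∧ y = x i}, ∃ k, k ≤ m + 1 ∧
      a = h * desc x (m + 1) k) → ∀ l, l < m + 1 →
      ∃ h ∈ Subgroup.closure {y | ∃ i, i < m ∧ y = x i}, ∃ k, k ≤ m + 1 ∧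
      a * x l = h * desc x (m + 1) k := by
    rintro a ⟨h, hh, k, hk, rfl⟩ l hl
    rcases lt_trichotomy (l + 1) k with h1 | h1 | h1
    · refine ⟨h * x l, mul_mem hh (Subgroup.subset_closure ⟨l, by omega, rfl⟩), k, hk, ?_⟩
      rw [mul_assoc, desc_comm x hc le_rfl (by omega), mul_assoc]
    · subst h1
      exact ⟨h, hh, l, by omega, by rw [desc_low x hl, mul_assoc]⟩
    · rcases Nat.lt_or_ge k l with h3 | h3
      · obtain ⟨l, rfl⟩ : ∃ l', l = l' + 1 := ⟨l - 1, by omega⟩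
        refine ⟨h * x l, mul_mem hh (Subgroup.subset_closure ⟨l, by omega, rfl⟩), k, hk, ?_⟩
        rw [mul_assoc, desc_shift x hb hc le_rfl (by omega) (by omega), mul_assoc]
      · have : k = l := by omega
        subst this
        refine ⟨h, hh, k + 1, by omega, ?_⟩
        rw [desc_low x hl, mul_assoc, mul_assoc, h2 k hl, mul_one]
  induction hg using Subgroup.closure_induction_right with
  | one => exact ⟨1, one_mem _, m + 1, le_rfl, by rw [desc_of_le x le_rfl, mul_one]⟩
  | mul_right a ha y hy ih =>
    obtain ⟨i, hi, rfl⟩ := hy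
    exact step a ih i hi
  | mul_inv_cancel a ha y hy ih =>
    obtain ⟨i, hi, rfl⟩ := hy
    rw [inv_eq_of_mul_eq_one_left (h2 i hi)]
    exact step a ih i hi

lemma cox_desc_apply (k : ℕ) : ∀ m, k ≤ m →
    desc (fun i => swap i (i + 1) : ℕ → Perm ℕ) m k k = m := by
  intro m hk
  induction m, hk using Nat.le_induction with
  | base => rw [desc_of_le _ le_rfl]; rfl
  | succ m hm ih => rw [desc_succ _ hm, Perm.mul_apply, ih, swap_apply_left]

lemma cox_fix (m : ℕ) (h : Perm ℕ)
    (hh : h ∈ Subgroup.closure {y | ∃ i, i < m ∧ y = (swap i (i + 1) : Perm ℕ)}) (j : ℕ)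
    (hj : m < j) : h j = j := by
  have : Subgroup.closure {y | ∃ i, i < m ∧ y = (swap i (i + 1) : Perm ℕ)} ≤
      MulAction.stabilizer (Perm ℕ) j := by
    rw [Subgroup.closure_le]
    rintro _ ⟨i, hi, rfl⟩
    exact swap_apply_of_ne_of_ne (by omega) (by omega)
  exact this hh

lemma desc_map {H : Type*} [Group H] (φ : G →* H) (x : ℕ → G) (m k : ℕ) :
    φ (desc x m k) = desc (fun i => φ (x i)) m k := by
  induction m with
  | zero => simp [desc]
  | succ m ih => simp only [desc]; split_ifs <;> simp [ih]

lemma swap_braid (i : ℕ) : (swap i (i + 1) * swap (i + 1) (i + 1 + 1) * swap i (i + 1) : Perm ℕ) =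
    swap (i + 1) (i + 1 + 1) * swap i (i + 1) * swap (i + 1) (i + 1 + 1) := by
  ext j
  simp only [Perm.mul_apply, swap_apply_def]
  split_ifs <;> omega

lemma swap_far (i j : ℕ) (h : i + 2 ≤ j) : (swap i (i + 1) * swap j (j + 1) : Perm ℕ) =
    swap j (j + 1) * swap i (i + 1) := by
  ext k
  simp only [Perm.mul_apply, swap_apply_def]
  split_ifs <;> omega

lemma cox_inj (r : ℕ → G) (m : ℕ) (h2 : ∀ i, i < m → r i * r i = 1)
    (hb : ∀ i, i + 1 < m → r i * r (i + 1) * r i = r (i + 1) * r i * r (i + 1))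
    (hc : ∀ i j, i + 2 ≤ j → j < m → r i * r j = r j * r i) (g : G)
    (hg : (g, (1 : Perm ℕ)) ∈ Subgroup.closure
      {y | ∃ i, i < m ∧ y = ((r i, swap i (i + 1)) : G × Perm ℕ)}) : g = 1 := by
  induction m with
  | zero =>
    have : {y | ∃ i, i < 0 ∧ y = ((r i, swap i (i + 1)) : G × Perm ℕ)} = ∅ := by
      ext; simp
    rw [this, Subgroup.closure_empty, Subgroup.mem_bot] at hg
    exact (Prod.ext_iff.1 hg).1
  | succ m ih =>
    set x : ℕ → G × Perm ℕ := fun i => (r i, swap i (i + 1)) with hx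
    obtain ⟨h, hh, k, hk, e⟩ := cox_cosets x m
      (fun i hi => Prod.ext (h2 i hi) (by simp [hx]))
      (fun i hi => Prod.ext (hb i hi) (swap_braid i))
      (fun i j hi hj => Prod.ext (hc i j hi hj) (swap_far i j hi)) _ hg
    have hk' : k = m + 1 := by
      have e2 := congrArg (MonoidHom.snd G (Perm ℕ)) e
      rw [map_mul, desc_map] at e2
      have e3 := congrArg (fun p : Perm ℕ => p k) e2
      have hfix : (MonoidHom.snd G (Perm ℕ)) h (m + 1) = m + 1 := by
        apply cox_fix m _ _ _ (Nat.lt_succ_self m)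
        have := Subgroup.mem_map_of_mem (MonoidHom.snd G (Perm ℕ)) hh
        rw [MonoidHom.map_closure] at this
        refine Subgroup.closure_mono ?_ this
        rintro _ ⟨_, ⟨i, hi, rfl⟩, rfl⟩
        exact ⟨i, hi, rfl⟩
      have h4 := cox_desc_apply k (m + 1) hk
      simp only [hx, MonoidHom.coe_snd, Perm.mul_apply, Perm.one_apply] at e3 hfix
      rw [h4, hfix] at e3
      exact e3
    rw [hk', desc_of_le x le_rfl, mul_one] at e
    rw [← e] at hh
    exact ih (fun i hi => h2 i (by omega)) (fun i hi => hb i (by omega))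
      (fun i j hi hj => hc i j hi (by omega)) hh

theorem coxeter (r : ℕ → G) (m : ℕ) (h2 : ∀ i, i < m → r i * r i = 1)
    (hb : ∀ i, i + 1 < m → r i * r (i + 1) * r i = r (i + 1) * r i * r (i + 1))
    (hc : ∀ i j, i + 2 ≤ j → j < m → r i * r j = r j * r i) :
    ∃ s : Perm (Fin (m + 1)) →* G, ∀ i : Fin m, s (swap i.castSucc i.succ) = r i := by
  set H : Subgroup (G × Perm (Fin (m + 1))) := Subgroup.closure
    (Set.range fun i : Fin m => ((r i, swap i.castSucc i.succ) : G × Perm (Fin (m + 1)))) with hH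
  let p : H →* Perm (Fin (m + 1)) := (MonoidHom.snd G _).comp H.subtype
  have hinj : Function.Injective p := by
    rw [injective_iff_map_eq_one]
    rintro ⟨⟨g, π⟩, hg⟩ h1
    have hπ : π = 1 := h1
    subst hπ
    let E : Perm (Fin (m + 1)) →* Perm ℕ := Perm.viaEmbeddingHom Fin.valEmbedding
    have hE : ∀ i : Fin m, E (swap i.castSucc i.succ) = swap (i : ℕ) (i + 1) := by
      intro i
      ext k
      by_cases hk : k < m + 1
      · have := Perm.viaEmbedding_apply (swap i.castSucc i.succ) Fin.valEmbedding ⟨k, hk⟩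
        have e1 : Fin.valEmbedding (⟨k, hk⟩ : Fin (m + 1)) = k := rfl
        rw [e1] at this
        change Perm.viaEmbedding _ _ k = _
        rw [this]
        simp only [swap_apply_def, Fin.ext_iff, Fin.valEmbedding_apply]
        split_ifs <;> simp_all
      · change Perm.viaEmbedding _ _ k = _
        rw [Perm.viaEmbedding_apply_of_notMem, swap_apply_of_ne_of_ne] <;> [omega; omega; skip]
        rintro ⟨y, hy⟩
        have := y.isLt
        simp at hy
        omega
    have : g = 1 := by
      apply cox_inj r m h2 hb hc
      have := Subgroup.mem_map_of_mem ((MonoidHom.id G).prodMap E) hg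
      rw [hH, MonoidHom.map_closure] at this
      have e : ((MonoidHom.id G).prodMap E) (g, 1) = (g, 1) := by simp
      rw [e] at this
      refine Subgroup.closure_mono ?_ this
      rintro _ ⟨_, ⟨i, rfl⟩, rfl⟩
      exact ⟨i, i.isLt, by simp [hE]⟩
    subst this
    rfl
  have hsurj : Function.Surjective p := by
    rw [← MonoidHom.range_eq_top, eq_top_iff]
    intro π _
    have hπ : π ∈ Submonoid.closure (Set.range fun i : Fin m ↦ swap i.castSucc i.succ) := by
      rw [Perm.mclosure_swap_castSucc_succ]; trivial
    have : Submonoid.closure (Set.range fun i : Fin m ↦ swap i.castSucc i.succ) ≤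
        p.range.toSubmonoid := by
      rw [Submonoid.closure_le]
      rintro _ ⟨i, rfl⟩
      exact ⟨⟨_, Subgroup.subset_closure ⟨i, rfl⟩⟩, rfl⟩
    exact this hπ
  let e := MulEquiv.ofBijective p ⟨hinj, hsurj⟩
  refine ⟨(MonoidHom.fst G _).comp (H.subtype.comp e.symm.toMonoidHom), fun i => ?_⟩
  have : e.symm (swap i.castSucc i.succ) =
      ⟨((r i, swap i.castSucc i.succ) : G × Perm (Fin (m + 1))),
        Subgroup.subset_closure ⟨i, rfl⟩⟩ := by
    rw [MulEquiv.symm_apply_eq]; rfl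
  simp [this]

end Coxeter
end UVBProof

namespace UVBProof
open UVB Equiv

/-! ### Generators and relations with 0-based indices -/

def S (m i : ℕ) : UVB m := sigma m (i + 1)
def R (m i : ℕ) : UVB m := rho m (i + 1)

lemma S_mk {m i : ℕ} (h : i < m - 1) :
    S m i = PresentedGroup.mk (uvbRels m) (UVBGen.sg ⟨i, h⟩) := by
  unfold S sigma
  rw [dif_pos (by omega)]
  rfl

lemma R_mk {m i : ℕ} (h : i < m - 1) :
    R m i = PresentedGroup.mk (uvbRels m) (UVBGen.rg ⟨i, h⟩) := by
  unfold R rho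
  rw [dif_pos (by omega)]
  rfl

lemma mk_eq {m : ℕ} {a b : FreeGroup (UVBGen m)} (h : a * b⁻¹ ∈ uvbRels m) :
    PresentedGroup.mk (uvbRels m) a = PresentedGroup.mk (uvbRels m) b := by
  have h1 : PresentedGroup.mk (uvbRels m) (a * b⁻¹) = 1 :=
    (QuotientGroup.eq_one_iff _).mpr (Subgroup.subset_normalClosure h)
  rwa [map_mul, map_inv, mul_inv_eq_one] at h1

section rels
variable {m : ℕ}

lemma SSS {i : ℕ} (h : i + 2 < m) :
    S m i * S m (i + 1) * S m i = S m (i + 1) * S m i * S m (i + 1) := by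
  rw [S_mk (i := i) (by omega), S_mk (i := i + 1) (by omega)]
  simp only [← map_mul]
  exact mk_eq (Or.inl ⟨_, _, rfl, Or.inl rfl⟩)

lemma RRR {i : ℕ} (h : i + 2 < m) :
    R m i * R m (i + 1) * R m i = R m (i + 1) * R m i * R m (i + 1) := by
  rw [R_mk (i := i) (by omega), R_mk (i := i + 1) (by omega)]
  simp only [← map_mul]
  exact mk_eq (Or.inl ⟨_, _, rfl, Or.inr (Or.inl rfl)⟩)

lemma RRS {i : ℕ} (h : i + 2 < m) :
    R m i * R m (i + 1) * S m i = S m (i + 1) * R m i * R m (i + 1) := by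
  rw [R_mk (i := i) (by omega), R_mk (i := i + 1) (by omega), S_mk (i := i) (by omega),
    S_mk (i := i + 1) (by omega)]
  simp only [← map_mul]
  exact mk_eq (Or.inl ⟨_, _, rfl, Or.inr (Or.inr (Or.inl rfl))⟩)

lemma RSS {i : ℕ} (h : i + 2 < m) :
    R m i * S m (i + 1) * S m i = S m (i + 1) * S m i * R m (i + 1) := by
  rw [R_mk (i := i) (by omega), R_mk (i := i + 1) (by omega), S_mk (i := i) (by omega),
    S_mk (i := i + 1) (by omega)]
  simp only [← map_mul]
  exact mk_eq (Or.inl ⟨_, _, rfl, Or.inr (Or.inr (Or.inr (Or.inl rfl)))⟩)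

lemma RSS' {i : ℕ} (h : i + 2 < m) :
    R m (i + 1) * S m i * S m (i + 1) = S m i * S m (i + 1) * R m i := by
  rw [R_mk (i := i) (by omega), R_mk (i := i + 1) (by omega), S_mk (i := i) (by omega),
    S_mk (i := i + 1) (by omega)]
  simp only [← map_mul]
  exact mk_eq (Or.inl ⟨_, _, rfl, Or.inr (Or.inr (Or.inr (Or.inr rfl)))⟩)

lemma farSS {i j : ℕ} (h : i + 2 ≤ j) (hj : j + 1 < m) : Commute (S m i) (S m j) := by
  rw [S_mk (i := i) (by omega), S_mk (i := j) (by omega)]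
  simp only [Commute, SemiconjBy, ← map_mul]
  exact mk_eq (Or.inr (Or.inl ⟨_, _, Or.inl h, Or.inl rfl⟩))

lemma farRR {i j : ℕ} (h : i + 2 ≤ j) (hj : j + 1 < m) : Commute (R m i) (R m j) := by
  rw [R_mk (i := i) (by omega), R_mk (i := j) (by omega)]
  simp only [Commute, SemiconjBy, ← map_mul]
  exact mk_eq (Or.inr (Or.inl ⟨_, _, Or.inl h, Or.inr (Or.inl rfl)⟩))

lemma farSR {i j : ℕ} (h : i + 2 ≤ j) (hj : j + 1 < m) : Commute (S m i) (R m j) := by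
  rw [S_mk (i := i) (by omega), R_mk (i := j) (by omega)]
  simp only [Commute, SemiconjBy, ← map_mul]
  exact mk_eq (Or.inr (Or.inl ⟨_, _, Or.inl h, Or.inr (Or.inr rfl)⟩))

lemma farRS {i j : ℕ} (h : i + 2 ≤ j) (hj : j + 1 < m) : Commute (R m i) (S m j) := by
  rw [R_mk (i := i) (by omega), S_mk (i := j) (by omega)]
  refine Commute.symm ?_
  simp only [Commute, SemiconjBy, ← map_mul]
  exact mk_eq (Or.inr (Or.inl ⟨_, _, Or.inr h, Or.inr (Or.inr rfl)⟩))

lemma RR {i : ℕ} (h : i + 1 < m) : R m i * R m i = 1 := by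
  rw [R_mk (i := i) (by omega), ← map_mul]
  exact (QuotientGroup.eq_one_iff _).mpr (Subgroup.subset_normalClosure
    (Or.inr (Or.inr ⟨_, rfl⟩)))

lemma R_inv {i : ℕ} (h : i + 1 < m) : (R m i)⁻¹ = R m i := inv_eq_of_mul_eq_one_left (RR h)

end rels

/-- the adjacent transposition of `i`, `i+1` -/
def sw (m i : ℕ) (h : i + 1 < m) : Perm (Fin m) := swap ⟨i, by omega⟩ ⟨i + 1, h⟩

lemma perm_ind {m : ℕ} {C : Perm (Fin m) → Prop} (one : C 1)
    (mul : ∀ π i h, C π → C (sw m i h * π)) (π : Perm (Fin m)) : C π := by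
  cases m with
  | zero => rwa [Subsingleton.elim π 1]
  | succ m =>
    have hπ : π ∈ Submonoid.closure (Set.range fun i : Fin m ↦ swap i.castSucc i.succ) := by
      rw [Perm.mclosure_swap_castSucc_succ]; trivial
    induction hπ using Submonoid.closure_induction_left with
    | one => exact one
    | mul_left x hx y hy ih =>
      obtain ⟨i, rfl⟩ := hx
      exact mul y i (by omega) ih

theorem exists_sec (m : ℕ) : ∃ s : Perm (Fin m) →* UVB m, ∀ i h, s (sw m i h) = R m i := by
  cases m with
  | zero => exact ⟨1, fun i h => by omega⟩
  | succ m =>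
    obtain ⟨s, hs⟩ := coxeter (R (m + 1)) m (fun i hi => RR (by omega))
      (fun i hi => RRR (by omega)) (fun i j hi hj => farRR hi (by omega))
    exact ⟨s, fun i h => hs ⟨i, by omega⟩⟩

noncomputable def sec (m : ℕ) : Perm (Fin m) →* UVB m := (exists_sec m).choose

lemma sec_sw (m i : ℕ) (h : i + 1 < m) : sec m (sw m i h) = R m i := (exists_sec m).choose_spec i h

lemma sec_unique {m : ℕ} {s : Perm (Fin m) →* UVB m} (hs : ∀ i h, s (sw m i h) = R m i) :
    s = sec m := by
  ext π
  refine perm_ind (C := fun π => s π = sec m π) (by simp) (fun π i h ih => ?_) π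
  rw [map_mul, map_mul, ih, hs, sec_sw]

def L (m k : ℕ) : UVB m := R m k * (S m k)⁻¹

lemma sec_comm {m : ℕ} (π : Perm (Fin (m + 2))) (h0 : π 0 = 0) (h1 : π 1 = 1) :
    Commute (sec _ π) (L (m + 2) 0) := by
  have key : ∀ e : Perm (Fin m), ∀ π : Perm (Fin (m + 2)), π 0 = 0 → π 1 = 1 →
      (∀ x, π x.succ.succ = (e x).succ.succ) → Commute (sec _ π) (L (m + 2) 0) := by
    intro e
    refine perm_ind (C := fun e => ∀ π : Perm (Fin (m + 2)), π 0 = 0 → π 1 = 1 →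
      (∀ x, π x.succ.succ = (e x).succ.succ) → Commute (sec _ π) (L (m + 2) 0)) ?_ ?_ e
    · intro π h0 h1 hx
      have : π = 1 := by
        ext x
        refine Fin.cases ?_ (fun x => Fin.cases ?_ (fun x => ?_) x) x
        · rw [h0]; rfl
        · have : (Fin.succ 0 : Fin (m + 2)) = 1 := rfl
          rw [this, h1]; rfl
        · rw [hx]; rfl
      rw [this, map_one]
      exact Commute.one_left _
    · intro e i h ih π h0 h1 hx
      have hsw : ∀ y : Fin m, sw (m + 2) (i + 2) (by omega) y.succ.succ =
          (sw m i h y).succ.succ := by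
        intro y
        simp only [sw, swap_apply_def, Fin.ext_iff, Fin.val_succ]
        split_ifs <;> simp_all
      have hs0 : sw (m + 2) (i + 2) (by omega) 0 = 0 := by
        apply swap_apply_of_ne_of_ne <;> simp [Fin.ext_iff]
      have hs1 : sw (m + 2) (i + 2) (by omega) 1 = 1 := by
        apply swap_apply_of_ne_of_ne <;> simp [Fin.ext_iff]
      have hsq : ∀ y, sw m i h (sw m i h y) = y := fun y => swap_apply_self _ _ y
      have e1 : π = sw (m + 2) (i + 2) (by omega) * (sw (m + 2) (i + 2) (by omega) * π) := by
        rw [← mul_assoc]; simp [sw]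
      rw [e1, map_mul, sec_sw]
      refine Commute.mul_left ?_ (ih _ ?_ ?_ ?_)
      · exact (Commute.mul_left (farRR (by omega) (by omega))
          ((farSR (by omega) (by omega)).inv_left)).symm
      · rw [Perm.mul_apply, h0, hs0]
      · rw [Perm.mul_apply, h1, hs1]
      · intro x
        rw [Perm.mul_apply, hx, hsw, Perm.mul_apply, hsq]
  have dec : ∀ {k : ℕ} (π : Perm (Fin (k + 1))), π 0 = 0 → ∃ e : Perm (Fin k),
      ∀ x, π x.succ = (e x).succ := by
    intro k π h0
    obtain ⟨⟨p, e⟩, rfl⟩ := Perm.decomposeFin.symm.surjective π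
    rw [Perm.decomposeFin_symm_apply_zero] at h0
    subst h0
    exact ⟨e, fun x => by simp⟩
  obtain ⟨e, he⟩ := dec π h0
  have e0 : e 0 = 0 := by
    have := he 0
    have h : (Fin.succ 0 : Fin (m + 2)) = 1 := rfl
    rw [h, h1, ← h] at this
    exact (Fin.succ_injective _ this).symm
  obtain ⟨e', he'⟩ := dec e e0
  exact key e' π h0 h1 (fun x => by rw [he, he'])

lemma exists_shift (m : ℕ) : ∀ k (hk : k + 1 < m), ∃ π : Perm (Fin m),
    π ⟨0, by omega⟩ = ⟨k, by omega⟩ ∧ π ⟨1, by omega⟩ = ⟨k + 1, hk⟩ ∧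
    sec m π * L m 0 * (sec m π)⁻¹ = L m k := by
  intro k
  induction k with
  | zero => exact fun hk => ⟨1, rfl, rfl, by simp⟩
  | succ k ih =>
    intro hk
    obtain ⟨π, h0, h1, h2⟩ := ih (by omega)
    refine ⟨sw m k (by omega) * sw m (k + 1) (by omega) * π, ?_, ?_, ?_⟩
    · rw [Perm.mul_apply, Perm.mul_apply, h0]
      simp [sw, swap_apply_def]
      omega
    · rw [Perm.mul_apply, Perm.mul_apply, h1]
      simp [sw, swap_apply_def]
      omega
    · have : sec m (sw m k (by omega) * sw m (k + 1) (by omega) * π) * L m 0 *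
          (sec m (sw m k (by omega) * sw m (k + 1) (by omega) * π))⁻¹ =
          (R m k * R m (k + 1)) * (sec m π * L m 0 * (sec m π)⁻¹) * (R m k * R m (k + 1))⁻¹ := by
        rw [map_mul, map_mul, sec_sw, sec_sw]; group
      rw [this, h2, mul_inv_eq_iff_eq_mul]
      have a1 : SemiconjBy (R m k * R m (k + 1)) (S m k) (S m (k + 1)) := by
        rw [SemiconjBy, RRS (by omega), mul_assoc]
      have a2 : SemiconjBy (R m k * R m (k + 1)) (R m k) (R m (k + 1)) := by
        rw [SemiconjBy, RRR (by omega), mul_assoc]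
      exact a2.mul_right a1.inv_right

lemma conj_unique {m k k' : ℕ} (hk : k + 1 < m) (hk' : k' + 1 < m) (π π' : Perm (Fin m))
    (h0 : π ⟨k, by omega⟩ = π' ⟨k', by omega⟩) (h1 : π ⟨k + 1, hk⟩ = π' ⟨k' + 1, hk'⟩) :
    sec m π * L m k * (sec m π)⁻¹ = sec m π' * L m k' * (sec m π')⁻¹ := by
  obtain ⟨m, rfl⟩ : ∃ m', m = m' + 2 := ⟨m - 2, by omega⟩
  obtain ⟨τ, t0, t1, t2⟩ := exists_shift _ k hk
  obtain ⟨τ', t0', t1', t2'⟩ := exists_shift _ k' hk'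
  have hc : Commute (sec _ ((π' * τ')⁻¹ * (π * τ))) (L (m + 2) 0) := by
    apply sec_comm
    · rw [Perm.mul_apply, Perm.inv_eq_iff_eq]
      change (π * τ) ⟨0, _⟩ = (π' * τ') ⟨0, _⟩
      rw [Perm.mul_apply, Perm.mul_apply, t0, t0', h0]
    · rw [Perm.mul_apply, Perm.inv_eq_iff_eq]
      have : (1 : Fin (m + 2)) = ⟨1, by omega⟩ := rfl
      rw [this, Perm.mul_apply, Perm.mul_apply, t1, t1', h1]
  rw [← t2, ← t2']
  have e : π * τ = (π' * τ') * ((π' * τ')⁻¹ * (π * τ)) := by group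
  calc sec _ π * (sec _ τ * L _ 0 * (sec _ τ)⁻¹) * (sec _ π)⁻¹
      = sec _ (π * τ) * L _ 0 * (sec _ (π * τ))⁻¹ := by rw [map_mul]; group
    _ = sec _ (π' * τ') * (sec _ ((π' * τ')⁻¹ * (π * τ)) * L _ 0 *
          (sec _ ((π' * τ')⁻¹ * (π * τ)))⁻¹) * (sec _ (π' * τ'))⁻¹ := by
        rw [e]; simp only [map_mul, map_inv]; group
    _ = sec _ (π' * τ') * L _ 0 * (sec _ (π' * τ'))⁻¹ := by
        rw [hc.eq, mul_inv_cancel_right]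
    _ = _ := by rw [map_mul]; group

/-- `lam m i j` for arbitrary `i j : Fin m` (and `1` when `i = j`). -/
noncomputable def lam (m : ℕ) (i j : Fin m) : UVB m :=
  open Classical in
  if h : ∃ p : Perm (Fin m) × ℕ, ∃ hk : p.2 + 1 < m,
      p.1 ⟨p.2, by omega⟩ = i ∧ p.1 ⟨p.2 + 1, hk⟩ = j then
    sec m h.choose.1 * L m h.choose.2 * (sec m h.choose.1)⁻¹ else 1

lemma lam_spec {m k : ℕ} (hk : k + 1 < m) (π : Perm (Fin m)) :
    lam m (π ⟨k, by omega⟩) (π ⟨k + 1, hk⟩) = sec m π * L m k * (sec m π)⁻¹ := by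
  have h : ∃ p : Perm (Fin m) × ℕ, ∃ hk' : p.2 + 1 < m,
      p.1 ⟨p.2, by omega⟩ = π ⟨k, by omega⟩ ∧ p.1 ⟨p.2 + 1, hk'⟩ = π ⟨k + 1, hk⟩ :=
    ⟨(π, k), hk, rfl, rfl⟩
  rw [lam, dif_pos h]
  obtain ⟨a, b, c⟩ := h.choose_spec
  exact conj_unique a hk _ _ b c

lemma lam_self (m : ℕ) (i : Fin m) : lam m i i = 1 := by
  rw [lam, dif_neg]
  rintro ⟨p, hk, h1, h2⟩
  have := p.1.injective (h1.trans h2.symm)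
  simp at this

lemma exists_perm {m k : ℕ} (v : Fin k → Fin m) (hv : Function.Injective v) (hk : k ≤ m) :
    ∃ π : Perm (Fin m), ∀ x, π (Fin.castLE hk x) = v x := by
  obtain ⟨π, h⟩ := (Perm.isMultiplyPretransitive (Fin m) k).exists_smul_eq
    (Fin.castLEEmb hk) ⟨v, hv⟩
  exact ⟨π, fun x => DFunLike.congr_fun h x⟩

lemma lam_rep {m : ℕ} {i j : Fin m} (h : i ≠ j) : ∃ hm : 0 + 1 < m, ∃ π : Perm (Fin m),
    π ⟨0, by omega⟩ = i ∧ π ⟨0 + 1, hm⟩ = j := by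
  have hm : 0 + 1 < m := by
    have := i.isLt; have := j.isLt
    have : (i : ℕ) ≠ j := fun e => h (Fin.ext e)
    omega
  obtain ⟨π, hπ⟩ := exists_perm (k := 2) ![i, j] (by
    intro a b hab
    fin_cases a <;> fin_cases b <;> simp_all [h.symm]) (by omega)
  exact ⟨hm, π, hπ 0, hπ 1⟩

lemma lam_conj {m : ℕ} (π : Perm (Fin m)) (i j : Fin m) :
    sec m π * lam m i j = lam m (π i) (π j) * sec m π := by
  by_cases h : i = j
  · subst h; simp [lam_self]
  · obtain ⟨hm, τ, rfl, rfl⟩ := lam_rep h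
    rw [lam_spec hm, ← Perm.mul_apply, ← Perm.mul_apply, lam_spec hm, map_mul]
    group

lemma S_eq {m k : ℕ} (hk : k + 1 < m) :
    S m k = (lam m ⟨k, by omega⟩ ⟨k + 1, hk⟩)⁻¹ * sec m (sw m k hk) := by
  have := lam_spec hk 1
  rw [Perm.one_apply, Perm.one_apply] at this
  rw [this, sec_sw, L]
  simp [R_inv hk, mul_assoc, RR hk]

/-! ### Commutation of the `lam` -/

lemma abs1 {G : Type*} [Group G] {a b c r q : G} (h1 : q * a = b * q) (h2 : r * c = b * r)
    (h3 : r * b = c * r) (hb : r * q * r = q * r * q)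
    (h : r * (c * q) * (a * r) = (c * q) * (a * r) * q) : b * c = c * b := by
  apply mul_right_cancel (b := r * q * r)
  calc b * c * (r * q * r) = b * (c * r) * q * r := by simp only [mul_assoc]
    _ = (b * r) * (b * q) * r := by rw [← h3]; simp only [mul_assoc]
    _ = r * (c * q) * (a * r) := by rw [← h2, ← h1]; simp only [mul_assoc]
    _ = c * (q * a) * r * q := by rw [h]; simp only [mul_assoc]
    _ = c * b * (q * r * q) := by rw [h1]; simp only [mul_assoc]
    _ = c * b * (r * q * r) := by rw [hb]

lemma abs3 {G : Type*} [Group G] {a b c r q : G} (h1 : q * a = b * q) (h2 : r * c = b * r)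
    (h3 : r * b = c * r) (h4 : q * b = a * q) (hb : r * q * r = q * r * q)
    (hbc : b * c = c * b) (hab : a * b = b * a)
    (h : (a * r) * (c * q) * (a * r) = (c * q) * (a * r) * (c * q)) : a * c = c * a := by
  have e : a * b * c = c * b * a := by
    apply mul_right_cancel (b := r * q * r)
    calc a * b * c * (r * q * r) = a * b * (c * r) * q * r := by simp only [mul_assoc]
      _ = a * (b * r) * (b * q) * r := by rw [← h3]; simp only [mul_assoc]
      _ = (a * r) * (c * q) * (a * r) := by rw [← h2, ← h1]; simp only [mul_assoc]
      _ = c * (q * a) * (r * c) * q := by rw [h]; simp only [mul_assoc]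
      _ = c * b * (q * b) * r * q := by rw [h1, h2]; simp only [mul_assoc]
      _ = c * b * a * (q * r * q) := by rw [h4]; simp only [mul_assoc]
      _ = c * b * a * (r * q * r) := by rw [hb]
  apply mul_right_cancel (b := b)
  rw [mul_assoc, ← hbc, ← mul_assoc, e, mul_assoc, ← hab, mul_assoc]

lemma lam_base (m : ℕ) :
    Commute (lam (m + 3) 0 1) (lam (m + 3) 0 2) ∧ Commute (lam (m + 3) 0 2) (lam (m + 3) 1 2) ∧
    Commute (lam (m + 3) 0 1) (lam (m + 3) 1 2) := by
  have cj : ∀ (π : Perm (Fin (m + 3))) i j i' j', π i = i' → π j = j' →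
      sec _ π * (lam _ i j)⁻¹ = (lam _ i' j')⁻¹ * sec _ π := by
    rintro π i j _ _ rfl rfl
    have : SemiconjBy (sec _ π) (lam _ i j) (lam _ (π i) (π j)) := lam_conj π i j
    exact this.inv_right
  have e2 : (⟨1 + 1, by omega⟩ : Fin (m + 3)) = 2 := rfl
  have e1 : (⟨1, by omega⟩ : Fin (m + 3)) = 1 := rfl
  have e0 : (⟨0, by omega⟩ : Fin (m + 3)) = 0 := rfl
  have s0 : sw (m + 3) 0 (by omega) = swap 0 1 := rfl
  have s1 : sw (m + 3) 1 (by omega) = swap 1 2 := rfl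
  have n01 : (0 : Fin (m + 3)) ≠ 1 := by simp [Fin.ext_iff]
  have n02 : (0 : Fin (m + 3)) ≠ 2 := by simp [← e2, Fin.ext_iff]
  have n12 : (1 : Fin (m + 3)) ≠ 2 := by simp [← e2, Fin.ext_iff]
  have S0 : S (m + 3) 0 = (lam _ 0 1)⁻¹ * sec _ (swap 0 1) := S_eq (by omega)
  have S1 : S (m + 3) (0 + 1) = (lam _ 1 2)⁻¹ * sec _ (swap 1 2) := S_eq (by omega)
  have R0 : R (m + 3) 0 = sec _ (swap 0 1) := by rw [← s0, sec_sw]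
  have R1 : R (m + 3) (0 + 1) = sec _ (swap 1 2) := by rw [← s1, sec_sw]
  have h1 := cj (swap 1 2) 0 1 0 2 (swap_apply_of_ne_of_ne n01 n02) (swap_apply_left _ _)
  have h4 := cj (swap 1 2) 0 2 0 1 (swap_apply_of_ne_of_ne n01 n02) (swap_apply_right _ _)
  have h2 := cj (swap 0 1) 1 2 0 2 (swap_apply_right _ _)
    (swap_apply_of_ne_of_ne n02.symm n12.symm)
  have h3 := cj (swap 0 1) 0 2 1 2 (swap_apply_left _ _)
    (swap_apply_of_ne_of_ne n02.symm n12.symm)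
  have r0 := RSS (m := m + 3) (i := 0) (by omega)
  have r1 := RSS' (m := m + 3) (i := 0) (by omega)
  have r2 := SSS (m := m + 3) (i := 0) (by omega)
  have hb := RRR (m := m + 3) (i := 0) (by omega)
  rw [R0, R1] at hb
  rw [S0, S1, R0, R1] at r0 r1
  rw [S0, S1] at r2
  have c1 := abs1 h1 h2 h3 hb r0
  have c2 := abs1 h2 h1 h4 hb.symm r1
  have c3 := abs3 h1 h2 h3 h4 hb c1 c2.symm r2
  refine ⟨?_, ?_, ?_⟩
  · have : Commute (lam (m + 3) 0 2)⁻¹ (lam (m + 3) 0 1)⁻¹ := c2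
    exact (Commute.inv_inv_iff.1 this).symm
  · have : Commute (lam (m + 3) 0 2)⁻¹ (lam (m + 3) 1 2)⁻¹ := c1
    exact (Commute.inv_inv_iff.1 this)
  · have : Commute (lam (m + 3) 0 1)⁻¹ (lam (m + 3) 1 2)⁻¹ := c3
    exact (Commute.inv_inv_iff.1 this)

lemma comm_transport {m : ℕ} (π : Perm (Fin m)) {i j k l : Fin m}
    (h : Commute (lam m i j) (lam m k l)) :
    Commute (lam m (π i) (π j)) (lam m (π k) (π l)) := by
  have e : ∀ a b, lam m (π a) (π b) = sec m π * lam m a b * (sec m π)⁻¹ := by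
    intro a b; rw [lam_conj, mul_inv_cancel_right]
  rw [e, e]
  have := h.map (MulAut.conj (sec m π)).toMonoidHom
  simpa using this

lemma lam_three {m : ℕ} {i j k : Fin m} (h1 : i ≠ j) (h2 : i ≠ k) (h3 : j ≠ k) :
    Commute (lam m i j) (lam m i k) ∧ Commute (lam m i k) (lam m j k) ∧
    Commute (lam m i j) (lam m j k) := by
  have hinj : Function.Injective ![i, j, k] := by
    intro a b hab
    fin_cases a <;> fin_cases b <;> simp_all [h1.symm, h2.symm, h3.symm]
  have hm : 3 ≤ m := by simpa using Fintype.card_le_of_injective _ hinj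
  obtain ⟨π, hπ⟩ := exists_perm ![i, j, k] hinj hm
  obtain ⟨m, rfl⟩ : ∃ m', m = m' + 3 := ⟨m - 3, by omega⟩
  have p0 : π 0 = i := hπ 0
  have p1 : π 1 = j := hπ 1
  have p2 : π 2 = k := hπ 2
  obtain ⟨a, b, c⟩ := lam_base m
  have a' := comm_transport π a
  have b' := comm_transport π b
  have c' := comm_transport π c
  rw [p0, p1, p2] at a' b' c'
  exact ⟨a', b', c'⟩

lemma lam_four {m : ℕ} {i j k l : Fin m} (h1 : i ≠ j) (h2 : i ≠ k) (h3 : j ≠ k) (h4 : i ≠ l)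
    (h5 : j ≠ l) (h6 : k ≠ l) : Commute (lam m i j) (lam m k l) := by
  have hinj : Function.Injective ![i, j, k, l] := by
    intro a b hab
    fin_cases a <;> fin_cases b <;>
      simp_all [h1.symm, h2.symm, h3.symm, h4.symm, h5.symm, h6.symm]
  have hm : 4 ≤ m := by simpa using Fintype.card_le_of_injective _ hinj
  obtain ⟨π, hπ⟩ := exists_perm ![i, j, k, l] hinj hm
  have p0 : π ⟨0, by omega⟩ = i := hπ 0
  have p1 : π ⟨1, by omega⟩ = j := hπ 1
  have p2 : π ⟨2, by omega⟩ = k := hπ 2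
  have p3 : π ⟨3, by omega⟩ = l := hπ 3
  have a := lam_spec (m := m) (k := 0) (by omega) 1
  have b := lam_spec (m := m) (k := 2) (by omega) 1
  have c : Commute (L m 0) (L m 2) := by
    unfold L
    exact Commute.mul_left
      (Commute.mul_right (farRR (by omega) (by omega)) (farRS (by omega) (by omega)).inv_right)
      (Commute.mul_right (farSR (by omega) (by omega)).inv_left
        (farSS (by omega) (by omega)).inv_inv)
  simp only [map_one, one_mul, mul_one, inv_one, Perm.one_apply] at a b
  rw [← a, ← b] at c
  have c' := comm_transport π c
  simp only [zero_add, Nat.reduceAdd] at c'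
  rwa [p0, p1, p2, p3] at c'

theorem lam_comm {m : ℕ} {i j k l : Fin m} (h : ¬ (k = j ∧ l = i)) :
    Commute (lam m i j) (lam m k l) := by
  by_cases h1 : i = j
  · subst h1; rw [lam_self]; exact Commute.one_left _
  by_cases h2 : k = l
  · subst h2; rw [lam_self]; exact Commute.one_right _
  by_cases h3 : i = k
  · subst h3
    by_cases h4 : j = l
    · subst h4; exact Commute.refl _
    · exact (lam_three h1 h2 h4).1
  by_cases h4 : j = l
  · subst h4; exact (lam_three h3 h1 h2).2.1
  by_cases h5 : j = k
  · subst h5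
    have h6 : i ≠ l := fun e => h ⟨rfl, e.symm⟩
    exact (lam_three h1 h6 h2).2.2
  by_cases h6 : i = l
  · subst h6
    exact ((lam_three h2 (Ne.symm h5) h1).2.2).symm
  exact lam_four h1 h3 h5 h6 h4 h2

end UVBProof

namespace UVBProof
open UVB Equiv
open scoped commutatorElement

/-! ### The pure subgroup -/

/-- subgroup generated by the `lam` -/
def K (m : ℕ) : Subgroup (UVB m) := Subgroup.closure {x | ∃ i j, x = lam m i j}

lemma lam_mem (m : ℕ) (i j : Fin m) : lam m i j ∈ K m := Subgroup.subset_closure ⟨i, j, rfl⟩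

lemma uvb_ind {m : ℕ} {C : UVB m → Prop} (one : C 1)
    (mulS : ∀ g i, i + 1 < m → C g → C (g * S m i))
    (mulSi : ∀ g i, i + 1 < m → C g → C (g * (S m i)⁻¹))
    (mulR : ∀ g i, i + 1 < m → C g → C (g * R m i)) (g : UVB m) : C g := by
  have hg : g ∈ Subgroup.closure (Set.range (PresentedGroup.of : UVBGen m → UVB m)) := by
    rw [PresentedGroup.closure_range_of]; trivial
  have oS : ∀ i : Fin (m - 1), (PresentedGroup.of (Sum.inl i) : UVB m) = S m i :=
    fun i => (S_mk i.isLt).symm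
  have oR : ∀ i : Fin (m - 1), (PresentedGroup.of (Sum.inr i) : UVB m) = R m i :=
    fun i => (R_mk i.isLt).symm
  induction hg using Subgroup.closure_induction_right with
  | one => exact one
  | mul_right a ha y hy ih =>
    obtain ⟨i | i, rfl⟩ := hy
    · rw [oS]; exact mulS _ _ (by omega) ih
    · rw [oR]; exact mulR _ _ (by omega) ih
  | mul_inv_cancel a ha y hy ih =>
    obtain ⟨i | i, rfl⟩ := hy
    · rw [oS]; exact mulSi _ _ (by omega) ih
    · rw [oR, R_inv (by omega)]; exact mulR _ _ (by omega) ih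

lemma decomp {m : ℕ} (g : UVB m) : ∃ k ∈ K m, ∃ π, g = k * sec m π := by
  refine uvb_ind (C := fun g => ∃ k ∈ K m, ∃ π, g = k * sec m π) ?_ ?_ ?_ ?_ g
  · exact ⟨1, one_mem _, 1, by simp⟩
  · rintro _ i hi ⟨k, hk, π, rfl⟩
    have e : SemiconjBy (sec m π) _ _ := lam_conj π ⟨i, by omega⟩ ⟨i + 1, hi⟩
    refine ⟨k * (lam m (π ⟨i, by omega⟩) (π ⟨i + 1, hi⟩))⁻¹,
      mul_mem hk (inv_mem (lam_mem _ _ _)), π * sw m i hi, ?_⟩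
    rw [S_eq hi, map_mul, mul_assoc, ← mul_assoc (sec m π), e.inv_right.eq]
    simp only [mul_assoc]
  · rintro _ i hi ⟨k, hk, π, rfl⟩
    have e : SemiconjBy (sec m (π * sw m i hi)) _ _ :=
      lam_conj (π * sw m i hi) ⟨i, by omega⟩ ⟨i + 1, hi⟩
    refine ⟨k * (lam m ((π * sw m i hi) ⟨i, by omega⟩) ((π * sw m i hi) ⟨i + 1, hi⟩)),
      mul_mem hk (lam_mem _ _ _), π * sw m i hi, ?_⟩
    rw [mul_assoc k (lam m _ _), ← e.eq, S_eq hi, mul_inv_rev, inv_inv, sec_sw, R_inv hi, map_mul,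
      sec_sw]
    simp only [mul_assoc]
  · rintro _ i hi ⟨k, hk, π, rfl⟩
    exact ⟨k, hk, π * sw m i hi, by rw [map_mul, sec_sw, mul_assoc]⟩

lemma iota_sec {n : ℕ} {ι : UVB n →* Perm (Fin n)} (hι : IsIota n ι) (π : Perm (Fin n)) :
    ι (sec n π) = π := by
  refine perm_ind (C := fun π => ι (sec n π) = π) (by simp) (fun π i h ih => ?_) π
  rw [map_mul, map_mul, ih, sec_sw]
  congr 1
  exact (hι (i + 1) (by omega) (by omega)).2

lemma ker_eq {n : ℕ} {ι : UVB n →* Perm (Fin n)} (hι : IsIota n ι) : ι.ker = K n := by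
  have hle : K n ≤ ι.ker := by
    rw [K, Subgroup.closure_le]
    rintro _ ⟨i, j, rfl⟩
    by_cases h : i = j
    · subst h; rw [lam_self]; exact one_mem _
    · obtain ⟨hm, π, rfl, rfl⟩ := lam_rep h
      rw [lam_spec hm]
      have h0 := hι (0 + 1) (by omega) (by omega)
      have : ι (L n 0) = 1 := by
        unfold L R S
        rw [map_mul, map_inv, h0.1, h0.2, mul_inv_cancel]
      simp [MonoidHom.mem_ker, this]
  refine le_antisymm (fun g hg => ?_) hle
  obtain ⟨k, hk, π, rfl⟩ := decomp g
  have h1 : ι (k * sec n π) = 1 := hg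
  have h2 : ι k = 1 := hle hk
  rw [map_mul, h2, iota_sec hι, one_mul] at h1
  subst h1
  simpa using hk

/-! ### The inclusion -/

lemma incl_S {m i : ℕ} (h : i + 1 < m) : incl m (S m i) = S (m + 1) i := by
  rw [S_mk (m := m) (by omega), S_mk (m := m + 1) (by omega)]
  exact PresentedGroup.toGroup.of _

lemma incl_R {m i : ℕ} (h : i + 1 < m) : incl m (R m i) = R (m + 1) i := by
  rw [R_mk (m := m) (by omega), R_mk (m := m + 1) (by omega)]
  exact PresentedGroup.toGroup.of _

lemma incl_sec {m : ℕ} (π : Perm (Fin m)) : ∀ (π' : Perm (Fin (m + 1))),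
    (∀ x, π' (Fin.castSucc x) = (π x).castSucc) → π' (Fin.last m) = Fin.last m →
    incl m (sec m π) = sec (m + 1) π' := by
  refine perm_ind (C := fun π => ∀ (π' : Perm (Fin (m + 1))),
    (∀ x, π' (Fin.castSucc x) = (π x).castSucc) → π' (Fin.last m) = Fin.last m →
    incl m (sec m π) = sec (m + 1) π') ?_ ?_ π
  · intro π' h hl
    have : π' = 1 := by
      ext x
      refine Fin.lastCases ?_ (fun x => ?_) x
      · rw [hl]; rfl
      · rw [h]; rfl
    rw [this]; simp
  · intro π i hi ih π' h hl
    have hsw : ∀ y : Fin m, sw (m + 1) i (by omega) y.castSucc = (sw m i hi y).castSucc := by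
      intro y
      simp only [sw, swap_apply_def, Fin.ext_iff, Fin.val_castSucc]
      split_ifs <;> simp_all
    have hsl : sw (m + 1) i (by omega) (Fin.last m) = Fin.last m := by
      apply swap_apply_of_ne_of_ne <;> simp [Fin.ext_iff] <;> omega
    have hsq : ∀ y, sw m i hi (sw m i hi y) = y := fun y => swap_apply_self _ _ y
    have e1 : π' = sw (m + 1) i (by omega) * (sw (m + 1) i (by omega) * π') := by
      rw [← mul_assoc]; simp [sw]
    rw [e1, map_mul, map_mul, map_mul, sec_sw, sec_sw, incl_R hi]
    congr 1
    apply ih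
    · intro x
      rw [Perm.mul_apply, h, hsw, Perm.mul_apply, hsq]
    · rw [Perm.mul_apply, hl, hsl]

lemma swap_castSucc {m : ℕ} (a b x : Fin m) :
    swap a.castSucc b.castSucc x.castSucc = (swap a b x).castSucc := by
  simp only [swap_apply_def, Fin.ext_iff, Fin.val_castSucc]
  split_ifs <;> simp_all

lemma incl_sec_swap {m : ℕ} (a b : Fin m) :
    incl m (sec m (swap a b)) = sec (m + 1) (swap a.castSucc b.castSucc) :=
  incl_sec _ _ (fun x => swap_castSucc a b x)
    (swap_apply_of_ne_of_ne (Fin.castSucc_ne_last a).symm (Fin.castSucc_ne_last b).symm)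

lemma incl_lam {m : ℕ} (i j : Fin m) : incl m (lam m i j) = lam (m + 1) i.castSucc j.castSucc := by
  by_cases h : i = j
  · subst h; simp [lam_self]
  · obtain ⟨hm, π, rfl, rfl⟩ := lam_rep h
    let π' : Perm (Fin (m + 1)) := Perm.viaEmbedding π Fin.castSuccEmb
    have h1 : ∀ x, π' (Fin.castSucc x) = (π x).castSucc := fun x =>
      Perm.viaEmbedding_apply π Fin.castSuccEmb x
    have h2 : π' (Fin.last m) = Fin.last m := by
      apply Perm.viaEmbedding_apply_of_notMem
      rintro ⟨y, hy⟩
      exact Fin.castSucc_ne_last y hy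
    rw [← h1, ← h1]
    have := lam_spec (m := m + 1) (k := 0) (by omega) π'
    refine Eq.trans ?_ this.symm
    rw [lam_spec hm, map_mul, map_mul, map_inv, incl_sec π π' h1 h2]
    unfold L
    rw [map_mul, map_inv, incl_R hm, incl_S hm]

lemma incl_mem {m : ℕ} {c : UVB m} (hc : c ∈ K m) : incl m c ∈ K (m + 1) := by
  have : K m ≤ (K (m + 1)).comap (incl m) := by
    conv_lhs => rw [K]
    rw [Subgroup.closure_le]
    rintro _ ⟨i, j, rfl⟩
    change incl m _ ∈ K (m + 1)
    rw [incl_lam]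
    exact lam_mem _ _ _
  exact this hc

lemma K_comm {m m' : ℕ} {c : UVB m} (hc : c ∈ K m) (φ : UVB m →* UVB m') (x : UVB m')
    (h : ∀ i j, Commute (φ (lam m i j)) x) : Commute (φ c) x := by
  have : K m ≤ (Subgroup.centralizer {x}).comap φ := by
    rw [K, Subgroup.closure_le]
    rintro _ ⟨i, j, rfl⟩
    change φ _ ∈ Subgroup.centralizer {x}
    rw [Subgroup.mem_centralizer_singleton_iff]
    exact (h i j)
  have h2 := this hc
  rw [Subgroup.mem_comap, Subgroup.mem_centralizer_singleton_iff] at h2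
  exact h2

lemma K_comm_last {m : ℕ} {c : UVB m} (hc : c ∈ K m) (a b : Fin (m + 1))
    (h : a = Fin.last m ∨ b = Fin.last m) : Commute (incl m c) (lam (m + 1) a b) := by
  refine K_comm hc _ _ (fun i j => ?_)
  rw [incl_lam]
  apply lam_comm
  rintro ⟨rfl, rfl⟩
  rcases h with h | h
  · exact Fin.castSucc_ne_last _ h
  · exact Fin.castSucc_ne_last _ h

/-! ### Markov moves -/

lemma mk_refl (a : Σ n, UVB n) : Markov a a := Relation.EqvGen.refl a
lemma mk_symm {a b : Σ n, UVB n} (h : Markov a b) : Markov b a := Relation.EqvGen.symm _ _ h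
lemma mk_trans {a b c : Σ n, UVB n} (h : Markov a b) (h' : Markov b c) : Markov a c :=
  Relation.EqvGen.trans _ _ _ h h'
lemma mk_conj {m : ℕ} (a g : UVB m) : Markov ⟨m, a⟩ ⟨m, g * a * g⁻¹⟩ :=
  Relation.EqvGen.rel _ _ (MarkovBase.conj m a g)
lemma mk_comm {m : ℕ} (a b : UVB m) : Markov ⟨m, a * b⟩ ⟨m, b * a⟩ := by
  have := mk_conj (a * b) b
  rwa [← mul_assoc, mul_inv_cancel_right] at this

lemma stab {m : ℕ} (α : UVB m) (k : Fin m) :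
    Markov ⟨m, α⟩ ⟨m + 1, incl m α * sec (m + 1) (swap k.castSucc (Fin.last m))⟩ := by
  obtain ⟨m, rfl⟩ : ∃ m', m = m' + 1 := ⟨m - 1, by have := k.isLt; omega⟩
  set T : Perm (Fin (m + 2)) := swap k.castSucc (Fin.last m).castSucc with hT
  refine mk_trans (mk_conj α (sec _ (swap k (Fin.last m)))) ?_
  refine mk_trans (Relation.EqvGen.rel _ _ (MarkovBase.stabVirt (m + 1) _)) ?_
  have e1 : rho (m + 1 + 1) (m + 1) = sec (m + 2) (sw (m + 2) m (by omega)) := by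
    rw [sec_sw]; rfl
  have e2 : sw (m + 2) m (by omega) = swap (Fin.last m).castSucc (Fin.last (m + 1)) := rfl
  rw [e1, e2, map_mul, map_mul, map_inv, incl_sec_swap, ← hT, mul_assoc, mul_assoc]
  refine mk_trans (mk_comm _ _) ?_
  have e3 : swap k.castSucc (Fin.last (m + 1)) =
      T⁻¹ * swap (Fin.last m).castSucc (Fin.last (m + 1)) * T := by
    have := swap_apply_apply T⁻¹ (Fin.last m).castSucc (Fin.last (m + 1))
    rw [inv_inv] at this
    rw [← this]
    congr 1
    · rw [eq_comm, Perm.inv_eq_iff_eq, hT, swap_apply_left]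
    · rw [eq_comm, Perm.inv_eq_iff_eq, hT, swap_apply_of_ne_of_ne]
      · exact (Fin.castSucc_ne_last _).symm
      · exact (Fin.castSucc_ne_last _).symm
  rw [e3, map_mul, map_mul, map_inv]
  simp only [mul_assoc]
  exact mk_refl _

lemma step1 {n : ℕ} {c w : UVB n} {w' : UVB (n + 1)} (k : Fin n)
    (hw : sec (n + 1) (swap k.castSucc (Fin.last n)) * w' =
      incl n w * sec (n + 1) (swap k.castSucc (Fin.last n)))
    (hc : Commute (incl n c) w') :
    Markov ⟨n, c * w⟩ ⟨n + 1, incl n c * w' * sec (n + 1) (swap k.castSucc (Fin.last n))⟩ := by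
  refine mk_trans (stab (c * w) k) ?_
  rw [map_mul, hc.eq, mul_assoc, ← hw, mul_assoc w', ← mul_assoc]
  exact mk_comm _ _

lemma step2 {n : ℕ} {c : UVB n} (hc : c ∈ K n) {i j : Fin n} (hij : i ≠ j) :
    Markov ⟨n, c * (lam n i j * lam n j i)⟩
      ⟨n + 2, incl (n + 1) (incl n c) *
        (lam (n + 2) i.castSucc.castSucc (Fin.last n).castSucc *
          lam (n + 2) (Fin.last n).castSucc i.castSucc.castSucc) *
        sec (n + 2) (swap j.castSucc.castSucc (Fin.last n).castSucc) *
        sec (n + 2) (swap i.castSucc.castSucc (Fin.last (n + 1)))⟩ := by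
  have hi : swap j.castSucc (Fin.last n) i.castSucc = i.castSucc :=
    swap_apply_of_ne_of_ne (fun h => hij (Fin.castSucc_injective _ h)) (Fin.castSucc_ne_last _)
  refine mk_trans (step1 (w' := lam (n + 1) i.castSucc (Fin.last n) *
    lam (n + 1) (Fin.last n) i.castSucc) j ?_ ?_) ?_
  · rw [← mul_assoc, lam_conj, mul_assoc, lam_conj, hi, swap_apply_right, map_mul, incl_lam,
      incl_lam, mul_assoc]
  · exact (K_comm_last hc _ _ (Or.inr rfl)).mul_right (K_comm_last hc _ _ (Or.inl rfl))
  · refine mk_trans (stab _ i.castSucc) ?_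
    rw [map_mul, map_mul, map_mul, incl_lam, incl_lam, incl_sec_swap]
    exact mk_refl _

lemma step3 {m : ℕ} {C Y Z Y' Z' T : UVB m} (h1 : T * Z' = Z * T) (h2 : T * Y = Y' * T)
    (c1 : Commute C Z') (c2 : Commute Y Z') (c3 : Commute C Y) :
    Markov ⟨m, C * (Y * Z) * T⟩ ⟨m, C * (Z' * Y') * T⟩ := by
  have e1 : C * (Y * Z) * T = C * Y * T * Z' := by simp only [mul_assoc, h1]
  have e2 : Z' * (C * Y * T) = Y * (C * Z' * T) := by
    calc Z' * (C * Y * T) = (Z' * C) * Y * T := by simp only [mul_assoc]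
      _ = (C * Z') * Y * T := by rw [c1.eq]
      _ = C * (Z' * Y) * T := by simp only [mul_assoc]
      _ = (C * Y) * Z' * T := by rw [← c2.eq]; simp only [mul_assoc]
      _ = Y * (C * Z' * T) := by rw [c3.eq]; simp only [mul_assoc]
  have e3 : C * Z' * T * Y = C * (Z' * Y') * T := by simp only [mul_assoc, h2]
  rw [e1, ← e3]
  refine mk_trans (mk_comm _ _) ?_
  rw [e2]
  exact mk_comm _ _

lemma step4 {n : ℕ} {c : UVB n} (hc : c ∈ K n) {i j : Fin n} (hij : i ≠ j) :
    Markov ⟨n, c * (lam n i j * lam n j i)⟩ ⟨n, c * (lam n j i * lam n i j)⟩ := by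
  refine mk_trans (step2 hc hij) (mk_symm (mk_trans (step2 hc hij.symm) ?_))
  set C := incl (n + 1) (incl n c) with hC
  set p : Fin (n + 2) := (Fin.last n).castSucc with hp
  set q : Fin (n + 2) := Fin.last (n + 1) with hq
  have hpq : p ≠ q := Fin.castSucc_ne_last _
  have np : ∀ x : Fin n, x.castSucc.castSucc ≠ p :=
    fun x h => Fin.castSucc_ne_last x (Fin.castSucc_injective _ h)
  have nq : ∀ x : Fin n, x.castSucc.castSucc ≠ q := fun x => Fin.castSucc_ne_last _
  have nij : i.castSucc.castSucc ≠ j.castSucc.castSucc :=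
    fun h => hij (Fin.castSucc_injective _ (Fin.castSucc_injective _ h))
  have hfix : ∀ x : Fin n, swap p q x.castSucc.castSucc = x.castSucc.castSucc :=
    fun x => swap_apply_of_ne_of_ne (np x) (nq x)
  have hCs : Commute C (sec (n + 2) (swap p q)) := by
    refine K_comm hc ((incl (n + 1)).comp (incl n)) _ (fun a b => ?_)
    rw [MonoidHom.comp_apply, incl_lam, incl_lam]
    have := lam_conj (swap p q) a.castSucc.castSucc b.castSucc.castSucc
    rw [hfix, hfix] at this
    exact this.symm
  have hCq : ∀ a, Commute C (lam (n + 2) a q) := fun a =>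
    K_comm_last (incl_mem hc) _ _ (Or.inr rfl)
  have hCp : Commute C (lam (n + 2) i.castSucc.castSucc p) := by
    have := (K_comm_last hc i.castSucc (Fin.last n) (Or.inr rfl)).map (incl (n + 1))
    rwa [incl_lam] at this
  -- conjugate by the transposition of the last two strands
  refine mk_trans (mk_conj _ (sec (n + 2) (swap p q))) ?_
  have esw : ∀ x : Fin n, sec (n + 2) (swap p q) * sec (n + 2) (swap x.castSucc.castSucc p) =
      sec (n + 2) (swap x.castSucc.castSucc q) * sec (n + 2) (swap p q) := by
    intro x
    rw [← map_mul, ← map_mul, mul_swap_eq_swap_mul, hfix, swap_apply_left]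
  have esw' : ∀ x : Fin n, sec (n + 2) (swap p q) * sec (n + 2) (swap x.castSucc.castSucc q) =
      sec (n + 2) (swap x.castSucc.castSucc p) * sec (n + 2) (swap p q) := by
    intro x
    rw [← map_mul, ← map_mul, mul_swap_eq_swap_mul, hfix, swap_apply_right]
  have l1 := lam_conj (swap p q) j.castSucc.castSucc p
  have l2 := lam_conj (swap p q) p j.castSucc.castSucc
  rw [hfix, swap_apply_left] at l1 l2
  have E : sec (n + 2) (swap p q) * (C * (lam (n + 2) j.castSucc.castSucc p *
      lam (n + 2) p j.castSucc.castSucc) * sec (n + 2) (swap i.castSucc.castSucc p) *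
      sec (n + 2) (swap j.castSucc.castSucc q)) * (sec (n + 2) (swap p q))⁻¹ =
      C * (lam (n + 2) j.castSucc.castSucc q * lam (n + 2) q j.castSucc.castSucc) *
      (sec (n + 2) (swap i.castSucc.castSucc q) * sec (n + 2) (swap j.castSucc.castSucc p)) := by
    rw [mul_inv_eq_iff_eq_mul]
    have s1 : SemiconjBy (sec (n + 2) (swap p q)) C C := hCs.symm
    have s2 : SemiconjBy (sec (n + 2) (swap p q)) _ _ := l1
    have s3 : SemiconjBy (sec (n + 2) (swap p q)) _ _ := l2
    have s4 : SemiconjBy (sec (n + 2) (swap p q)) _ _ := esw i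
    have s5 : SemiconjBy (sec (n + 2) (swap p q)) _ _ := esw' j
    rw [((((s1.mul_right (s2.mul_right s3)).mul_right s4).mul_right s5)).eq]
    simp only [mul_assoc]
  rw [E]
  have hTc : swap j.castSucc.castSucc p * swap i.castSucc.castSucc q =
      swap i.castSucc.castSucc q * swap j.castSucc.castSucc p := by
    rw [mul_swap_eq_swap_mul, swap_apply_of_ne_of_ne nij (np i),
      swap_apply_of_ne_of_ne (nq j).symm hpq.symm]
  rw [← map_mul, ← hTc, mul_assoc (C * _), ← map_mul]
  refine mk_symm (step3 ?_ ?_ (hCq _) ?_ hCp)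
  · rw [lam_conj, hTc]
    congr 2
    · rw [Perm.mul_apply, swap_apply_left, swap_apply_of_ne_of_ne (np i).symm hpq]
    · rw [← hTc, Perm.mul_apply, swap_apply_right, swap_apply_of_ne_of_ne nij (np i)]
  · rw [lam_conj]
    congr 2
    · rw [Perm.mul_apply, swap_apply_left, swap_apply_of_ne_of_ne (nq j).symm hpq.symm]
    · rw [hTc, Perm.mul_apply, swap_apply_right, swap_apply_of_ne_of_ne nij.symm (nq j)]
  · apply lam_comm
    rintro ⟨_, h⟩
    exact nq i h.symm

/-- pure braids that can be inserted without changing the Markov class -/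
def NN (n : ℕ) : Subgroup (UVB n) where
  carrier := {a | a ∈ K n ∧ ∀ c ∈ K n, Markov ⟨n, c * a⟩ ⟨n, c⟩}
  one_mem' := ⟨one_mem _, fun c _ => by rw [mul_one]; exact mk_refl _⟩
  mul_mem' := by
    rintro a b ⟨ha, ha'⟩ ⟨hb, hb'⟩
    refine ⟨mul_mem ha hb, fun c hc => ?_⟩
    rw [← mul_assoc]
    exact mk_trans (hb' _ (mul_mem hc ha)) (ha' c hc)
  inv_mem' := by
    rintro a ⟨ha, ha'⟩
    refine ⟨inv_mem ha, fun c hc => ?_⟩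
    have := ha' (c * a⁻¹) (mul_mem hc (inv_mem ha))
    rw [inv_mul_cancel_right] at this
    exact mk_symm this

lemma NN_conj {n : ℕ} {g a : UVB n} (hg : g ∈ K n) (ha : a ∈ NN n) : g * a * g⁻¹ ∈ NN n := by
  refine ⟨mul_mem (mul_mem hg ha.1) (inv_mem hg), fun c hc => ?_⟩
  rw [← mul_assoc]
  refine mk_trans (mk_comm _ _) ?_
  have := ha.2 (g⁻¹ * c * g) (mul_mem (mul_mem (inv_mem hg) hc) hg)
  have h2 := mk_conj (g⁻¹ * c * g) g
  have e : g * (g⁻¹ * c * g) * g⁻¹ = c := by group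
  rw [e] at h2
  simp only [mul_assoc] at this h2 ⊢
  exact mk_trans this h2

lemma NN_comm_gen {n : ℕ} {x : UVB n} (hx : x ∈ K n) (h : ∀ i j, ⁅x, lam n i j⁆ ∈ NN n)
    {y : UVB n} (hy : y ∈ K n) : ⁅x, y⁆ ∈ NN n := by
  have hy' := hy
  unfold K at hy'
  induction hy' using Subgroup.closure_induction with
  | mem y hg => obtain ⟨i, j, rfl⟩ := hg; exact h i j
  | one => rw [commutatorElement_one_right]; exact one_mem _
  | mul a b ha hb iha ihb =>
    have e : ⁅x, a * b⁆ = ⁅x, a⁆ * (a * ⁅x, b⁆ * a⁻¹) := by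
      simp only [commutatorElement_def]; group
    rw [e]
    exact mul_mem (iha ha) (NN_conj ha (ihb hb))
  | inv a ha iha =>
    have e : ⁅x, a⁻¹⁆ = a⁻¹ * ⁅x, a⁆⁻¹ * a⁻¹⁻¹ := by
      simp only [commutatorElement_def]; group
    rw [e]
    exact NN_conj (inv_mem ha) (inv_mem (iha ha))

lemma NN_gen {n : ℕ} (i j k l : Fin n) : ⁅lam n i j, lam n k l⁆ ∈ NN n := by
  by_cases h : k = j ∧ l = i ∧ i ≠ j
  · obtain ⟨rfl, rfl, h⟩ := h
    have hy := lam_mem n l k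
    have hz := lam_mem n k l
    refine ⟨?_, fun c hc => ?_⟩
    · rw [commutatorElement_def]
      exact mul_mem (mul_mem (mul_mem hy hz) (inv_mem hy)) (inv_mem hz)
    · have h1 := mk_comm (c * (lam n l k * lam n k l)) ((lam n l k)⁻¹ * (lam n k l)⁻¹)
      have h2 := step4 (c := ((lam n l k)⁻¹ * (lam n k l)⁻¹) * c)
        (mul_mem (mul_mem (inv_mem hy) (inv_mem hz)) hc) h
      have h3 := mk_comm ((lam n l k)⁻¹ * (lam n k l)⁻¹) (c * (lam n k l * lam n l k))
      have e : c * (lam n k l * lam n l k) * ((lam n l k)⁻¹ * (lam n k l)⁻¹) = c := by group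
      rw [e] at h3
      rw [commutatorElement_def]
      simp only [mul_assoc] at h1 h2 h3 ⊢
      exact mk_trans h1 (mk_trans h2 h3)
  · have hc : Commute (lam n i j) (lam n k l) := by
      by_cases h' : k = j ∧ l = i
      · have : i = j := by tauto
        rw [this, lam_self]; exact Commute.one_left _
      · exact lam_comm h'
    rw [commutatorElement_eq_one_iff_commute.2 hc]
    exact one_mem _

lemma comm_le_NN (n : ℕ) : ⁅K n, K n⁆ ≤ NN n := by
  rw [Subgroup.commutator_le]
  intro x hx y hy
  refine NN_comm_gen hx (fun i j => ?_) hy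
  rw [← commutatorElement_inv]
  exact inv_mem (NN_comm_gen (lam_mem n i j) (fun k l => NN_gen i j k l) hx)

theorem markov_of_comm {n : ℕ} {a b : UVB n} (hb : b ∈ K n) (h : a * b⁻¹ ∈ ⁅K n, K n⁆) :
    Markov ⟨n, a⟩ ⟨n, b⟩ := by
  have h1 := mk_comm (a * b⁻¹) b
  rw [inv_mul_cancel_right] at h1
  exact mk_trans h1 ((comm_le_NN n h).2 b hb)

end UVBProof

namespace UVBProof
open UVB Equiv
open scoped commutatorElement

/-! ### A colouring action giving the invariant -/

section act
variable {X M : Type*} [AddCommGroup M] (l : X → X → M)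

lemma sw_apply {m i : ℕ} (h : i + 1 < m) (x : Fin m) :
    sw m i h x = if x.val = i then ⟨i + 1, h⟩ else if x.val = i + 1 then ⟨i, by omega⟩ else x := by
  simp only [sw, swap_apply_def, Fin.ext_iff]

lemma sw_sw {m i : ℕ} (h : i + 1 < m) (x : Fin m) : sw m i h (sw m i h x) = x := by
  simp [sw]

def Sact (m k : ℕ) (h : k + 1 < m) : Perm ((Fin m → X) × M) where
  toFun p := (fun x => p.1 (sw m k h x), p.2 - l (p.1 ⟨k + 1, h⟩) (p.1 ⟨k, by omega⟩))
  invFun p := (fun x => p.1 (sw m k h x), p.2 + l (p.1 ⟨k, by omega⟩) (p.1 ⟨k + 1, h⟩))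
  left_inv p := by
    ext
    · simp [sw_sw]
    · simp [sw_apply]
  right_inv p := by
    ext
    · simp [sw_sw]
    · simp [sw_apply]

def Ract (m k : ℕ) (h : k + 1 < m) : Perm ((Fin m → X) × M) where
  toFun p := (fun x => p.1 (sw m k h x), p.2)
  invFun p := (fun x => p.1 (sw m k h x), p.2)
  left_inv p := by
    ext
    · simp [sw_sw]
    · simp
  right_inv p := by
    ext
    · simp [sw_sw]
    · simp

lemma Sact_apply {m k : ℕ} (h : k + 1 < m) (f : Fin m → X) (t : M) : Sact l m k h (f, t) =
    (fun x => f (sw m k h x), t - l (f ⟨k + 1, h⟩) (f ⟨k, by omega⟩)) := rfl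

lemma Ract_apply {m k : ℕ} (h : k + 1 < m) (f : Fin m → X) (t : M) : Ract m k h (f, t) =
    (fun x => f (sw m k h x), t) := rfl

lemma sw_braid {m i : ℕ} (h : i + 1 + 1 < m) (x : Fin m) :
    sw m i (by omega) (sw m (i + 1) h (sw m i (by omega) x)) =
      sw m (i + 1) h (sw m i (by omega) (sw m (i + 1) h x)) := by
  rcases x with ⟨x, hx⟩
  simp only [sw_apply]
  have a1 : ¬ i + 1 + 1 = i := by omega
  have a2 : ¬ i = i + 1 + 1 := by omega
  by_cases h1 : x = i
  · subst h1; simp [a1, a2]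
  by_cases h2 : x = i + 1
  · subst h2; simp [a1, a2]
  by_cases h3 : x = i + 1 + 1
  · subst h3; simp [a1, a2]
  simp [h1, h2, h3]

lemma sw_far {m i j : ℕ} (hi : i + 1 < m) (hj : j + 1 < m) (h : i + 2 ≤ j ∨ j + 2 ≤ i)
    (x : Fin m) : sw m i hi (sw m j hj x) = sw m j hj (sw m i hi x) := by
  rcases x with ⟨x, hx⟩
  simp only [sw_apply]
  have a1 : ¬ i = j := by omega
  have a2 : ¬ i = j + 1 := by omega
  have a3 : ¬ j = i + 1 := by omega
  have b1 : ¬ j = i := by omega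
  have b2 : ¬ j + 1 = i := by omega
  have b3 : ¬ i + 1 = j := by omega
  by_cases h1 : x = i
  · subst h1; simp [a1, a2, b3]
  by_cases h2 : x = i + 1
  · subst h2; simp [a1, a2, b3]
  by_cases h3 : x = j
  · subst h3; simp [b1, b2, a3]
  by_cases h4 : x = j + 1
  · subst h4; simp [b1, b2, a3]
  simp [h1, h2, h3, h4]

def genAct (m : ℕ) : UVBGen m → Perm ((Fin m → X) × M)
  | Sum.inl i => Sact l m i (by omega)
  | Sum.inr i => Ract m i (by omega)

lemma genAct_rels (m : ℕ) : ∀ r ∈ uvbRels m, FreeGroup.lift (genAct l m) r = 1 := by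
  have hs : ∀ i : Fin (m - 1), FreeGroup.lift (genAct l m) (UVBGen.sg i) =
    Sact l m i (by omega) := fun i => by simp [UVBGen.sg, genAct]
  have hr : ∀ i : Fin (m - 1), FreeGroup.lift (genAct l m) (UVBGen.rg i) =
    Ract m i (by omega) := fun i => by simp [UVBGen.rg, genAct]
  rintro r (⟨⟨i, hi⟩, ⟨j, hj⟩, hij, hc⟩ | ⟨⟨i, hi⟩, ⟨j, hj⟩, hij, hc⟩ | ⟨⟨i, hi⟩, hc⟩)
  · simp only at hij
    subst hij
    have a1 : ¬ i + 1 + 1 = i := by omega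
    have a2 : ¬ i = i + 1 + 1 := by omega
    rcases hc with h | h | h | h | h <;> subst h <;>
      simp only [map_mul, map_inv, hs, hr, mul_inv_eq_one] <;>
      refine Equiv.ext fun ⟨f, t⟩ => ?_ <;>
      simp only [Perm.mul_apply, Sact_apply, Ract_apply, sw_braid] <;>
      refine Prod.ext rfl ?_ <;>
      simp [sw_apply, a1, a2] <;> try abel
  · have h1 : i ≠ j := by simp only at hij; omega
    have h2 : i ≠ j + 1 := by simp only at hij; omega
    have h3 : i + 1 ≠ j := by simp only at hij; omega
    rcases hc with h | h | h <;> subst h <;>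
      simp only [map_mul, map_inv, hs, hr, mul_inv_eq_one] <;>
      refine Equiv.ext fun ⟨f, t⟩ => ?_ <;>
      simp only [Perm.mul_apply, Sact_apply, Ract_apply] <;>
      refine Prod.ext (funext fun x => congrArg f (sw_far _ _ hij.symm x)) ?_ <;>
      simp [sw_apply, h1, h2, h3, h1.symm, h2.symm, h3.symm] <;> try abel
  · subst hc
    simp only [map_mul, hr]
    refine Equiv.ext fun ⟨f, t⟩ => ?_
    simp only [Perm.mul_apply, Ract_apply, sw_sw]
    rfl

def act (m : ℕ) : UVB m →* Perm ((Fin m → X) × M) := PresentedGroup.toGroup (genAct_rels l m)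

lemma act_S {m k : ℕ} (h : k + 1 < m) : act l m (S m k) = Sact l m k h := by
  unfold S sigma
  rw [dif_pos (by omega)]
  exact PresentedGroup.toGroup.of (genAct_rels l m)

lemma act_R {m k : ℕ} (h : k + 1 < m) : act l m (R m k) = Ract m k h := by
  unfold R rho
  rw [dif_pos (by omega)]
  exact PresentedGroup.toGroup.of (genAct_rels l m)

lemma act_Si {m k : ℕ} (h : k + 1 < m) (f : Fin m → X) (t : M) : act l m (S m k)⁻¹ (f, t) =
    (fun x => f (sw m k h x), t + l (f ⟨k, by omega⟩) (f ⟨k + 1, h⟩)) := by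
  rw [map_inv, act_S l h]; rfl

lemma act_sec {m : ℕ} (π : Perm (Fin m)) : ∀ (f : Fin m → X) (t : M),
    act l m (sec m π) (f, t) = (fun x => f (π⁻¹ x), t) := by
  refine perm_ind (C := fun π => ∀ (f : Fin m → X) (t : M),
    act l m (sec m π) (f, t) = (fun x => f (π⁻¹ x), t)) ?_ ?_ π
  · intro f t; simp
  · intro π i h ih f t
    rw [map_mul, map_mul, Perm.mul_apply, ih, sec_sw, act_R l h, Ract_apply]
    simp [sw]

lemma act_lam {m : ℕ} (hl : ∀ x, l x x = 0) (i j : Fin m) (f : Fin m → X) (t : M) :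
    act l m (lam m i j) (f, t) = (f, t + l (f i) (f j)) := by
  by_cases hij : i = j
  · subst hij; rw [lam_self, map_one, hl]; simp
  · obtain ⟨hm, π, rfl, rfl⟩ := lam_rep hij
    rw [lam_spec hm π, ← map_inv, map_mul, map_mul, Perm.mul_apply, Perm.mul_apply, act_sec, L,
      map_mul, Perm.mul_apply, act_Si l hm, act_R l hm, Ract_apply, act_sec]
    simp [sw_sw]

lemma act_add {m : ℕ} (g : UVB m) : ∀ (f : Fin m → X) (t u : M),
    act l m g (f, t + u) = ((act l m g (f, t)).1, (act l m g (f, t)).2 + u) := by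
  refine uvb_ind (C := fun g => ∀ (f : Fin m → X) (t u : M),
    act l m g (f, t + u) = ((act l m g (f, t)).1, (act l m g (f, t)).2 + u)) ?_ ?_ ?_ ?_ g
  · intro f t u; simp
  · intro g i h ih f t u
    rw [map_mul, Perm.mul_apply, Perm.mul_apply, act_S l h, Sact_apply, Sact_apply, ← ih]
    congr 2; abel
  · intro g i h ih f t u
    rw [map_mul, Perm.mul_apply, Perm.mul_apply, act_Si l h, act_Si l h, ← ih]
    congr 2; abel
  · intro g i h ih f t u
    rw [map_mul, Perm.mul_apply, Perm.mul_apply, act_R l h, Ract_apply, Ract_apply, ← ih]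

/-- the colours at the end are a permutation of the colours at the start -/
lemma act_surj {m : ℕ} (g : UVB m) : ∀ (f : Fin m → X) (t : M), Function.Surjective f →
    Function.Surjective (act l m g (f, t)).1 := by
  have hsw : ∀ (f : Fin m → X) i h, Function.Surjective f →
      Function.Surjective fun x => f (sw m i h x) :=
    fun f i h hf => hf.comp (sw m i h).surjective
  refine uvb_ind (C := fun g => ∀ (f : Fin m → X) (t : M), Function.Surjective f →
    Function.Surjective (act l m g (f, t)).1) ?_ ?_ ?_ ?_ g
  · intro f t h; simpa using h
  · intro g i h ih f t hf
    rw [map_mul, Perm.mul_apply, act_S l h, Sact_apply]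
    exact ih _ _ (hsw _ _ _ hf)
  · intro g i h ih f t hf
    rw [map_mul, Perm.mul_apply, act_Si l h]
    exact ih _ _ (hsw _ _ _ hf)
  · intro g i h ih f t hf
    rw [map_mul, Perm.mul_apply, act_R l h, Ract_apply]
    exact ih _ _ (hsw _ _ _ hf)

lemma snoc_sw {m i : ℕ} (h : i + 1 < m) (f : Fin m → X) (c : X) :
    (fun x => (Fin.snoc f c : Fin (m + 1) → X) (sw (m + 1) i (by omega) x)) =
      Fin.snoc (fun x => f (sw m i h x)) c := by
  funext x
  refine Fin.lastCases ?_ (fun x => ?_) x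
  · have : sw (m + 1) i (by omega) (Fin.last m) = Fin.last m := by
      rw [sw_apply]; simp only [Fin.val_last]
      rw [if_neg (by omega), if_neg (by omega)]
    rw [this]; simp
  · have : sw (m + 1) i (by omega) x.castSucc = (sw m i h x).castSucc := by
      rw [sw_apply, sw_apply]; simp only [Fin.val_castSucc]
      split_ifs <;> rfl
    rw [this]; simp

lemma snoc_lt {m i : ℕ} (h : i < m) (f : Fin m → X) (c : X) :
    (Fin.snoc f c : Fin (m + 1) → X) ⟨i, by omega⟩ = f ⟨i, h⟩ := by
  have := Fin.snoc_castSucc (α := fun _ => X) c f ⟨i, h⟩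
  exact this

lemma act_incl {m : ℕ} (c : X) (g : UVB m) : ∀ (f : Fin m → X) (t : M),
    act l (m + 1) (incl m g) (Fin.snoc f c, t) =
      (Fin.snoc (act l m g (f, t)).1 c, (act l m g (f, t)).2) := by
  refine uvb_ind (C := fun g => ∀ (f : Fin m → X) (t : M),
    act l (m + 1) (incl m g) (Fin.snoc f c, t) =
      (Fin.snoc (act l m g (f, t)).1 c, (act l m g (f, t)).2)) ?_ ?_ ?_ ?_ g
  · intro f t; simp
  · intro g i h ih f t
    rw [map_mul, map_mul, map_mul, Perm.mul_apply, Perm.mul_apply, incl_S h, act_S l h,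
      act_S l (by omega), Sact_apply, Sact_apply, snoc_sw h, snoc_lt h, snoc_lt (by omega), ih]
  · intro g i h ih f t
    rw [map_mul, map_mul, map_mul, Perm.mul_apply, Perm.mul_apply, map_inv (incl m), incl_S h,
      act_Si l h, act_Si l (by omega), snoc_sw h, snoc_lt h, snoc_lt (by omega), ih]
  · intro g i h ih f t
    rw [map_mul, map_mul, map_mul, Perm.mul_apply, Perm.mul_apply, incl_R h, act_R l h,
      act_R l (by omega), Ract_apply, Ract_apply, snoc_sw h, ih]

def Inv (a : M) (g : Σ m, UVB m) : Prop :=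
  ∃ (f : Fin g.1 → X) (t : M), Function.Surjective f ∧ act l g.1 g.2 (f, t) = (f, t + a)

lemma inv_conj {a : M} {m : ℕ} {g : UVB m} (h : Inv l a ⟨m, g⟩) (γ : UVB m) :
    Inv l a ⟨m, γ * g * γ⁻¹⟩ := by
  obtain ⟨f, t, hf, h⟩ := h
  refine ⟨(act l m γ (f, t)).1, (act l m γ (f, t)).2, act_surj l γ f t hf, ?_⟩
  simp only [map_mul, Perm.mul_apply, map_inv]
  rw [Prod.mk.eta, show (act l m γ)⁻¹ (act l m γ (f, t)) = (f, t) from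
    (act l m γ).symm_apply_apply (f, t)]
  exact (congrArg (act l m γ) h).trans (act_add l γ f t a)

/-- stabilization by an element moving the last strand -/
lemma inv_stab (hl : ∀ x, l x x = 0) {a : M} {m : ℕ} (g : UVB (m + 1)) (τ : UVB (m + 1 + 1))
    (d : X → X → M) (hd : ∀ x, d x x = 0)
    (hτ : ∀ f t, act l (m + 1 + 1) τ (f, t) = (fun x => f (sw (m + 1 + 1) m (by omega) x),
      t + d (f ⟨m, by omega⟩) (f ⟨m + 1, by omega⟩))) :
    Inv l a ⟨m + 1, g⟩ ↔ Inv l a ⟨m + 1 + 1, incl (m + 1) g * τ⟩ := by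
  have sws : ∀ (f : Fin (m + 1) → X), (fun x => (Fin.snoc f (f (Fin.last m)) : Fin (m + 2) → X)
      (sw (m + 1 + 1) m (by omega) x)) = Fin.snoc f (f (Fin.last m)) := by
    intro f
    funext x
    rw [sw_apply]
    have e1 : (Fin.snoc f (f (Fin.last m)) : Fin (m + 2) → X) ⟨m, by omega⟩ = f (Fin.last m) :=
      snoc_lt (by omega) _ _
    have e2 : (Fin.snoc f (f (Fin.last m)) : Fin (m + 2) → X) ⟨m + 1, by omega⟩ = f (Fin.last m) :=
      Fin.snoc_last (α := fun _ => X) _ _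
    split_ifs with h1 h2
    · rw [e2, show x = ⟨m, Nat.lt_succ_of_lt (Nat.lt_succ_self m)⟩ from Fin.ext h1]
      exact e1.symm
    · rw [e1, show x = ⟨m + 1, Nat.lt_add_one _⟩ from Fin.ext h2]
      exact e2.symm
    · rfl
  have key : ∀ (f : Fin (m + 1) → X) (t : M),
      act l (m + 1 + 1) (incl (m + 1) g * τ) (Fin.snoc f (f (Fin.last m)), t) =
        (Fin.snoc (act l (m + 1) g (f, t)).1 (f (Fin.last m)), (act l (m + 1) g (f, t)).2) := by
    intro f t
    have e1 : (Fin.snoc f (f (Fin.last m)) : Fin (m + 2) → X) ⟨m, by omega⟩ = f (Fin.last m) :=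
      snoc_lt (by omega) _ _
    have e2 : (Fin.snoc f (f (Fin.last m)) : Fin (m + 2) → X) ⟨m + 1, by omega⟩ = f (Fin.last m) :=
      Fin.snoc_last (α := fun _ => X) _ _
    rw [map_mul, Perm.mul_apply, hτ, sws, e1, e2, hd, add_zero, act_incl]
  constructor
  · rintro ⟨f, t, hf, h⟩
    refine ⟨Fin.snoc f (f (Fin.last m)), t, ?_, ?_⟩
    · intro x
      obtain ⟨y, rfl⟩ := hf x
      exact ⟨y.castSucc, by simp⟩
    · simp only at h ⊢
      rw [key, h]
  · rintro ⟨F, t, hF, h⟩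
    simp only at F hF h
    -- the last two colours agree
    obtain ⟨f, c, rfl⟩ : ∃ (f : Fin (m + 1) → X) (c : X), F = Fin.snoc f c :=
      ⟨Fin.init F, F (Fin.last _), (Fin.snoc_init_self F).symm⟩
    have e1 : (Fin.snoc f c : Fin (m + 2) → X) ⟨m, by omega⟩ = f (Fin.last m) :=
      snoc_lt (by omega) _ _
    have hc : f (Fin.last m) = c := by
      rw [map_mul, Perm.mul_apply, hτ] at h
      obtain ⟨f', c', hfc⟩ : ∃ (f' : Fin (m + 1) → X) (c' : X),
          (fun x => (Fin.snoc f c : Fin (m + 2) → X) (sw (m + 1 + 1) m (by omega) x)) =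
            Fin.snoc f' c' :=
        ⟨_, _, (Fin.snoc_init_self (α := fun _ => X)
          (fun x => (Fin.snoc f c : Fin (m + 2) → X) (sw (m + 1 + 1) m (by omega) x))).symm⟩
      have hc' : c' = f (Fin.last m) := by
        have := congrFun hfc (Fin.last _)
        simp only [Fin.snoc_last] at this
        rw [← this, ← e1]
        congr 1
        rw [sw_apply]; simp
      rw [hfc, act_incl] at h
      have := congrFun (congrArg Prod.fst h) (Fin.last _)
      simp only [Fin.snoc_last] at this
      rw [← this, hc']
    subst hc
    rw [key] at h
    refine ⟨f, t, ?_, ?_⟩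
    · intro x
      obtain ⟨y, rfl⟩ := hF x
      refine Fin.lastCases ?_ (fun y => ?_) y
      · exact ⟨Fin.last m, by simp⟩
      · exact ⟨y, by simp⟩
    · simp only
      have h2 := congrArg Prod.snd h
      refine Prod.ext ?_ h2
      funext x
      have := congrFun (congrArg Prod.fst h) x.castSucc
      simpa using this

lemma not_inv_small [Nontrivial X] {a : M} {m : ℕ} (hm : m ≤ 1) (g : UVB m) :
    ¬ Inv l a ⟨m, g⟩ := by
  rintro ⟨f, t, hf, -⟩
  obtain ⟨x, y, hxy⟩ := exists_pair_ne X
  obtain ⟨i, rfl⟩ := hf x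
  obtain ⟨j, rfl⟩ := hf y
  apply hxy
  congr 1
  have hi : (i : ℕ) < m := i.2
  have hj : (j : ℕ) < m := j.2
  apply Fin.ext
  omega

lemma inv_base [Nontrivial X] (hl : ∀ x, l x x = 0) {a : M} {g h : Σ m, UVB m}
    (H : MarkovBase g h) : Inv l a g ↔ Inv l a h := by
  cases H with
  | conj m α γ =>
    refine ⟨fun h => inv_conj l h γ, fun h => ?_⟩
    have := inv_conj l h γ⁻¹
    have e : γ⁻¹ * (γ * α * γ⁻¹) * γ⁻¹⁻¹ = α := by group
    rwa [e] at this
  | stabPos m α =>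
    cases m with
    | zero => exact iff_of_false (not_inv_small l (by omega) _) (not_inv_small l (by omega) _)
    | succ m =>
      refine inv_stab l hl α _ (fun x y => - l y x) (by simp [hl]) fun f t => ?_
      have := act_S (X := X) l (m := m + 1 + 1) (k := m) (by omega)
      unfold S at this
      rw [this, Sact_apply, sub_eq_add_neg]
  | stabNeg m α =>
    cases m with
    | zero => exact iff_of_false (not_inv_small l (by omega) _) (not_inv_small l (by omega) _)
    | succ m =>
      refine inv_stab l hl α _ (fun x y => l x y) (by simp [hl]) fun f t => ?_
      exact act_Si (X := X) l (m := m + 1 + 1) (k := m) (by omega) f t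
  | stabVirt m α =>
    cases m with
    | zero => exact iff_of_false (not_inv_small l (by omega) _) (not_inv_small l (by omega) _)
    | succ m =>
      refine inv_stab l hl α _ (fun x y => 0) (by simp) fun f t => ?_
      have := act_R (X := X) l (m := m + 1 + 1) (k := m) (by omega)
      unfold R at this
      rw [this, Ract_apply, add_zero]

lemma inv_markov [Nontrivial X] (hl : ∀ x, l x x = 0) {a : M} {g h : Σ m, UVB m}
    (H : Markov g h) : Inv l a g ↔ Inv l a h := by
  induction H with
  | rel x y h => exact inv_base l hl h
  | refl x => exact Iff.rfl
  | symm x y _ ih => exact ih.symm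
  | trans x y z _ _ ih1 ih2 => exact ih1.trans ih2

end act

/-- class in the abelianization of `K n` -/
noncomputable def cls (n : ℕ) (p : K n) : Additive (Abelianization (K n)) := Additive.ofMul (Abelianization.of p)

noncomputable def ll (n : ℕ) (i j : Fin n) : Additive (Abelianization (K n)) := cls n ⟨lam n i j, lam_mem n i j⟩

lemma ll_self (n : ℕ) (i : Fin n) : ll n i i = 0 := by
  have : (⟨lam n i i, lam_mem n i i⟩ : K n) = 1 := Subtype.ext (lam_self n i)
  rw [ll, this, cls, map_one]; rfl

lemma act_K {n : ℕ} {p : UVB n} (hp : p ∈ K n) : ∀ t,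
    act (ll n) n p (id, t) = (id, t + cls n ⟨p, hp⟩) := by
  unfold K at hp
  induction hp using Subgroup.closure_induction with
  | mem x hx => obtain ⟨i, j, rfl⟩ := hx; intro t; rw [act_lam _ (ll_self n)]; rfl
  | one => intro t; rw [map_one]; refine Prod.ext rfl ?_; exact (add_zero t).symm
  | mul a b ha hb iha ihb =>
    intro t
    rw [map_mul, Perm.mul_apply, ihb, iha]
    refine Prod.ext rfl ?_
    have : cls n ⟨a * b, mul_mem ha hb⟩ = cls n ⟨a, ha⟩ + cls n ⟨b, hb⟩ := by
      rw [cls, cls, cls, ← ofMul_mul, ← map_mul]; rfl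
    refine Eq.trans ?_ (congrArg (t + ·) this.symm)
    simp only [add_assoc]; rw [add_comm (cls n _)]
  | inv a ha iha =>
    intro t
    rw [map_inv, Perm.inv_eq_iff_eq, iha]
    refine Prod.ext rfl ?_
    have : cls n ⟨a⁻¹, inv_mem ha⟩ = - cls n ⟨a, ha⟩ := by
      rw [cls, cls, ← ofMul_inv, ← map_inv]; rfl
    refine Eq.trans ?_ (congrArg (t + · + cls n ⟨a, ha⟩) this.symm)
    simp

lemma cls_eq {n : ℕ} {p q : UVB n} (hp : p ∈ K n) (hq : q ∈ K n)
    (h : cls n ⟨p, hp⟩ = cls n ⟨q, hq⟩) : p * q⁻¹ ∈ ⁅K n, K n⁆ := by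
  have h1 : Abelianization.of (⟨p, hp⟩ * (⟨q, hq⟩ : K n)⁻¹) = 1 := by
    rw [map_mul, map_inv, mul_inv_eq_one]
    exact Additive.ofMul.injective h
  have h2 : (⟨p, hp⟩ * (⟨q, hq⟩ : K n)⁻¹) ∈ commutator (K n) :=
    (QuotientGroup.eq_one_iff _).1 h1
  have h3 := Subgroup.mem_map_of_mem (K n).subtype h2
  rw [commutator_def, Subgroup.map_commutator, ← MonoidHom.range_eq_map, Subgroup.range_subtype] at h3
  exact h3

lemma K_conj {n : ℕ} (π : Perm (Fin n)) {p : UVB n} (hp : p ∈ K n) :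
    sec n π * p * (sec n π)⁻¹ ∈ K n := by
  unfold K at hp
  induction hp using Subgroup.closure_induction with
  | mem x hx => obtain ⟨i, j, rfl⟩ := hx; rw [lam_conj, mul_inv_cancel_right]; exact lam_mem _ _ _
  | one => simp
  | mul a b ha hb iha ihb =>
    have e : sec n π * (a * b) * (sec n π)⁻¹ =
      (sec n π * a * (sec n π)⁻¹) * (sec n π * b * (sec n π)⁻¹) := by group
    rw [e]; exact mul_mem iha ihb
  | inv a ha iha =>
    have e : sec n π * a⁻¹ * (sec n π)⁻¹ = (sec n π * a * (sec n π)⁻¹)⁻¹ := by group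
    rw [e]; exact inv_mem iha

theorem comm_of_markov {n : ℕ} (hn : 2 ≤ n) {a b : UVB n} (ha : a ∈ K n) (hb : b ∈ K n)
    (h : Markov ⟨n, a⟩ ⟨n, b⟩) : ∃ π, sec n π * b * (sec n π)⁻¹ * a⁻¹ ∈ ⁅K n, K n⁆ := by
  have : Nontrivial (Fin n) := Fin.nontrivial_iff_two_le.2 hn
  have h1 : Inv (ll n) (cls n ⟨a, ha⟩) ⟨n, a⟩ := ⟨id, 0, Function.surjective_id, act_K ha 0⟩
  obtain ⟨f, t, hf, h2⟩ := (inv_markov (ll n) (ll_self n) h).1 h1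
  simp only at f hf h2
  let φ : Perm (Fin n) := Equiv.ofBijective f (Finite.injective_iff_bijective.1
    (Finite.injective_iff_surjective.2 hf))
  have hφ : ∀ x, φ x = f x := fun x => rfl
  refine ⟨φ, cls_eq (K_conj φ hb) ha ?_⟩
  have h3 := act_K (K_conj φ hb) t
  generalize cls n ⟨sec n φ * b * (sec n φ)⁻¹, K_conj φ hb⟩ = u at h3 ⊢
  rw [← map_inv, map_mul, map_mul, Perm.mul_apply, Perm.mul_apply, act_sec _ φ⁻¹] at h3
  have e : (fun x => id (φ⁻¹⁻¹ x)) = f := by funext x; simp [hφ]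
  rw [e, h2, act_sec] at h3
  exact (add_left_cancel (congrArg Prod.snd h3)).symm

end UVBProof

/-! ## Statement 13 -/

/-- classification of n-component fused links.  For `n ≥ 2`, the
identity on `UVP n` induces a well-defined bijection from the set of fused Markov
equivalence classes of elements of `UVP n` onto the set of classes of elements of
`UVP n` under the relation "the images in the abelianization `UVP n/[UVP n, UVP n]`
are conjugate by an element of `S_n ≤ UVB n`" (i.e. the orbits of the `S_n`-action on
the abelianization). -/
theorem statement13 (n : ℕ) (hn : 2 ≤ n)
    (ι : UVB n →* Equiv.Perm (Fin n)) (hι : IsIota n ι)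
    (s : Equiv.Perm (Fin n) →* UVB n) (hs : IsPermSection n s) :
    ∃ F : Quot (fun a b : ↥ι.ker => Markov ⟨n, (a : UVB n)⟩ ⟨n, (b : UVB n)⟩) →
          Quot (fun a b : ↥ι.ker => ∃ π : Equiv.Perm (Fin n),
            s π * (a : UVB n) * (s π)⁻¹ * ((b : UVB n))⁻¹ ∈ ⁅ι.ker, ι.ker⁆),
      (∀ a : ↥ι.ker, F (Quot.mk _ a) = Quot.mk _ a) ∧ Function.Bijective F := by
  have hs' : s = UVBProof.sec n := UVBProof.sec_unique fun i h => hs (i + 1) (by omega) (by omega)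
  subst hs'
  have hK : ι.ker = UVBProof.K n := UVBProof.ker_eq hι
  have hmem : ∀ a : ↥ι.ker, (a : UVB n) ∈ UVBProof.K n := fun a => hK ▸ a.2
  rw [show (⁅ι.ker, ι.ker⁆ : Subgroup (UVB n)) = ⁅UVBProof.K n, UVBProof.K n⁆ by rw [hK]]
  refine ⟨Quot.map id ?_, fun a => rfl, ?_, ?_⟩
  · intro a b h
    exact UVBProof.comm_of_markov hn (hmem b) (hmem a) (UVBProof.mk_symm h)
  · intro x y
    refine Quot.induction_on₂ x y fun a b h => Quot.sound ?_
    have h1 := Quot.eqvGen_exact h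
    simp only [id] at h1
    clear h
    induction h1 with
    | rel a b h =>
      obtain ⟨π, h⟩ := h
      exact UVBProof.mk_trans (UVBProof.mk_conj _ _) (UVBProof.markov_of_comm (hmem b) h)
    | refl a => exact UVBProof.mk_refl _
    | symm a b _ ih => exact UVBProof.mk_symm ih
    | trans a b c _ _ ih1 ih2 => exact UVBProof.mk_trans ih1 ih2
  · intro y
    refine Quot.induction_on y fun a => ⟨Quot.mk _ a, rfl⟩
end
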